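/- For every odd k ≥ 3 and n ≥ 8k, the online Ramsey number satisfies r̃(C_k, C_n) ≤ 3n + log₂ n + 50k. -/

import Mathlib

open SimpleGraph

/-- A board state: the set of red edges and the set of blue edges. -/
abbrev Board : Type := Set (Sym2 ℕ) × Set (Sym2 ℕ)

/-- The set of already colored edges of a board. -/
def Board.colored (B : Board) : Set (Sym2 ℕ) := B.1 ∪ B.2

/-- A Builder strategy selects an edge given the current board. -/
abbrev BuilderStrat : Type := Board → Sym2 ℕ

/-- A Painter strategy colors the selected edge (true = red, false = blue). -/
abbrev PainterStrat : Type := Board → Sym2 ℕ → Bool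

/-- The board after `t` rounds of play from `init`. -/
def playGame (b : BuilderStrat) (p : PainterStrat) (init : Board) : ℕ → Board
  | 0 => init
  | t + 1 =>
      let B := playGame b p init t
      let e := b B
      if p B e then (insert e B.1, B.2) else (B.1, insert e B.2)

/-- Builder's strategy is valid from `init`: along any play it always selects a
previously unselected non-loop edge. -/
def ValidFrom (b : BuilderStrat) (init : Board) : Prop :=
  ∀ p : PainterStrat, ∀ t : ℕ,
    ¬ (b (playGame b p init t)).IsDiag ∧
      b (playGame b p init t) ∉ (playGame b p init t).colored

/-- Builder can force the winning condition `W` within `t` rounds, starting from `init`. -/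
def BuilderWinsIn (init : Board) (W : Board → Prop) (t : ℕ) : Prop :=
  ∃ b : BuilderStrat, ValidFrom b init ∧
    ∀ p : PainterStrat, ∃ s, s ≤ t ∧ W (playGame b p init s)

/-- `G` contains a copy of `H`. -/
def HasCopy {α β : Type} (H : SimpleGraph α) (G : SimpleGraph β) : Prop :=
  ∃ f : α ↪ β, ∀ x y, H.Adj x y → G.Adj (f x) (f y)

/-- The red part of the board contains a copy of `H`. -/
def RedCopy {α : Type} (H : SimpleGraph α) (B : Board) : Prop :=
  HasCopy H (fromEdgeSet B.1)

/-- The blue part of the board contains a copy of `H`. -/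
def BlueCopy {α : Type} (H : SimpleGraph α) (B : Board) : Prop :=
  HasCopy H (fromEdgeSet B.2)

/-- The empty board. -/
def emptyBoard : Board := (∅, ∅)

/-- Winning condition: a red `C_k` or a blue `C_n`. -/
def WinCC (k n : ℕ) (B : Board) : Prop :=
  RedCopy (cycleGraph k) B ∨ BlueCopy (cycleGraph n) B

/-- Winning condition: a red `C_k` or a blue path on `n` vertices. -/
def WinCP (k n : ℕ) (B : Board) : Prop :=
  RedCopy (cycleGraph k) B ∨ BlueCopy (pathGraph n) B

/-- A board consisting of a single blue cycle on the vertices `0, …, m-1`. -/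
def blueCycleBoard (m : ℕ) : Board :=
  (∅, {e | ∃ i : ℕ, i < m ∧ e = s(i, (i + 1) % m)})

/-- A board consisting of a single blue path on the vertices `0, …, m-1`. -/
def bluePathBoard (m : ℕ) : Board :=
  (∅, {e | ∃ i : ℕ, i + 1 < m ∧ e = s(i, i + 1)})

section

variable {k n : ℕ}

/-- The pair `u v` is a red edge. -/
def Red (B : Board) (u v : ℕ) : Prop := s(u, v) ∈ B.1

/-- The pair `u v` is a blue edge. -/
def Blu (B : Board) (u v : ℕ) : Prop := s(u, v) ∈ B.2

/-- The board after colouring the edge `u v` red. -/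
def addRed (B : Board) (u v : ℕ) : Board := (insert s(u, v) B.1, B.2)

/-- The board after colouring the edge `u v` blue. -/
def addBlu (B : Board) (u v : ℕ) : Board := (B.1, insert s(u, v) B.2)

theorem Red.symm {B : Board} {u v : ℕ} (h : Red B u v) : Red B v u := by
  unfold Red at *; rwa [Sym2.eq_swap]

theorem Blu.symm {B : Board} {u v : ℕ} (h : Blu B u v) : Blu B v u := by
  unfold Blu at *; rwa [Sym2.eq_swap]

theorem Red.mono {B B' : Board} {u v : ℕ} (h : Red B u v) (hB : B ≤ B') : Red B' u v := hB.1 h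

theorem Blu.mono {B B' : Board} {u v : ℕ} (h : Blu B u v) (hB : B ≤ B') : Blu B' u v := hB.2 h

theorem le_addRed (B : Board) (u v : ℕ) : B ≤ addRed B u v :=
  ⟨Set.subset_insert _ _, le_rfl⟩

theorem le_addBlu (B : Board) (u v : ℕ) : B ≤ addBlu B u v :=
  ⟨le_rfl, Set.subset_insert _ _⟩

theorem red_addRed (B : Board) (u v : ℕ) : Red (addRed B u v) u v := Set.mem_insert _ _

theorem blu_addBlu (B : Board) (u v : ℕ) : Blu (addBlu B u v) u v := Set.mem_insert _ _

/-- Within `t` further rounds from `B`, Builder can force a win or a board satisfying `Q`. -/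
def Force (k n : ℕ) : ℕ → Board → (Board → Prop) → Prop
  | 0, B, Q => WinCC k n B ∨ Q B
  | t + 1, B, Q => Force k n t B Q ∨
      ∃ u v, u ≠ v ∧ Force k n t (addRed B u v) Q ∧ Force k n t (addBlu B u v) Q


theorem Force.succ {t : ℕ} {B : Board} {Q : Board → Prop} (h : Force k n t B Q) :
    Force k n (t + 1) B Q := Or.inl h

theorem Force.mono {t t' : ℕ} {B : Board} {Q : Board → Prop} (h : Force k n t B Q)
    (ht : t ≤ t') : Force k n t' B Q := by
  induction ht with
  | refl => exact h
  | step _ ih => exact ih.succ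

theorem Force.win {t : ℕ} {B : Board} {Q : Board → Prop} (h : WinCC k n B) :
    Force k n t B Q := Force.mono (t := 0) (Or.inl h) (Nat.zero_le _)

theorem Force.done {t : ℕ} {B : Board} {Q : Board → Prop} (h : Q B) :
    Force k n t B Q := Force.mono (t := 0) (Or.inr h) (Nat.zero_le _)

theorem Force.bind {t t' : ℕ} {B : Board} {Q Q' : Board → Prop} (h : Force k n t B Q)
    (hQ : ∀ B', B ≤ B' → Q B' → Force k n t' B' Q') : Force k n (t + t') B Q' := by
  induction t generalizing B with
  | zero =>
    rw [Nat.zero_add]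
    rcases h with h | h
    · exact Force.win h
    · exact hQ B le_rfl h
  | succ t ih =>
    rw [Nat.add_right_comm]
    rcases h with h | ⟨u, v, huv, h1, h2⟩
    · exact (ih h hQ).succ
    · exact Or.inr ⟨u, v, huv, ih h1 fun B' hB => hQ B' ((le_addRed B u v).trans hB),
        ih h2 fun B' hB => hQ B' ((le_addBlu B u v).trans hB)⟩

theorem Force.bind' {t t' T : ℕ} {B : Board} {Q Q' : Board → Prop} (h : Force k n t B Q)
    (hT : t + t' ≤ T)
    (hQ : ∀ B', B ≤ B' → Q B' → Force k n t' B' Q') : Force k n T B Q' :=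
  (h.bind hQ).mono hT

theorem Force.imp {t : ℕ} {B : Board} {Q Q' : Board → Prop} (h : Force k n t B Q)
    (hQ : ∀ B', B ≤ B' → Q B' → Q' B') : Force k n t B Q' :=
  h.bind (t' := 0) fun B' hB hq => Or.inr (hQ B' hB hq)

/-- Builder asks for the edge `u v`. -/
theorem Force.test {t : ℕ} {B : Board} {Q : Board → Prop} (u v : ℕ) (huv : u ≠ v)
    (h1 : ∀ B', B ≤ B' → Red B' u v → Force k n t B' Q)
    (h2 : ∀ B', B ≤ B' → Blu B' u v → Force k n t B' Q) : Force k n (t + 1) B Q :=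
  Or.inr ⟨u, v, huv, h1 _ (le_addRed B u v) (red_addRed B u v),
    h2 _ (le_addBlu B u v) (blu_addBlu B u v)⟩

theorem colored_addRed_of_red {B : Board} {u v : ℕ} (h : s(u, v) ∈ B.1) : addRed B u v = B := by
  simp [addRed, Set.insert_eq_of_mem h]

theorem colored_addBlu_of_blu {B : Board} {u v : ℕ} (h : s(u, v) ∈ B.2) : addBlu B u v = B := by
  simp [addBlu, Set.insert_eq_of_mem h]

/-- A good move for Builder at `B`: an uncoloured edge both of whose colourings
reduce the number of rounds still needed. -/
def GoodMove (k n : ℕ) (B : Board) (e : Sym2 ℕ) : Prop :=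
  ¬ e.IsDiag ∧ e ∉ B.colored ∧
    ∀ t, Force k n (t + 1) B (fun _ => False) → ¬ WinCC k n B →
      Force k n t (insert e B.1, B.2) (fun _ => False) ∧
      Force k n t (B.1, insert e B.2) (fun _ => False)

theorem exists_goodMove {B : Board} {t : ℕ} (h : Force k n t B (fun _ => False))
    (hw : ¬ WinCC k n B) : ∃ e, GoodMove k n B e := by
  classical
  have hex : ∃ t, Force k n t B (fun _ => False) := ⟨t, h⟩
  have hm := Nat.find_spec hex
  have hmin : ∀ t, Force k n t B (fun _ => False) → Nat.find hex ≤ t :=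
    fun t ht => Nat.find_min' hex ht
  generalize Nat.find hex = m at hm hmin
  cases m with
  | zero => rcases hm with hm | hm
            · exact absurd hm hw
            · exact hm.elim
  | succ m =>
    rcases hm with hm | ⟨u, v, huv, h1, h2⟩
    · have := hmin m hm; omega
    · refine ⟨s(u, v), by simpa using huv, ?_, fun t ht _ => ?_⟩
      · rintro (hc | hc)
        · rw [colored_addRed_of_red hc] at h1
          have := hmin m h1; omega
        · rw [colored_addBlu_of_blu hc] at h2
          have := hmin m h2; omega
      · have := hmin _ ht
        exact ⟨h1.mono (by omega), h2.mono (by omega)⟩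

theorem exists_uncolored {B : Board} (h : B.colored.Finite) :
    ∃ e : Sym2 ℕ, ¬ e.IsDiag ∧ e ∉ B.colored := by
  by_contra! hc
  have : Set.Infinite (Set.range fun i : ℕ => s(0, i + 1)) := by
    apply Set.infinite_range_of_injective
    intro i j hij
    simpa using hij
  refine this (h.subset ?_)
  rintro _ ⟨i, rfl⟩
  exact hc _ (by simp)

theorem builderWinsIn_of_force {t : ℕ} (h : Force k n t emptyBoard (fun _ => False)) :
    BuilderWinsIn emptyBoard (WinCC k n) t := by
  classical
  let b : BuilderStrat := fun B =>
    if h : ∃ e, GoodMove k n B e then h.choose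
    else if h : ∃ e : Sym2 ℕ, ¬ e.IsDiag ∧ e ∉ B.colored then h.choose else s(0, 0)
  have hb1 : ∀ B, (∃ e, GoodMove k n B e) → GoodMove k n B (b B) := by
    intro B hB
    simp only [b, hB, dif_pos]
    exact hB.choose_spec
  have hb2 : ∀ B : Board, B.colored.Finite → ¬ (b B).IsDiag ∧ b B ∉ B.colored := by
    intro B hB
    by_cases hg : ∃ e, GoodMove k n B e
    · exact ⟨(hb1 B hg).1, (hb1 B hg).2.1⟩
    · have := exists_uncolored hB
      simp only [b, hg, this, dif_pos, dif_neg, not_false_eq_true]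
      exact this.choose_spec
  have hfin : ∀ p s, (playGame b p emptyBoard s).colored.Finite := by
    intro p s
    induction s with
    | zero => simp [playGame, emptyBoard, Board.colored]
    | succ s ih =>
      simp only [playGame]
      split_ifs
      · exact (ih.insert (b (playGame b p emptyBoard s))).subset (by
          simp [Board.colored, Set.insert_union])
      · exact (ih.insert (b (playGame b p emptyBoard s))).subset (by
          simp [Board.colored, Set.union_insert])
  refine ⟨b, fun p s => hb2 _ (hfin p s), fun p => ?_⟩
  by_contra! hno
  have key : ∀ j, j ≤ t → Force k n (t - j) (playGame b p emptyBoard j) (fun _ => False) := by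
    intro j hj
    induction j with
    | zero => simpa [playGame] using h
    | succ j ih =>
      have h1 := ih (by omega)
      have hw := hno j (by omega)
      have hg := hb1 _ (exists_goodMove h1 hw)
      rw [show t - j = (t - (j + 1)) + 1 by omega] at h1
      have h2 := hg.2.2 _ h1 hw
      simp only [playGame]
      split_ifs
      · exact h2.1
      · exact h2.2
  have := key t le_rfl
  rw [Nat.sub_self] at this
  rcases this with h | h
  · exact hno t le_rfl h
  · exact h

theorem hasCopy_cycleGraph {m : ℕ} (hm : 3 ≤ m) {S : Set (Sym2 ℕ)} (f : ℕ → ℕ)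
    (inj : ∀ i < m, ∀ j < m, f i = f j → i = j)
    (adj : ∀ i, i + 1 < m → s(f i, f (i + 1)) ∈ S) (close : s(f (m - 1), f 0) ∈ S) :
    HasCopy (cycleGraph m) (fromEdgeSet S) := by
  refine ⟨⟨fun i => f i, fun i j h => Fin.ext (inj _ i.2 _ j.2 h)⟩, ?_⟩
  have key : ∀ x y : Fin m, (x - y).val = 1 → s(f x, f y) ∈ S := by
    intro x y h
    have hx := x.2
    have hy := y.2
    rw [Fin.sub_def] at h
    simp only at h
    have : m - y.val + x.val = 1 ∨ m - y.val + x.val = m + 1 := by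
      by_cases hlt : m - y.val + x.val < m
      · rw [Nat.mod_eq_of_lt hlt] at h; exact Or.inl h
      · rw [Nat.mod_eq_sub_mod (by omega), Nat.mod_eq_of_lt (by omega)] at h
        omega
    rcases this with h | h
    · rw [show x.val = 0 by omega, show y.val = m - 1 by omega, Sym2.eq_swap]; exact close
    · rw [show x.val = y.val + 1 by omega, Sym2.eq_swap]; exact adj _ (by omega)
  intro x y hxy
  have hne : x ≠ y := hxy.ne
  rw [fromEdgeSet_adj]
  refine ⟨?_, fun h => hne (Fin.ext (inj _ x.2 _ y.2 h))⟩
  rcases cycleGraph_adj'.1 hxy with h | h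
  · exact key x y h
  · change s(f x, f y) ∈ S
    rw [Sym2.eq_swap]
    exact key y x h

theorem winCC_of_red (hk : 3 ≤ k) {B : Board} (f : ℕ → ℕ)
    (inj : ∀ i < k, ∀ j < k, f i = f j → i = j)
    (adj : ∀ i, i + 1 < k → Red B (f i) (f (i + 1))) (close : Red B (f (k - 1)) (f 0)) :
    WinCC k n B := Or.inl (hasCopy_cycleGraph hk f inj adj close)

theorem winCC_of_blu (hn : 3 ≤ n) {B : Board} (f : ℕ → ℕ)
    (inj : ∀ i < n, ∀ j < n, f i = f j → i = j)
    (adj : ∀ i, i + 1 < n → Blu B (f i) (f (i + 1))) (close : Blu B (f (n - 1)) (f 0)) :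
    WinCC k n B := Or.inr (hasCopy_cycleGraph hn f inj adj close)

/-- Ask for an edge whose red colouring wins at once. -/
theorem Force.getBlu {t : ℕ} {B : Board} {Q : Board → Prop} (u v : ℕ) (huv : u ≠ v)
    (h1 : ∀ B', B ≤ B' → Red B' u v → WinCC k n B')
    (h2 : ∀ B', B ≤ B' → Blu B' u v → Force k n t B' Q) : Force k n (t + 1) B Q :=
  Force.test u v huv (fun B' hB hr => Force.win (h1 B' hB hr)) h2

/-- Ask for an edge whose blue colouring wins at once. -/
theorem Force.getRed {t : ℕ} {B : Board} {Q : Board → Prop} (u v : ℕ) (huv : u ≠ v)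
    (h1 : ∀ B', B ≤ B' → Blu B' u v → WinCC k n B')
    (h2 : ∀ B', B ≤ B' → Red B' u v → Force k n t B' Q) : Force k n (t + 1) B Q :=
  Force.test u v huv h2 (fun B' hB hr => Force.win (h1 B' hB hr))

/-- Builder obtains the missing edge of a red path on `k` vertices in blue. -/
theorem Force.closeRed (hk : 3 ≤ k) {t : ℕ} {B : Board} {Q : Board → Prop} (f : ℕ → ℕ)
    (inj : ∀ i < k, ∀ j < k, f i = f j → i = j)
    (adj : ∀ i, i + 1 < k → Red B (f i) (f (i + 1)))
    (h : ∀ B', B ≤ B' → Blu B' (f (k - 1)) (f 0) → Force k n t B' Q) :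
    Force k n (t + 1) B Q := by
  refine Force.getBlu _ _ (fun h0 => ?_) (fun B' hB hr => ?_) h
  · have := inj _ (by omega) _ (by omega) h0; omega
  · exact winCC_of_red hk f inj (fun i hi => (adj i hi).mono hB) hr

/-- Builder asks for `m` edges, stopping as soon as one of them is blue. -/
theorem Force.getReds {r : ℕ} {B : Board} {Q : Board → Prop} (m : ℕ) (u v : ℕ → ℕ)
    (huv : ∀ i < m, u i ≠ v i)
    (h : ∀ i < m, ∀ B', B ≤ B' → Blu B' (u i) (v i) → Force k n r B' Q)
    (h' : ∀ B', B ≤ B' → (∀ i < m, Red B' (u i) (v i)) → Force k n r B' Q) :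
    Force k n (m + r) B Q := by
  induction m generalizing r with
  | zero => simpa using h' B le_rfl (by simp)
  | succ m ih =>
    rw [Nat.add_right_comm, Nat.add_assoc]
    refine ih (r := r + 1) (fun i hi => huv i (by omega))
      (fun i hi B' hB hb => (h i (by omega) B' hB hb).succ) fun B' hB hred => ?_
    refine Force.test (u m) (v m) (huv m (by omega)) (fun B'' hB' hr => ?_) fun B'' hB' hb => ?_
    · refine h' B'' (hB.trans hB') fun i hi => ?_
      rcases Nat.lt_succ_iff_lt_or_eq.1 hi with hi | rfl
      · exact (hred i hi).mono hB'
      · exact hr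
    · exact h m (by omega) B'' (hB.trans hB') hb

/-- `v 0, …, v (m - 1)` is a path in the relation `r`. -/
structure IsPth (r : ℕ → ℕ → Prop) (m : ℕ) (v : ℕ → ℕ) : Prop where
  inj : ∀ i < m, ∀ j < m, v i = v j → i = j
  adj : ∀ i, i + 1 < m → r (v i) (v (i + 1))

theorem IsPth.blu_mono {B B' : Board} {m : ℕ} {v : ℕ → ℕ} (h : IsPth (Blu B) m v)
    (hB : B ≤ B') : IsPth (Blu B') m v := ⟨h.inj, fun i hi => (h.adj i hi).mono hB⟩

theorem IsPth.red_mono {B B' : Board} {m : ℕ} {v : ℕ → ℕ} (h : IsPth (Red B) m v)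
    (hB : B ≤ B') : IsPth (Red B') m v := ⟨h.inj, fun i hi => (h.adj i hi).mono hB⟩

theorem IsPth.blu {B : Board} {m : ℕ} {v : ℕ → ℕ} (h : IsPth (Blu B) m v) (a b : ℕ)
    (ha : a < m) (hb : b < m) (hab : b = a + 1 ∨ a = b + 1) : Blu B (v a) (v b) := by
  rcases hab with rfl | rfl
  · exact h.adj _ hb
  · exact (h.adj _ ha).symm

theorem IsPth.red {B : Board} {m : ℕ} {v : ℕ → ℕ} (h : IsPth (Red B) m v) (a b : ℕ)
    (ha : a < m) (hb : b < m) (hab : b = a + 1 ∨ a = b + 1) : Red B (v a) (v b) := by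
  rcases hab with rfl | rfl
  · exact h.adj _ hb
  · exact (h.adj _ ha).symm

theorem IsPth.ne {r : ℕ → ℕ → Prop} {m : ℕ} {v : ℕ → ℕ} (h : IsPth r m v) (a b : ℕ)
    (ha : a < m) (hb : b < m) (hab : a ≠ b) : v a ≠ v b := fun h' => hab (h.inj a ha b hb h')

theorem IsPth.shift {r : ℕ → ℕ → Prop} {m m' : ℕ} {v : ℕ → ℕ} (h : IsPth r m v) (o : ℕ)
    (ho : o + m' ≤ m) : IsPth r m' fun i => v (o + i) where
  inj i hi j hj hij := by
    have := h.inj _ (by omega) _ (by omega) hij; omega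
  adj i hi := h.adj (o + i) (by omega)

theorem IsPth.take {r : ℕ → ℕ → Prop} {m m' : ℕ} {v : ℕ → ℕ} (h : IsPth r m v)
    (ho : m' ≤ m) : IsPth r m' v where
  inj i hi j hj hij := h.inj _ (by omega) _ (by omega) hij
  adj i hi := h.adj i (by omega)

theorem winCC_of_reindex (hn : 3 ≤ n) {B : Board} {m : ℕ} {v : ℕ → ℕ}
    (hv : IsPth (Blu B) m v) (g : ℕ → ℕ) (gm : ∀ i < n, g i < m)
    (ginj : ∀ i < n, ∀ j < n, g i = g j → i = j)
    (adj : ∀ i, i + 1 < n → Blu B (v (g i)) (v (g (i + 1))))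
    (close : Blu B (v (g (n - 1))) (v (g 0))) : WinCC k n B :=
  winCC_of_blu hn (fun i => v (g i))
    (fun i hi j hj h => ginj i hi j hj (hv.inj _ (gm i hi) _ (gm j hj) h)) adj close

theorem winCC_of_skip (hn : 3 ≤ n) {B : Board} {v : ℕ → ℕ} (hv : IsPth (Blu B) (n + 1) v)
    (hc : Blu B (v n) (v 0)) (i : ℕ) (hi : i + 2 ≤ n) (h : Blu B (v i) (v (i + 2))) :
    WinCC k n B := by
  refine winCC_of_reindex hn hv (fun j => if j ≤ i then j else j + 1) ?_ ?_ ?_ ?_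
  · intro j hj; split_ifs <;> omega
  · intro j hj j' hj' h; split_ifs at h <;> omega
  · intro j hj
    rcases lt_trichotomy j i with h1 | rfl | h1
    · rw [if_pos (by omega), if_pos (by omega)]; exact hv.adj _ (by omega)
    · rw [if_pos (by omega), if_neg (by omega)]; exact h
    · rw [if_neg (by omega), if_neg (by omega)]; exact hv.adj _ (by omega)
  · rw [if_neg (by omega), if_pos (by omega), show n - 1 + 1 = n by omega]; exact hc

/-- From a blue cycle on `n + 1` vertices Builder wins in `2 k + 3` rounds. -/
theorem Force.shorten (hk : 3 ≤ k) (hko : Odd k) (hn : 8 * k ≤ n) {B : Board} {v : ℕ → ℕ}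
    (hv : IsPth (Blu B) (n + 1) v) (hc : Blu B (v n) (v 0)) {Q : Board → Prop} :
    Force k n (2 * k + 3) B Q := by
  obtain ⟨q, rfl⟩ := hko
  set k := 2 * q + 1 with hkq
  have h3 : 3 ≤ n := by omega
  refine Force.mono (t := k + (k + 3)) (Force.getReds k (fun i => v (2 * i)) (fun i => v (2 * i + 2))
    (fun i hi => hv.ne _ _ (by omega) (by omega) (by omega))
    (fun i hi B' hB hb => Force.win (winCC_of_skip h3 (hv.blu_mono hB) (hc.mono hB) (2 * i)
      (by omega) hb)) ?_) (by omega)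
  intro B1 hB1 hev
  replace hv := hv.blu_mono hB1
  replace hc := hc.mono hB1
  refine Force.mono (t := (k - 1) + 4) (Force.getReds (k - 1) (fun i => v (k + 2 * i)) (fun i => v (k + 2 * i + 2))
    (fun i hi => hv.ne _ _ (by omega) (by omega) (by omega))
    (fun i hi B' hB hb => Force.win (winCC_of_skip h3 (hv.blu_mono hB) (hc.mono hB) (k + 2 * i)
      (by omega) hb)) ?_) (by omega)
  intro B2 hB2 hodd
  replace hv := hv.blu_mono hB2
  replace hc := hc.mono hB2
  replace hev := fun i hi => (hev i hi).mono hB2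
  refine Force.closeRed hk (fun i => v (2 * i + 2)) ?_ ?_ ?_
  · intro i hi j hj h
    have := hv.inj _ (by omega) _ (by omega) h; omega
  · intro i hi; exact hev (i + 1) (by omega)
  intro B3 hB3 hb1
  replace hv := hv.blu_mono hB3
  replace hc := hc.mono hB3
  replace hev := fun i hi => (hev i hi).mono hB3
  replace hodd := fun i hi => (hodd i hi).mono hB3
  refine Force.getRed (v 0) (v (2 * k - 1)) (hv.ne _ _ (by omega) (by omega) (by omega)) ?_ ?_
  · intro B' hB' hb
    replace hv := hv.blu_mono hB'
    replace hc := hc.mono hB'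
    replace hb1 := hb1.mono hB'
    refine winCC_of_reindex h3 hv (fun i => if i = 0 then 0 else
      if i ≤ 2 * k - 2 then 2 * k - i else i + 1) ?_ ?_ ?_ ?_
    · intro j hj; split_ifs <;> omega
    · intro j hj j' hj' h; split_ifs at h <;> omega
    · intro j hj
      rcases Nat.eq_zero_or_pos j with rfl | h0
      · rw [if_pos rfl, if_neg (by omega), if_pos (by omega)]; exact hb
      rw [if_neg (show ¬ j = 0 by omega), if_neg (show ¬ j + 1 = 0 by omega)]
      rcases lt_trichotomy j (2 * k - 2) with h1 | h1 | h1
      · rw [if_pos (by omega), if_pos (by omega)]; exact hv.blu _ _ (by omega) (by omega) (by omega)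
      · rw [if_pos (by omega), if_neg (by omega)]
        rw [show j + 1 + 1 = 2 * (k - 1) + 2 by omega, show 2 * k - j = 2 * 0 + 2 by omega]
        exact hb1.symm
      · rw [if_neg (by omega), if_neg (by omega)]; exact hv.adj _ (by omega)
    · rw [if_neg (by omega), if_neg (by omega), if_pos rfl, show n - 1 + 1 = n by omega]; exact hc
  intro B4 hB4 hr1
  replace hv := hv.blu_mono hB4
  replace hc := hc.mono hB4
  replace hev := fun i hi => (hev i hi).mono hB4
  replace hodd := fun i hi => (hodd i hi).mono hB4
  refine Force.closeRed hk (fun i => v (k + 2 * i)) ?_ ?_ ?_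
  · intro i hi j hj h
    have := hv.inj _ (by omega) _ (by omega) h; omega
  · intro i hi; exact hodd i (by omega)
  intro B5 hB5 hb2
  replace hv := hv.blu_mono hB5
  replace hc := hc.mono hB5
  replace hev := fun i hi => (hev i hi).mono hB5
  replace hodd := fun i hi => (hodd i hi).mono hB5
  replace hr1 := hr1.mono hB5
  refine Force.getRed (v (k - 1)) (v (3 * k - 4))
    (hv.ne _ _ (by omega) (by omega) (by omega)) ?_ ?_
  · intro B' hB' hb
    replace hv := hv.blu_mono hB'
    replace hc := hc.mono hB'
    replace hb2 := hb2.mono hB'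
    refine winCC_of_reindex h3 hv (fun i => if i ≤ k - 1 then i else
      if i ≤ 3 * k - 4 then 4 * k - 4 - i else i + 1) ?_ ?_ ?_ ?_
    · intro j hj; split_ifs <;> omega
    · intro j hj j' hj' h; split_ifs at h <;> omega
    · intro j hj
      rcases lt_trichotomy j (k - 1) with h1 | h1 | h1
      · rw [if_pos (by omega), if_pos (by omega)]; exact hv.adj _ (by omega)
      · rw [if_pos (by omega), if_neg (by omega), if_pos (by omega), h1,
          show 4 * k - 4 - (k - 1 + 1) = 3 * k - 4 by omega]
        exact hb
      rw [if_neg (show ¬ j ≤ k - 1 by omega), if_neg (show ¬ j + 1 ≤ k - 1 by omega)]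
      rcases lt_trichotomy j (3 * k - 4) with h1 | h1 | h1
      · rw [if_pos (by omega), if_pos (by omega)]; exact hv.blu _ _ (by omega) (by omega) (by omega)
      · rw [if_pos (by omega), if_neg (by omega)]
        rw [show j + 1 + 1 = k + 2 * (k - 1) by omega, show 4 * k - 4 - j = k + 2 * 0 by omega]
        exact hb2.symm
      · rw [if_neg (by omega), if_neg (by omega)]; exact hv.adj _ (by omega)
    · rw [if_neg (by omega), if_neg (by omega), if_pos (by omega), show n - 1 + 1 = n by omega]
      exact hc
  intro B6 hB6 hr2
  replace hev := fun i hi => (hev i hi).mono hB6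
  replace hodd := fun i hi => (hodd i hi).mono hB6
  replace hr1 := hr1.mono hB6
  refine Force.win (winCC_of_red hk (fun i => if i ≤ q then v (2 * i) else
    v (3 * k - 4 - 2 * (i - q - 1))) ?_ ?_ ?_)
  · intro i hi j hj h
    split_ifs at h <;> have := hv.inj _ (by omega) _ (by omega) h <;> omega
  · intro i hi
    rcases lt_trichotomy i q with h1 | rfl | h1
    · rw [if_pos (by omega), if_pos (by omega)]; exact hev i (by omega)
    · rw [if_pos (by omega), if_neg (by omega), show 3 * k - 4 - 2 * (i + 1 - i - 1) = 3 * k - 4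
        by omega, show 2 * i = k - 1 by omega]
      exact hr2
    · rw [if_neg (by omega), if_neg (by omega)]
      have := hodd ((3 * k - 4 - 2 * (i + 1 - q - 1) - k) / 2) (by omega)
      rw [show k + 2 * ((3 * k - 4 - 2 * (i + 1 - q - 1) - k) / 2) =
        3 * k - 4 - 2 * (i + 1 - q - 1) by omega,
        show 3 * k - 4 - 2 * (i + 1 - q - 1) + 2 = 3 * k - 4 - 2 * (i - q - 1) by omega] at this
      exact this.symm
  · rw [if_neg (by omega), if_pos (by omega),
      show 3 * k - 4 - 2 * (k - 1 - q - 1) = 2 * k - 1 by omega]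
    exact hr1.symm

/-- The blue cycle closed by a chord of a blue path. -/
theorem winCC_of_chord (h3 : 3 ≤ n) {B : Board} {m : ℕ} {v : ℕ → ℕ} (hv : IsPth (Blu B) m v)
    (i : ℕ) (hi : i + n - 1 < m) (h : Blu B (v (i + n - 1)) (v i)) : WinCC k n B := by
  have := hv.shift (m' := n) i (by omega)
  refine winCC_of_blu h3 _ this.inj this.adj ?_
  rwa [show i + (n - 1) = i + n - 1 by omega]

/-- On a long blue path Builder forces a long red path. -/
theorem Force.zigzag (hk : 3 ≤ k) (hko : Odd k) (hn : 8 * k ≤ n) {B : Board} {j : ℕ}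
    (hj : j + 1 < n) {v : ℕ → ℕ} (hv : IsPth (Blu B) (n + j) v) :
    Force k n (2 * j + (2 * k + 3)) B (fun B' =>
      IsPth (Red B') (2 * j + 1) (fun i => if i % 2 = 0 then v (n - 1 + i / 2) else v (i / 2))) := by
  have h3 : 3 ≤ n := by omega
  have hinj : ∀ i < 2 * j + 1, ∀ i' < 2 * j + 1,
      (if i % 2 = 0 then v (n - 1 + i / 2) else v (i / 2)) =
      (if i' % 2 = 0 then v (n - 1 + i' / 2) else v (i' / 2)) → i = i' := by
    intro i hi i' hi' h
    split_ifs at h <;> have := hv.inj _ (by omega) _ (by omega) h <;> omega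
  refine Force.getReds (2 * j) (fun i => if i % 2 = 0 then v (n - 1 + i / 2) else v (i / 2))
    (fun i => if (i + 1) % 2 = 0 then v (n - 1 + (i + 1) / 2) else v ((i + 1) / 2))
    (fun i hi h => ?_) (fun i hi B' hB h => ?_) fun B' hB h => ?_
  · have := hinj i (by omega) (i + 1) (by omega) h; omega
  · replace hv := hv.blu_mono hB
    rcases Nat.even_or_odd' i with ⟨a, rfl | rfl⟩
    · rw [if_pos (by omega), if_neg (by omega), show (2 * a + 1) / 2 = a by omega,
        show n - 1 + 2 * a / 2 = a + n - 1 by omega] at h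
      exact Force.win (winCC_of_chord h3 hv a (by omega) h)
    · rw [if_neg (by omega), if_pos (by omega), show (2 * a + 1) / 2 = a by omega,
        show n - 1 + (2 * a + 1 + 1) / 2 = a + n by omega] at h
      exact Force.shorten hk hko hn (hv.shift a (by omega)) h.symm
  · exact Force.done ⟨hinj, fun i hi => h i (by omega)⟩

/-- The sequence `z, v 0, v 1, …`. -/
def pcons (z : ℕ) (v : ℕ → ℕ) : ℕ → ℕ
  | 0 => z
  | j + 1 => v j

theorem IsPth.pcons {r : ℕ → ℕ → Prop} {m : ℕ} {v : ℕ → ℕ} (h : IsPth r m v) (z : ℕ)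
    (hz : ∀ j < m, z ≠ v j) (hr : 0 < m → r z (v 0)) : IsPth r (m + 1) (pcons z v) where
  inj i hi j hj hij := by
    cases i with
    | zero => cases j with
      | zero => rfl
      | succ j => exact absurd hij (hz j (by omega))
    | succ i => cases j with
      | zero => exact absurd hij.symm (hz i (by omega))
      | succ j => rw [h.inj i (by omega) j (by omega) hij]
  adj i hi := by
    cases i with
    | zero => exact hr (by omega)
    | succ i => exact h.adj i (by omega)

theorem pcons_last {m : ℕ} (hm : 0 < m) (z : ℕ) (v : ℕ → ℕ) : pcons z v m = v (m - 1) := by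
  obtain ⟨m, rfl⟩ : ∃ m', m = m' + 1 := ⟨m - 1, by omega⟩
  rfl

theorem Force.closePth (hk : 3 ≤ k) {t : ℕ} {B : Board} {Q : Board → Prop} {f : ℕ → ℕ}
    (hf : IsPth (Red B) k f)
    (h : ∀ B', B ≤ B' → Blu B' (f (k - 1)) (f 0) → Force k n t B' Q) :
    Force k n (t + 1) B Q := Force.closeRed hk f hf.inj hf.adj h

/-- A vertex joined in red to one end of a red path on `k - 1` vertices
can be joined in blue to the other end. -/
theorem Force.farEnd (hk : 3 ≤ k) {t : ℕ} {B : Board} {Q : Board → Prop} {p : ℕ → ℕ}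
    (hp : IsPth (Red B) (k - 1) p) (x : ℕ) (hx : ∀ j < k - 1, x ≠ p j) (hr : Red B x (p 0))
    (h : ∀ B', B ≤ B' → Blu B' (p (k - 2)) x → Force k n t B' Q) :
    Force k n (t + 1) B Q := by
  have := hp.pcons x hx fun _ => hr
  rw [show k - 1 + 1 = k by omega] at this
  refine Force.closePth hk this ?_
  rw [pcons_last (by omega)]
  exact h

theorem winCC_of_cone (h3 : 3 ≤ n) {B : Board} {v : ℕ → ℕ} (hv : IsPth (Blu B) (n - 1) v) (z : ℕ)
    (hz : ∀ j < n - 1, z ≠ v j) (h0 : Blu B z (v 0)) (h1 : Blu B z (v (n - 2))) :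
    WinCC k n B := by
  have := hv.pcons z hz fun _ => h0
  rw [show n - 1 + 1 = n by omega] at this
  refine winCC_of_blu h3 _ this.inj this.adj ?_
  rw [pcons_last (by omega)]
  exact h1.symm

theorem Force.cone (hk : 3 ≤ k) (hko : Odd k) (hn : 8 * k ≤ n) {B : Board} {Q : Board → Prop}
    {v : ℕ → ℕ} (hv : IsPth (Blu B) n v) (z : ℕ)
    (hz : ∀ j < n, z ≠ v j) (h0 : Blu B z (v 0)) (h1 : Blu B z (v (n - 1))) :
    Force k n (2 * k + 3) B Q := by
  refine Force.shorten hk hko hn (hv.pcons z hz fun _ => h0) ?_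
  rw [pcons_last (by omega)]
  exact h1.symm

theorem bool_eq_not {c c' : Bool} (h : ¬ c' = c) : c' = !c := by
  revert h; cases c <;> cases c' <;> simp

/-- `x y` has the colour `c`, where `true` stands for red. -/
def Col (B : Board) (c : Bool) (x y : ℕ) : Prop := if c then Red B x y else Blu B x y

theorem Col.mono {B B' : Board} {c : Bool} {x y : ℕ} (h : Col B c x y) (hB : B ≤ B') :
    Col B' c x y := by
  cases c
  · exact Blu.mono h hB
  · exact Red.mono h hB

theorem Force.testCol {t : ℕ} {B : Board} {Q : Board → Prop} (u v : ℕ) (huv : u ≠ v)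
    (h : ∀ c B', B ≤ B' → Col B' c u v → Force k n t B' Q) : Force k n (t + 1) B Q :=
  Force.test u v huv (h true) (h false)

/-- Two vertices in the same relation to an end of a red path on `k - 1` vertices get a common
blue neighbour among the ends. -/
theorem Force.common (hk : 3 ≤ k) {t : ℕ} {B : Board} {Q : Board → Prop} {p : ℕ → ℕ}
    (hp : IsPth (Red B) (k - 1) p) (x y : ℕ) (hx : ∀ j < k - 1, x ≠ p j)
    (hy : ∀ j < k - 1, y ≠ p j) (c : Bool) (hcx : Col B c x (p 0)) (hcy : Col B c y (p 0))
    (h : ∀ B', B ≤ B' → ∀ j, j = 0 ∨ j = k - 2 → Blu B' (p j) x → Blu B' (p j) y → Force k n t B' Q) :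
    Force k n (t + 2) B Q := by
  cases c with
  | false => exact (h B le_rfl 0 (Or.inl rfl) (Blu.symm hcx) (Blu.symm hcy)).succ.succ
  | true =>
    refine Force.farEnd hk hp x hx hcx fun B1 hB1 h1 => ?_
    refine Force.farEnd hk (hp.red_mono hB1) y hy (Col.mono hcy hB1) fun B2 hB2 h2 => ?_
    exact h B2 (hB1.trans hB2) (k - 2) (Or.inr rfl) (h1.mono hB2) h2

theorem Force.binarySearch {r : ℕ} {Q : Board → Prop} (v : ℕ → ℕ) (a : ℕ) (c : Bool) (m : ℕ)
    {B : Board} (lo hi : ℕ) (hlh : lo < hi) (hm : hi - lo ≤ 2 ^ m)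
    (hva : ∀ i < hi, v i ≠ a) (hlo : Col B c (v lo) a) (hhi : Col B (!c) (v hi) a)
    (h : ∀ B', B ≤ B' → ∀ i < hi, Col B' c (v i) a → Col B' (!c) (v (i + 1)) a →
      Force k n r B' Q) : Force k n (m + r) B Q := by
  induction m generalizing B lo hi with
  | zero =>
    obtain rfl : hi = lo + 1 := by simp at hm; omega
    rw [Nat.zero_add]
    exact h B le_rfl lo (by omega) hlo hhi
  | succ m ih =>
    rw [Nat.add_right_comm]
    by_cases h1 : hi = lo + 1
    · subst h1
      exact (h B le_rfl lo (by omega) hlo hhi).mono (by omega)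
    rw [pow_succ] at hm
    have hmid : (lo + hi) / 2 < hi := by omega
    refine Force.testCol (v ((lo + hi) / 2)) a (hva _ hmid) fun c' B' hB hc => ?_
    by_cases hcc : c' = c
    · subst hcc
      exact ih _ hi hmid (by omega) hva hc (hhi.mono hB) fun B'' hB'' => h B'' (hB.trans hB'')
    · have := bool_eq_not hcc
      subst this
      exact ih lo _ (by omega) (by omega) (fun i hi' => hva i (by omega)) (hlo.mono hB) hc
        fun B'' hB'' i hi' => h B'' (hB.trans hB'') i (by omega)

/-- Builder closes a blue walk whose windows of length `n` are paths. -/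
theorem Force.closeWalk (hk : 3 ≤ k) (hko : Odd k) (hn : 8 * k ≤ n) {B : Board}
    {Q : Board → Prop} {v p : ℕ → ℕ} (hv : ∀ i < n - 2, IsPth (Blu B) n fun j => v (i + j))
    (hp : IsPth (Red B) (k - 1) p) (hd : ∀ i, i < k - 1 → ∀ j < 2 * n - 3, v j ≠ p i) :
    Force k n (Nat.log 2 n + 2 * k + 9) B Q := by
  have hva : ∀ j < 2 * n - 3, v j ≠ p 0 := hd 0 (by omega)
  refine Force.mono (t := (Nat.log 2 n + 1 + ((2 * k + 3 + 2) + 1)) + 1 + 1) ?_ (by omega)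
  refine Force.testCol (v 0) (p 0) (hva 0 (by omega)) fun c B1 hB1 h0 => ?_
  refine Force.testCol (v (n - 2)) (p 0) (hva _ (by omega)) fun c' B2 hB2 h1 => ?_
  replace hv := fun i hi => (hv i hi).blu_mono (hB1.trans hB2)
  replace hp := hp.red_mono (hB1.trans hB2)
  replace h0 := h0.mono hB2
  have same : ∀ t B', B2 ≤ B' → ∀ c i, i < n - 1 → Col B' c (v i) (p 0) →
      Col B' c (v (i + (n - 2))) (p 0) → Force k n (t + 2) B' Q := by
    intro t B' hB' c i hi hc1 hc2
    refine Force.common hk (hp.red_mono hB') _ _ (fun j hj => hd j hj _ (by omega))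
      (fun j hj => hd j hj _ (by omega)) c hc1 hc2 fun B'' hB'' j hj hb1 hb2 => ?_
    have hw : IsPth (Blu B') (n - 1) fun j => v (i + j) := by
      by_cases hi0 : i = 0
      · subst hi0
        exact ((hv 0 (by omega)).take (by omega)).blu_mono hB'
      · have := ((hv (i - 1) (by omega)).shift (m' := n - 1) 1 (by omega)).blu_mono hB'
        have he : ∀ j, i - 1 + (1 + j) = i + j := fun j => by omega
        simpa only [he] using this
    exact Force.win (winCC_of_cone (by omega) (hw.blu_mono hB'') (p j)
      (fun j' hj' => (hd j (by omega) _ (by omega)).symm) hb1 hb2)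
  by_cases hcc : c' = c
  · subst hcc
    refine Force.mono (same 0 B2 le_rfl c' 0 (by omega) h0 ?_) (by omega)
    rwa [Nat.zero_add]
  have := bool_eq_not hcc
  subst this
  refine Force.binarySearch v (p 0) c (Nat.log 2 n + 1) 0 (n - 2) (by omega) ?_
    (fun i hi => hva i (by omega)) h0 h1 fun B3 hB3 i hi hc1 hc2 => ?_
  · have := Nat.lt_pow_succ_log_self (b := 2) (by omega) n
    simp only [Nat.succ_eq_add_one] at this
    omega
  refine Force.testCol (v (i + (n - 1))) (p 0) (hva _ (by omega)) fun c' B4 hB4 h4 => ?_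
  by_cases hcc : c' = c
  · subst hcc
    refine Force.common hk (hp.red_mono (hB3.trans hB4)) _ _ (fun j hj => hd j hj _ (by omega))
      (fun j hj => hd j hj _ (by omega)) c' (hc1.mono hB4) h4 fun B5 hB5 j hj hb1 hb2 => ?_
    exact Force.cone hk hko hn ((hv i hi).blu_mono (hB3.trans (hB4.trans hB5))) (p j)
      (fun j' hj' => (hd j (by omega) _ (by omega)).symm) hb1 hb2
  · have := bool_eq_not hcc
    subst this
    refine same (2 * k + 3) B4 (hB3.trans hB4) _ (i + 1) (by omega) (hc2.mono hB4) ?_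
    rwa [show i + 1 + (n - 2) = i + (n - 1) by omega]

theorem IsPth.rev {B : Board} {m : ℕ} {v : ℕ → ℕ} (h : IsPth (Red B) m v) :
    IsPth (Red B) m fun i => v (m - 1 - i) where
  inj i hi j hj hij := by
    have := h.inj _ (by omega) _ (by omega) hij; omega
  adj i hi := h.red _ _ (by omega) (by omega) (by omega)

section Hub

variable {B : Board} {Q : Board → Prop} {t m : ℕ} {s : ℕ → ℕ}

theorem Force.hub_far (hk : 3 ≤ k) (hs : IsPth (Red B) m s) (x : ℕ) (hx : ∀ i < m, x ≠ s i)
    (i j : ℕ) (hj : j = i + (k - 2)) (hm : j < m) (hr : Red B x (s i))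
    (h : ∀ B', B ≤ B' → Blu B' x (s j) → Force k n t B' Q) : Force k n (t + 1) B Q := by
  subst hj
  exact Force.farEnd hk (hs.shift i (by omega)) x (fun j hj => hx _ (by omega)) hr
    fun B' hB hb => h B' hB hb.symm

theorem Force.hub_far' (hk : 3 ≤ k) (hs : IsPth (Red B) m s) (x : ℕ) (hx : ∀ i < m, x ≠ s i)
    (i j : ℕ) (hj : j = i + (k - 2)) (hm : j < m) (hr : Red B x (s j))
    (h : ∀ B', B ≤ B' → Blu B' x (s i) → Force k n t B' Q) : Force k n (t + 1) B Q := by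
  subst hj
  have h1 := (hs.shift (m' := k - 1) i (by omega)).rev
  refine Force.farEnd hk h1 x (fun j hj => hx _ (by omega)) ?_
    fun B' hB hb => h B' hB ?_
  · rwa [show i + (k - 1 - 1 - 0) = i + (k - 2) by omega]
  · rw [show i + (k - 1 - 1 - (k - 2)) = i by omega] at hb
    exact hb.symm

theorem Force.hub_edge (hk : 3 ≤ k) (hs : IsPth (Red B) m s) (u v : ℕ) (huv : u ≠ v)
    (hu : ∀ i < m, u ≠ s i) (hv : ∀ i < m, v ≠ s i) (hr : Red B u v)
    (i j : ℕ) (hj : j = i + (k - 3)) (hm : j < m) (hui : Red B u (s i))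
    (h : ∀ B', B ≤ B' → Blu B' v (s j) → Force k n t B' Q) : Force k n (t + 1) B Q := by
  subst hj
  have h1 := (hs.shift (m' := k - 2) i (by omega)).pcons u (fun j hj => hu _ (by omega))
    fun _ => hui
  rw [show k - 2 + 1 = k - 1 by omega] at h1
  refine Force.farEnd hk h1 v (fun j hj => ?_) hr.symm fun B' hB hb => h B' hB ?_
  · cases j with
    | zero => exact huv.symm
    | succ j => exact hv _ (by omega)
  · rw [pcons_last (by omega)] at hb
    exact hb.symm

theorem Force.hub_edge' (hk : 3 ≤ k) (hs : IsPth (Red B) m s) (u v : ℕ) (huv : u ≠ v)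
    (hu : ∀ i < m, u ≠ s i) (hv : ∀ i < m, v ≠ s i) (hr : Red B u v)
    (i j : ℕ) (hj : j = i + (k - 3)) (hm : j < m) (hui : Red B u (s j))
    (h : ∀ B', B ≤ B' → Blu B' v (s i) → Force k n t B' Q) : Force k n (t + 1) B Q := by
  subst hj
  have h1 := (hs.shift (m' := k - 2) i (by omega)).rev
  refine Force.hub_edge hk h1 u v huv (fun j hj => hu _ (by omega)) (fun j hj => hv _ (by omega))
    hr 0 (k - 3) (by omega) (by omega) ?_ fun B' hB hb => h B' hB ?_
  · rwa [show i + (k - 2 - 1 - 0) = i + (k - 3) by omega]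
  · rwa [show i + (k - 2 - 1 - (k - 3)) = i by omega] at hb

theorem Force.hub_rail (hk : 3 ≤ k) (hs : IsPth (Red B) m s) 
    (i j : ℕ) (hj : j = i + (k - 1)) (hm : j < m)
    (h : ∀ B', B ≤ B' → Blu B' (s i) (s j) → Force k n t B' Q) : Force k n (t + 1) B Q := by
  subst hj
  exact Force.closePth hk (hs.shift (m' := k) i (by omega)) fun B' hB hb => h B' hB hb.symm

/-- `c` is the interior of a blue path from `g` to `q` through vertices in `S`. -/
structure Link (B : Board) (S : Set ℕ) (g q : ℕ) (c : List ℕ) : Prop where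
  ne : c ≠ []
  nodup : c.Nodup
  chain : (g :: c ++ [q]).IsChain (Blu B)
  mem : ∀ x ∈ c, x ∈ S

theorem Link.mono {B B' : Board} {S : Set ℕ} {g q : ℕ} {c : List ℕ} (h : Link B S g q c)
    (hB : B ≤ B') : Link B' S g q c :=
  ⟨h.ne, h.nodup, h.chain.imp fun _ _ h => Blu.mono h hB, h.mem⟩

theorem Link.mono_set {S S' : Set ℕ} {g q : ℕ} {c : List ℕ} (h : Link B S g q c)
    (hS : ∀ x ∈ S, x ∈ S') : Link B S' g q c :=
  ⟨h.ne, h.nodup, h.chain, fun x hx => hS x (h.mem x hx)⟩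

theorem Link.one {S : Set ℕ} {g q a : ℕ} (ha : a ∈ S) (h1 : Blu B g a) (h2 : Blu B q a) :
    Link B S g q [a] :=
  ⟨by simp, by simp, by simp [h1, h2.symm], by simpa⟩

theorem Link.two {S : Set ℕ} {g q a b : ℕ} (hab : a ≠ b) (ha : a ∈ S) (hb : b ∈ S)
    (h1 : Blu B g a) (h2 : Blu B a b) (h3 : Blu B q b) : Link B S g q [a, b] :=
  ⟨by simp, by simp [hab], by simp [h1, h2, h3.symm], by simp [ha, hb]⟩

theorem Link.symm {S : Set ℕ} {g q : ℕ} {c : List ℕ} (h : Link B S g q c) :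
    Link B S q g c.reverse := by
  refine ⟨by simpa using h.ne, by simpa using h.nodup, ?_, by simpa using h.mem⟩
  have := List.isChain_reverse.2 (h.chain.imp fun _ _ h => Blu.symm h)
  simpa [flip] using this

/-- The vertices `s 0, …, s (m - 1)`. -/
def verts (m : ℕ) (s : ℕ → ℕ) : Set ℕ := {x | ∃ i < m, x = s i}

/-- At distance `k - 2` around position `r` the vertices `g` and `q` see opposite colours. -/
structure Opp (k : ℕ) (B : Board) (s : ℕ → ℕ) (r g q : ℕ) : Prop where
  gb : Blu B g (s r)
  gr : Red B g (s (r + (k - 2)))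
  qr : Red B q (s r)
  qb : Blu B q (s (r + (k - 2)))

theorem Opp.mono {B B' : Board} {s : ℕ → ℕ} {r g q : ℕ} (h : Opp k B s r g q) (hB : B ≤ B') :
    Opp k B' s r g q := ⟨h.gb.mono hB, h.gr.mono hB, h.qr.mono hB, h.qb.mono hB⟩

theorem mem_verts {m i : ℕ} {s : ℕ → ℕ} (h : i < m) : s i ∈ verts m s := ⟨i, h, rfl⟩

theorem winCC_of_hub (hk : 3 ≤ k) (hs : IsPth (Red B) m s) (x : ℕ) (hx : ∀ i < m, x ≠ s i)
    (i : ℕ) (hm : i + (k - 2) < m) (h1 : Red B x (s i)) (h2 : Red B x (s (i + (k - 2)))) :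
    WinCC k n B := by
  have := (hs.shift (m' := k - 1) i (by omega)).pcons x (fun j hj => hx _ (by omega)) fun _ => h1
  rw [show k - 1 + 1 = k by omega] at this
  refine winCC_of_red hk _ this.inj this.adj ?_
  rw [pcons_last (by omega)]
  exact h2.symm

theorem Force.orient (hk : 3 ≤ k) (hs : IsPth (Red B) m s) (g q : ℕ)
    (hg : ∀ i < m, g ≠ s i) (hq : ∀ i < m, q ≠ s i) (r : ℕ) (hr : r + (k - 2) < m) :
    Force k n 4 B (fun B' => (∃ c, Link B' (verts m s) g q c) ∨ Opp k B' s r g q ∨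
      Opp k B' s r q g) := by
  have hr' : r < m := by omega
  refine Force.test g (s r) (hg _ hr') (fun B1 h1 g1 => ?_) (fun B1 h1 g1 => ?_) <;>
  refine Force.test q (s r) (hq _ hr') (fun B2 h2 q1 => ?_) (fun B2 h2 q1 => ?_) <;>
  refine Force.test g (s (r + (k - 2))) (hg _ hr) (fun B3 h3 g2 => ?_) (fun B3 h3 g2 => ?_) <;>
  refine Force.test q (s (r + (k - 2))) (hq _ hr) (fun B4 h4 q2 => ?_) (fun B4 h4 q2 => ?_) <;>
  replace g1 := g1.mono (h2.trans (h3.trans h4)) <;>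
  replace q1 := q1.mono (h3.trans h4) <;>
  replace g2 := g2.mono h4 <;>
  replace hs := hs.red_mono (h1.trans (h2.trans (h3.trans h4))) <;>
  first
  | exact Force.win (winCC_of_hub hk hs g hg r hr g1 g2)
  | exact Force.win (winCC_of_hub hk hs q hq r hr q1 q2)
  | exact Force.done (Or.inl ⟨_, Link.one (mem_verts hr') g1 q1⟩)
  | exact Force.done (Or.inl ⟨_, Link.one (mem_verts hr) g2 q2⟩)
  | exact Force.done (Or.inr (Or.inl ⟨g1, g2, q1, q2⟩))
  | exact Force.done (Or.inr (Or.inr ⟨q1, q2, g1, g2⟩))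

theorem Force.rails (hk : 3 ≤ k) (hs : IsPth (Red B) m s) (g q : ℕ)
    (r : ℕ) (hr : r + (k - 1) < m) (h1 : Opp k B s r g q) (h2 : Opp k B s (r + 1) g q) :
    Force k n 1 B (fun B' => ∃ c, Link B' (verts m s) g q c) := by
  refine Force.hub_rail hk hs r _ rfl hr fun B' hB hb => ?_
  refine Force.done ⟨_, Link.two (hs.ne _ _ (by omega) hr (by omega)) (mem_verts (by omega))
    (mem_verts hr) (h1.gb.mono hB) hb ?_⟩
  have := h2.qb.mono hB
  rwa [show r + 1 + (k - 2) = r + (k - 1) by omega] at this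

/-- The colours seen by `g` and `q` along a block of `k + 1` vertices alternate. -/
structure Alt (k : ℕ) (B : Board) (s : ℕ → ℕ) (g q : ℕ) : Prop where
  h0 : Opp k B s 0 g q
  h1 : Opp k B s 1 q g
  h2 : Opp k B s 2 g q

theorem Alt.mono {B B' : Board} {s : ℕ → ℕ} {g q : ℕ} (h : Alt k B s g q) (hB : B ≤ B') :
    Alt k B' s g q := ⟨h.h0.mono hB, h.h1.mono hB, h.h2.mono hB⟩

theorem Force.linkOrAlt (hk : 3 ≤ k) (hs : IsPth (Red B) (k + 1) s) (g q : ℕ)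
    (hg : ∀ i < k + 1, g ≠ s i) (hq : ∀ i < k + 1, q ≠ s i) :
    Force k n 13 B (fun B' => (∃ c, Link B' (verts (k + 1) s) g q c) ∨ Alt k B' s g q ∨
      Alt k B' s q g) := by
  have rails : ∀ B', B ≤ B' → ∀ r, r < 2 →
      (Opp k B' s r g q ∧ Opp k B' s (r + 1) g q) ∨ (Opp k B' s r q g ∧ Opp k B' s (r + 1) q g) →
      Force k n 1 B' (fun B' => (∃ c, Link B' (verts (k + 1) s) g q c) ∨ Alt k B' s g q ∨
      Alt k B' s q g) := by
    intro B' hB r hr h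
    rcases h with ⟨h1, h2⟩ | ⟨h1, h2⟩
    · exact (Force.rails hk (hs.red_mono hB) g q r (by omega) h1 h2).imp fun B' _ h => Or.inl h
    · exact (Force.rails hk (hs.red_mono hB) q g r (by omega) h1 h2).imp
        fun B' _ ⟨c, h⟩ => Or.inl ⟨_, h.symm⟩
  refine (Force.orient hk hs g q hg hq 0 (by omega)).bind' (t' := 9) (by omega) fun B1 hB1 h0 => ?_
  rcases h0 with h0 | h0
  · exact Force.done (Or.inl h0)
  refine (Force.orient hk (hs.red_mono hB1) g q hg hq 1 (by omega)).bind' (t' := 5) (by omega)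
    fun B2 hB2 h1 => ?_
  rcases h1 with h1 | h1
  · exact Force.done (Or.inl h1)
  replace h0 := h0.imp (fun h => Opp.mono h hB2) (fun h => Opp.mono h hB2)
  have hB2' := hB1.trans hB2
  refine (Force.orient hk (hs.red_mono hB2') g q hg hq 2 (by omega)).bind' (t' := 1) (by omega)
    fun B3 hB3 h2 => ?_
  rcases h2 with h2 | h2
  · exact Force.done (Or.inl h2)
  replace h0 := h0.imp (fun h => Opp.mono h hB3) (fun h => Opp.mono h hB3)
  replace h1 := h1.imp (fun h => Opp.mono h hB3) (fun h => Opp.mono h hB3)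
  have hB3' := hB2'.trans hB3
  rcases h0 with h0 | h0 <;> rcases h1 with h1 | h1 <;> rcases h2 with h2 | h2
  · exact rails _ hB3' 0 (by omega) (Or.inl ⟨h0, h1⟩)
  · exact rails _ hB3' 0 (by omega) (Or.inl ⟨h0, h1⟩)
  · exact Force.done (Or.inr (Or.inl ⟨h0, h1, h2⟩))
  · exact rails _ hB3' 1 (by omega) (Or.inr ⟨h1, h2⟩)
  · exact rails _ hB3' 1 (by omega) (Or.inl ⟨h1, h2⟩)
  · exact Force.done (Or.inr (Or.inr ⟨h0, h1, h2⟩))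
  · exact rails _ hB3' 0 (by omega) (Or.inr ⟨h0, h1⟩)
  · exact rails _ hB3' 0 (by omega) (Or.inr ⟨h0, h1⟩)

end Hub

/-- `l` is a blue path. -/
structure BPath (B : Board) (l : List ℕ) : Prop where
  nodup : l.Nodup
  chain : l.IsChain (Blu B)

theorem BPath.mono {B B' : Board} {l : List ℕ} (h : BPath B l) (hB : B ≤ B') : BPath B' l :=
  ⟨h.nodup, h.chain.imp fun _ _ h => Blu.mono h hB⟩

theorem BPath.reverse {B : Board} {l : List ℕ} (h : BPath B l) : BPath B l.reverse :=
  ⟨by simpa using h.nodup,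
    by simpa [flip] using List.isChain_reverse.2 (h.chain.imp fun _ _ h => Blu.symm h)⟩

/-- `K` is a blue path from `u` to `v`, and `u v` is red. -/
structure KPath (B : Board) (u v : ℕ) (K : List ℕ) : Prop extends BPath B K where
  head : K.head? = some u
  last : K.getLast? = some v
  red : Red B u v
  ne : u ≠ v

theorem KPath.mono {B B' : Board} {u v : ℕ} {l : List ℕ} (h : KPath B u v l) (hB : B ≤ B') :
    KPath B' u v l := ⟨h.toBPath.mono hB, h.head, h.last, h.red.mono hB, h.ne⟩

theorem KPath.reverse {B : Board} {u v : ℕ} {l : List ℕ} (h : KPath B u v l) :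
    KPath B v u l.reverse :=
  ⟨h.toBPath.reverse, by simpa using h.last, by simpa using h.head, h.red.symm, h.ne.symm⟩

theorem KPath.mem_head {B : Board} {u v : ℕ} {l : List ℕ} (h : KPath B u v l) : u ∈ l :=
  List.mem_of_mem_head? (by rw [h.head]; rfl)

theorem KPath.mem_last {B : Board} {u v : ℕ} {l : List ℕ} (h : KPath B u v l) : v ∈ l :=
  List.mem_of_getLast? h.last

theorem KPath.link {B : Board} {S : Set ℕ} {u v g q a b : ℕ} {K : List ℕ} (h : KPath B u v K)
    (ha : a ∈ S) (hb : b ∈ S) (hS : ∀ x ∈ K, x ∉ S) (hab : a ≠ b) (hga : Blu B g a)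
    (hqb : Blu B q b) (hua : Blu B u a) (hvb : Blu B v b) :
    Link B (S ∪ {x | x ∈ K}) g q (a :: K ++ [b]) := by
  refine ⟨by simp, ?_, ?_, ?_⟩
  · have h1 : a ∉ K := fun h' => hS a h' ha
    have h2 : b ∉ K := fun h' => hS b h' hb
    simp only [List.cons_append, List.nodup_cons, List.mem_append, List.mem_singleton,
      List.nodup_append, List.nodup_nil]
    refine ⟨by tauto, h.nodup, by simp, ?_⟩
    rintro x hx y rfl rfl
    exact h2 hx
  · rw [show g :: (a :: K ++ [b]) ++ [q] = [g, a] ++ (K ++ [b, q]) by simp]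
    rw [List.isChain_append, List.isChain_append]
    refine ⟨by simpa, ⟨h.chain, by simpa using hqb.symm, ?_⟩, ?_⟩
    · rw [h.last]; simpa using hvb
    · simp only [List.head?_append, h.head]; simpa using hua.symm
  · intro x hx
    simp only [List.cons_append, List.mem_cons, List.mem_append, List.not_mem_nil, or_false] at hx
    rcases hx with rfl | hx | rfl
    · exact Or.inl ha
    · exact Or.inr hx
    · exact Or.inl hb

section

variable {B : Board} {Q : Board → Prop} {t m : ℕ} {s : ℕ → ℕ}

theorem Alt.g {g q : ℕ} (hk : 3 ≤ k) (h : Alt k B s g q) :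
    Blu B g (s 2) ∧ Blu B g (s (k - 1)) := by
  refine ⟨h.h2.gb, ?_⟩
  have := h.h1.qb
  rwa [show 1 + (k - 2) = k - 1 by omega] at this

theorem Alt.q {g q : ℕ} (h : Alt k B s g q) :
    Blu B q (s 1) ∧ Blu B q (s (k - 2)) := by
  refine ⟨h.h1.gb, ?_⟩
  have := h.h0.qb
  rwa [Nat.zero_add] at this

theorem Alt.linkK (hk : 3 ≤ k) (hko : Odd k) (hs : IsPth (Red B) (k + 1) s) {g q u v : ℕ}
    {K : List ℕ} (hN : Alt k B s g q) (hK : KPath B u v K)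
    (hS : ∀ x ∈ K, x ∉ verts (k + 1) s)
    (hu : Blu B u (s 2) ∨ Blu B u (s (k - 1))) (hv : Blu B v (s 1) ∨ Blu B v (s (k - 2))) :
    ∃ c, Link B (verts (k + 1) s ∪ {x | x ∈ K}) g q c := by
  obtain ⟨r, rfl⟩ := hko
  have hg := hN.g hk
  have hq := hN.q
  rcases hu with hu | hu <;> rcases hv with hv | hv
  · exact ⟨_, hK.link (mem_verts (by omega)) (mem_verts (by omega)) hS
      (hs.ne _ _ (by omega) (by omega) (by omega)) hg.1 hq.1 hu hv⟩
  · exact ⟨_, hK.link (mem_verts (by omega)) (mem_verts (by omega)) hS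
      (hs.ne _ _ (by omega) (by omega) (by omega)) hg.1 hq.2 hu hv⟩
  · exact ⟨_, hK.link (mem_verts (by omega)) (mem_verts (by omega)) hS
      (hs.ne _ _ (by omega) (by omega) (by omega)) hg.2 hq.1 hu hv⟩
  · exact ⟨_, hK.link (mem_verts (by omega)) (mem_verts (by omega)) hS
      (hs.ne _ _ (by omega) (by omega) (by omega)) hg.2 hq.2 hu hv⟩

theorem Force.altLink (hk : 3 ≤ k) (hko : Odd k) (hs : IsPth (Red B) (k + 1) s) {g q u v : ℕ}
    {K : List ℕ} (hN : Alt k B s g q) (hK : KPath B u v K)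
    (hS : ∀ x ∈ K, x ∉ verts (k + 1) s) :
    Force k n 6 B (fun B' => ∃ c, Link B' (verts (k + 1) s ∪ {x | x ∈ K}) g q c) := by
  have hu : ∀ i < k + 1, u ≠ s i := fun i hi h => hS u hK.mem_head ⟨i, hi, h⟩
  have hv : ∀ i < k + 1, v ≠ s i := fun i hi h => hS v hK.mem_last ⟨i, hi, h⟩
  have fin : ∀ t B', B ≤ B' → (Blu B' u (s 2) ∨ Blu B' u (s (k - 1))) →
      (Blu B' v (s 1) ∨ Blu B' v (s (k - 2))) →
      Force k n t B' (fun B' => ∃ c, Link B' (verts (k + 1) s ∪ {x | x ∈ K}) g q c) :=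
    fun t B' hB h1 h2 => Force.done
      ((hN.mono hB).linkK hk hko (hs.red_mono hB) (hK.mono hB) hS h1 h2)
  have fin' : ∀ t B', B ≤ B' → (Blu B' v (s 2) ∨ Blu B' v (s (k - 1))) →
      (Blu B' u (s 1) ∨ Blu B' u (s (k - 2))) →
      Force k n t B' (fun B' => ∃ c, Link B' (verts (k + 1) s ∪ {x | x ∈ K}) g q c) := by
    intro t B' hB h1 h2
    obtain ⟨c, hc⟩ := (hN.mono hB).linkK hk hko (hs.red_mono hB) (hK.mono hB).reverse
      (fun x hx => hS x (by simpa using hx)) h1 h2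
    exact Force.done ⟨c, hc.mono_set (by simp)⟩
  have part2 : ∀ B', B ≤ B' → (Blu B' u (s 2) ∨ Blu B' u (s (k - 1))) →
      Force k n 4 B' (fun B' => ∃ c, Link B' (verts (k + 1) s ∪ {x | x ∈ K}) g q c) := by
    intro B' hB hu'
    refine Force.test v (s 1) (hv _ (by omega)) (fun B1 h1 v1 => ?_) fun B1 h1 v1 =>
      fin _ _ (hB.trans h1) (hu'.imp (fun h => h.mono h1) (fun h => h.mono h1)) (Or.inl v1)
    refine Force.test v (s (k - 2)) (hv _ (by omega)) (fun B2 h2 v2 => ?_) fun B2 h2 v2 =>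
      fin _ _ (hB.trans (h1.trans h2)) (hu'.imp (fun h => h.mono (h1.trans h2))
        (fun h => h.mono (h1.trans h2))) (Or.inr v2)
    have hB2 := hB.trans (h1.trans h2)
    refine Force.hub_edge' hk (hs.red_mono hB2) v u hK.ne.symm hv hu (hK.mono hB2).red.symm 1 (k - 2)
      (by omega) (by omega) v2 fun B3 h3 u1 => ?_
    have hB3 := hB2.trans h3
    refine Force.hub_far hk (hs.red_mono hB3) v hv 1 (k - 1)
      (by omega) (by omega) (v1.mono (h2.trans h3)) fun B4 h4 u2 => ?_
    exact fin' _ _ (hB3.trans h4) (Or.inr u2) (Or.inl (u1.mono h4))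
  refine Force.test u (s 2) (hu _ (by omega)) (fun B1 h1 u1 => ?_) fun B1 h1 u1 =>
    (part2 B1 h1 (Or.inl u1)).succ
  refine Force.test u (s (k - 1)) (hu _ (by omega)) (fun B2 h2 u2 => ?_) fun B2 h2 u2 =>
    part2 B2 (h1.trans h2) (Or.inr u2)
  have hB2 := h1.trans h2
  refine Force.mono (t := 2) ?_ (by omega)
  refine Force.hub_edge' hk (hs.red_mono hB2) u v hK.ne hu hv (hK.mono hB2).red 2 (k - 1)
    (by omega) (by omega) u2 fun B3 h3 v1 => ?_
  have hB3 := hB2.trans h3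
  refine Force.hub_far' hk (hs.red_mono hB3) u hu 1 (k - 1)
    (by omega) (by omega) (u2.mono h3) fun B4 h4 v2 => ?_
  exact fin' _ _ (hB3.trans h4) (Or.inl (v1.mono h4)) (Or.inl v2)

/-- With the help of `K`, Builder joins `g` to `q` by a blue path. -/
theorem Force.link (hk : 3 ≤ k) (hko : Odd k) (hs : IsPth (Red B) (k + 1) s) {g q u v : ℕ}
    (hg : g ∉ verts (k + 1) s) (hq : q ∉ verts (k + 1) s)
    {K : List ℕ} (hK : KPath B u v K) (hS : ∀ x ∈ K, x ∉ verts (k + 1) s) :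
    Force k n 19 B (fun B' => ∃ c, Link B' (verts (k + 1) s ∪ {x | x ∈ K}) g q c) := by
  refine (Force.linkOrAlt hk hs g q (fun i hi h => hg ⟨i, hi, h⟩)
    fun i hi h => hq ⟨i, hi, h⟩).bind' (t' := 6) (by omega) fun B1 hB1 h => ?_
  rcases h with ⟨c, h⟩ | h | h
  · exact Force.done ⟨c, h.mono_set fun x hx => Or.inl hx⟩
  · exact Force.altLink hk hko (hs.red_mono hB1) h (hK.mono hB1) hS
  · exact (Force.altLink hk hko (hs.red_mono hB1) h (hK.mono hB1) hS).imp
      fun B' _ ⟨c, h⟩ => ⟨_, h.symm⟩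

end

theorem BPath.isPth {B : Board} {l : List ℕ} (h : BPath B l) :
    IsPth (Blu B) l.length fun i => l.getD i 0 where
  inj i hi j hj hij := by
    rw [List.getD_eq_getElem _ _ hi, List.getD_eq_getElem _ _ hj] at hij
    exact (h.nodup.getElem_inj_iff).1 hij
  adj i hi := by
    rw [List.getD_eq_getElem _ _ hi, List.getD_eq_getElem _ _ (by omega)]
    exact List.isChain_iff_getElem.1 h.chain i hi

theorem getD_mem {l : List ℕ} {i : ℕ} (hi : i < l.length) : l.getD i 0 ∈ l := by
  rw [List.getD_eq_getElem _ _ hi]; exact List.getElem_mem hi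

section

variable {B : Board} {Q : Board → Prop} {p : ℕ → ℕ}

/-- Builder wins with a long blue path. -/
theorem Force.closeList (hk : 3 ≤ k) (hko : Odd k) (hn : 8 * k ≤ n) {l : List ℕ}
    (hl : BPath B l) (hlen : 2 * n - 3 ≤ l.length) (hp : IsPth (Red B) (k - 1) p)
    (hd : ∀ x ∈ l, x ∉ verts (k - 1) p) : Force k n (Nat.log 2 n + 2 * k + 9) B Q := by
  refine Force.closeWalk hk hko hn (v := fun i => l.getD i 0)
    (fun i hi => hl.isPth.shift i (by omega)) hp fun i hi j hj h => ?_
  exact hd _ (getD_mem (by omega)) ⟨i, hi, h⟩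

/-- Builder wins with a long blue cycle. -/
theorem Force.closeCycle (hk : 3 ≤ k) (hko : Odd k) (hn : 8 * k ≤ n) {l : List ℕ}
    (hl : BPath B l) (hlen : n ≤ l.length) {g q : ℕ} (hg : l.head? = some g)
    (hq : l.getLast? = some q) (hgq : Blu B q g) (hp : IsPth (Red B) (k - 1) p)
    (hd : ∀ x ∈ l, x ∉ verts (k - 1) p) : Force k n (Nat.log 2 n + 2 * k + 9) B Q := by
  have hL : 0 < l.length := by omega
  have h0 : l.getD 0 0 = g := by
    rw [List.head?_eq_getElem?] at hg; simp [hg]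
  have h1 : l.getD (l.length - 1) 0 = q := by
    rw [List.getLast?_eq_getElem?] at hq; simp [hq]
  have hP := hl.isPth
  refine Force.closeWalk hk hko hn (v := fun i => l.getD (i % l.length) 0)
    (fun i hi => ⟨fun j hj j' hj' h => ?_, fun j hj => ?_⟩) hp fun i hi j hj h => ?_
  · have := hP.inj _ (Nat.mod_lt _ hL) _ (Nat.mod_lt _ hL) h
    have h2 : j ≡ j' [MOD l.length] := Nat.ModEq.add_left_cancel' i this
    rw [Nat.ModEq, Nat.mod_eq_of_lt (by omega), Nat.mod_eq_of_lt (by omega)] at h2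
    exact h2
  · have hm := Nat.mod_lt (i + j) hL
    rw [← Nat.add_assoc i j 1, Nat.add_mod_eq_ite (m := i + j) (n := 1)]
    have h1' : 1 % l.length = 1 := Nat.mod_eq_of_lt (by omega)
    rw [h1']
    split_ifs with hc
    · rw [show (i + j) % l.length = l.length - 1 by omega, h1,
        show l.length - 1 + 1 - l.length = 0 by omega, h0]
      exact hgq
    · exact hP.adj _ (by omega)
  · exact hd _ (getD_mem (Nat.mod_lt _ hL)) ⟨i, hi, h⟩

theorem BPath.link {S : Set ℕ} {l₁ l₂ c : List ℕ} {a b : ℕ} (h₁ : BPath B l₁) (h₂ : BPath B l₂)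
    (ha : l₁.getLast? = some a) (hb : l₂.head? = some b) (hc : Link B S a b c)
    (hd : l₁.Disjoint l₂) (hS : ∀ x ∈ S, x ∉ l₁ ∧ x ∉ l₂) : BPath B (l₁ ++ (c ++ l₂)) := by
  have hcc := hc.chain
  rw [List.cons_append, List.isChain_cons, List.isChain_append] at hcc
  obtain ⟨hc1, hc2, -, hc3⟩ := hcc
  constructor
  · rw [List.nodup_append, List.nodup_append]
    refine ⟨h₁.nodup, ⟨hc.nodup, h₂.nodup, ?_⟩, ?_⟩
    · rintro x hx y hy rfl
      exact (hS x (hc.mem x hx)).2 hy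
    · rintro x hx y hy rfl
      rcases List.mem_append.1 hy with hy | hy
      · exact (hS x (hc.mem x hy)).1 hx
      · exact hd hx hy
  · rw [List.isChain_append, List.isChain_append]
    refine ⟨h₁.chain, ⟨hc2, h₂.chain, ?_⟩, ?_⟩
    · rw [hb]; simpa using hc3
    · rw [ha]
      obtain ⟨c0, c', rfl⟩ := List.exists_cons_of_ne_nil hc.ne
      simpa using hc1

/-- A family of disjoint blue paths whose ends avoid `E`. -/
structure Loose (B : Board) (E : Set ℕ) (P : List (List ℕ)) : Prop where
  nodup : P.flatten.Nodup
  ne : ∀ l ∈ P, l ≠ []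
  chain : ∀ l ∈ P, l.IsChain (Blu B)
  head : ∀ l ∈ P, ∀ x ∈ l.head?, x ∉ E
  last : ∀ l ∈ P, ∀ x ∈ l.getLast?, x ∉ E

theorem Loose.mono {E : Set ℕ} {P : List (List ℕ)} (h : Loose B E P) {B' : Board} (hB : B ≤ B') :
    Loose B' E P :=
  ⟨h.nodup, h.ne, fun l hl => (h.chain l hl).imp fun _ _ h => Blu.mono h hB, h.head, h.last⟩

theorem Loose.perm {E : Set ℕ} {P P' : List (List ℕ)} (h : Loose B E P) (hP : P.Perm P') :
    Loose B E P' :=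
  ⟨(hP.flatten.nodup_iff).1 h.nodup, fun l hl => h.ne l (hP.mem_iff.2 hl),
    fun l hl => h.chain l (hP.mem_iff.2 hl), fun l hl => h.head l (hP.mem_iff.2 hl),
    fun l hl => h.last l (hP.mem_iff.2 hl)⟩

theorem Loose.bpath {E : Set ℕ} {P : List (List ℕ)} (h : Loose B E P) {l : List ℕ} (hl : l ∈ P) :
    BPath B l := ⟨(List.nodup_flatten.1 h.nodup).1 l hl, h.chain l hl⟩

theorem exists_head {l : List ℕ} (h : l ≠ []) : ∃ x, l.head? = some x := by
  obtain ⟨a, l', rfl⟩ := List.exists_cons_of_ne_nil h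
  exact ⟨a, rfl⟩

theorem exists_last {l : List ℕ} (h : l ≠ []) : ∃ x, l.getLast? = some x :=
  ⟨_, List.getLast?_eq_getLast_of_ne_nil h⟩

theorem Loose.join {E : Set ℕ} {P : List (List ℕ)} {l₁ l₂ : List ℕ} (h : Loose B E (l₁ :: l₂ :: P))
    {x y z : ℕ} (hx : l₁.head? = some x) (hy : l₂.head? = some y) (hzx : Blu B z x)
    (hzy : Blu B z y) (hz : z ∉ (l₁ :: l₂ :: P).flatten) :
    Loose B E ((l₁.reverse ++ z :: l₂) :: P) := by
  obtain ⟨x', l₁, rfl⟩ : ∃ x' l', l₁ = x' :: l' := List.exists_cons_of_ne_nil (h.ne _ (by simp))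
  obtain rfl : x' = x := by simpa using hx
  obtain ⟨y', l₂, rfl⟩ : ∃ x' l', l₂ = x' :: l' := List.exists_cons_of_ne_nil (h.ne _ (by simp))
  obtain rfl : y' = y := by simpa using hy
  have hp : (((x' :: l₁).reverse ++ z :: (y' :: l₂)) :: P).flatten.Perm
      (z :: ((x' :: l₁) :: (y' :: l₂) :: P).flatten) := by
    simp only [List.flatten_cons]
    rw [List.append_assoc, List.cons_append]
    refine List.perm_middle.trans (List.Perm.cons _ ?_)
    exact (List.reverse_perm _).append_right _
  refine ⟨hp.nodup_iff.2 (List.nodup_cons.2 ⟨hz, h.nodup⟩), ?_, ?_, ?_, ?_⟩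
  · intro l hl
    rcases List.mem_cons.1 hl with rfl | hl
    · simp
    · exact h.ne l (by simp [hl])
  · intro l hl
    rcases List.mem_cons.1 hl with rfl | hl
    · have h1 := (h.bpath (l := x' :: l₁) (by simp)).reverse.chain
      have h2 := (h.bpath (l := y' :: l₂) (by simp)).chain
      rw [List.isChain_append]
      refine ⟨h1, ?_, ?_⟩
      · exact List.isChain_cons_cons.2 ⟨hzy, h2⟩
      · simpa using hzx.symm
    · exact h.chain l (by simp [hl])
  · intro l hl
    rcases List.mem_cons.1 hl with rfl | hl
    · have := h.last (x' :: l₁) (by simp)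
      intro w hw
      obtain ⟨a, ha⟩ := exists_last (l := x' :: l₁) (by simp)
      rw [List.head?_append, List.head?_reverse, ha] at hw
      exact this w (by rw [ha]; simpa using hw)
    · exact h.head l (by simp [hl])
  · intro l hl
    rcases List.mem_cons.1 hl with rfl | hl
    · have := h.last (y' :: l₂) (by simp)
      intro w hw
      refine this w ?_
      rw [List.getLast?_append_of_ne_nil _ (by simp), List.getLast?_cons_cons] at hw
      exact hw
    · exact h.last l (by simp [hl])

theorem flatten_join_perm {P : List (List ℕ)} {l₁ l₂ : List ℕ} (z : ℕ) :
    ((l₁.reverse ++ z :: l₂) :: P).flatten.Perm (z :: (l₁ :: l₂ :: P).flatten) := by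
  simp only [List.flatten_cons]
  rw [List.append_assoc, List.cons_append]
  exact List.perm_middle.trans (List.Perm.cons _ ((List.reverse_perm _).append_right _))

/-- Two of three disjoint blue paths can be joined through an end of a red path. -/
theorem Force.merge (hk : 3 ≤ k) {E : Set ℕ} {P : List (List ℕ)} (hP : Loose B E P)
    (h3 : 3 ≤ P.length) (hp : IsPth (Red B) (k - 1) p) (hE : ∀ i < k - 1, p i ∈ E)
    (h0 : p 0 ∉ P.flatten) (h1 : p (k - 2) ∉ P.flatten) :
    Force k n 5 B (fun B' => ∃ P' z, Loose B' E P' ∧ P'.length + 1 = P.length ∧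
      (z = p 0 ∨ z = p (k - 2)) ∧ P'.flatten.Perm (z :: P.flatten)) := by
  match P, h3 with
  | l₁ :: l₂ :: l₃ :: P, _ =>
  obtain ⟨x₁, e₁⟩ := exists_head (hP.ne l₁ (by simp))
  obtain ⟨x₂, e₂⟩ := exists_head (hP.ne l₂ (by simp))
  obtain ⟨x₃, e₃⟩ := exists_head (hP.ne l₃ (by simp))
  have E₁ := hP.head l₁ (by simp) x₁ (by rw [e₁]; rfl)
  have E₂ := hP.head l₂ (by simp) x₂ (by rw [e₂]; rfl)
  have E₃ := hP.head l₃ (by simp) x₃ (by rw [e₃]; rfl)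
  have ne : ∀ x, x ∉ E → ∀ j < k - 1, x ≠ p j := fun x hx j hj h => hx (h ▸ hE j hj)
  have key : ∀ B', B ≤ B' → ∀ c (m₁ m₂ : List ℕ) (P₀ P' : List (List ℕ)) y₁ y₂,
      m₁.head? = some y₁ → m₂.head? = some y₂ → y₁ ∉ E → y₂ ∉ E →
      Loose B E P₀ → P₀.Perm (m₁ :: m₂ :: P') → p 0 ∉ P₀.flatten → p (k - 2) ∉ P₀.flatten →
      Col B' c y₁ (p 0) → Col B' c y₂ (p 0) →
      Force k n 2 B' (fun B' => ∃ P' z, Loose B' E P' ∧ P'.length + 1 = P₀.length ∧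
      (z = p 0 ∨ z = p (k - 2)) ∧ P'.flatten.Perm (z :: P₀.flatten)) := by
    intro B' hB c m₁ m₂ P₀ P' y₁ y₂ f₁ f₂ g₁ g₂ hL hperm h0 h1 c₁ c₂
    refine Force.common hk (hp.red_mono hB) y₁ y₂ (ne _ g₁) (ne _ g₂) c c₁ c₂
      fun B2 hB2 j hj b₁ b₂ => Force.done ⟨_, p j, ((hL.mono (hB.trans hB2)).perm hperm).join f₁ f₂
        b₁ b₂ ?_, ?_, ?_, ?_⟩
    · intro hmem
      have := (hperm.flatten.mem_iff).2 hmem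
      rcases hj with rfl | rfl
      · exact h0 this
      · exact h1 this
    · rw [hperm.length_eq]; simp
    · rcases hj with rfl | rfl
      · exact Or.inl rfl
      · exact Or.inr rfl
    · exact (flatten_join_perm _).trans (List.Perm.cons _ hperm.flatten.symm)
  refine Force.testCol x₁ (p 0) (ne _ E₁ 0 (by omega)) fun c₁ B1 hB1 C1 => ?_
  refine Force.testCol x₂ (p 0) (ne _ E₂ 0 (by omega)) fun c₂ B2 hB2 C2 => ?_
  refine Force.testCol x₃ (p 0) (ne _ E₃ 0 (by omega)) fun c₃ B3 hB3 C3 => ?_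
  have hB := hB1.trans (hB2.trans hB3)
  replace C1 := C1.mono (hB2.trans hB3)
  replace C2 := C2.mono hB3
  by_cases h12 : c₂ = c₁
  · subst h12
    exact key B3 hB c₂ l₁ l₂ _ _ x₁ x₂ e₁ e₂ E₁ E₂ hP (List.Perm.refl _) h0 h1 C1 C2
  by_cases h13 : c₃ = c₁
  · subst h13
    exact key B3 hB c₃ l₁ l₃ _ (l₂ :: P) x₁ x₃ e₁ e₃ E₁ E₃ hP
      (List.Perm.cons _ (List.Perm.swap _ _ _)) h0 h1 C1 C3
  obtain rfl : c₃ = c₂ := by rw [bool_eq_not h12, bool_eq_not h13]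
  refine key B3 hB c₃ l₂ l₃ _ (l₁ :: P) x₂ x₃ e₂ e₃ E₂ E₃ hP ?_ h0 h1 C2 C3
  exact (List.Perm.swap _ _ _).trans (List.Perm.cons _ (List.Perm.swap _ _ _))

end

/-- `C` red paths on `k - 1` vertices with distinct ends. -/
structure Supply (k : ℕ) (B : Board) (C : ℕ) (p : ℕ → ℕ → ℕ) : Prop where
  pth : ∀ j < C, IsPth (Red B) (k - 1) (p j)
  ne : ∀ i < C, ∀ j < C, i ≠ j → ∀ a b, (a = 0 ∨ a = k - 2) → (b = 0 ∨ b = k - 2) → p i a ≠ p j b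

theorem Supply.mono {B B' : Board} {C : ℕ} {p : ℕ → ℕ → ℕ} (h : Supply k B C p) (hB : B ≤ B') :
    Supply k B' C p := ⟨fun j hj => (h.pth j hj).red_mono hB, h.ne⟩

theorem exists_supply (hk : 3 ≤ k) {B : Board} {b : ℕ} {s : ℕ → ℕ}
    (hs : IsPth (Red B) (2 * ((k - 2) * b)) s) :
    ∃ p, Supply k B ((k - 2) * b) p ∧ ∀ j < (k - 2) * b, ∀ i < k - 1,
      p j i ∈ verts (2 * ((k - 2) * b)) s := by
  obtain ⟨e, rfl⟩ : ∃ e, k = e + 3 := ⟨k - 3, by omega⟩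
  simp only [show e + 3 - 2 = e + 1 by omega, show e + 3 - 1 = e + 2 by omega] at *
  have bound : ∀ j < (e + 1) * b, ∀ i < e + 2,
      2 * ((e + 1) * (j / (e + 1))) + j % (e + 1) + i < 2 * ((e + 1) * b) := by
    intro j hj i hi
    have h1 : j / (e + 1) < b := Nat.div_lt_of_lt_mul hj
    have h2 : j % (e + 1) < e + 1 := Nat.mod_lt _ (by omega)
    have h3 : (e + 1) * (j / (e + 1) + 1) ≤ (e + 1) * b := Nat.mul_le_mul_left _ h1
    rw [Nat.mul_add, Nat.mul_one] at h3
    omega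
  have key : ∀ i a j b, (a = 0 ∨ a = e + 1) → (b = 0 ∨ b = e + 1) →
      2 * ((e + 1) * (i / (e + 1))) + i % (e + 1) + a =
      2 * ((e + 1) * (j / (e + 1))) + j % (e + 1) + b → i = j := by
    intro i a j b ha hb h
    have hi : i % (e + 1) < e + 1 := Nat.mod_lt _ (by omega)
    have hj : j % (e + 1) < e + 1 := Nat.mod_lt _ (by omega)
    have h1 := Nat.div_add_mod i (e + 1)
    have h2 := Nat.div_add_mod j (e + 1)
    have conv : ∀ q r a, r < e + 1 → (a = 0 ∨ a = e + 1) →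
        (2 * ((e + 1) * q) + r + a) / (e + 1) / 2 = q ∧
        (2 * ((e + 1) * q) + r + a) % (e + 1) = r := by
      intro q r a hr ha
      have : ∃ c, (c = 0 ∨ c = 1) ∧ 2 * ((e + 1) * q) + r + a = r + (e + 1) * (2 * q + c) := by
        rcases ha with rfl | rfl
        · exact ⟨0, by simp, by ring⟩
        · exact ⟨1, by simp, by ring⟩
      obtain ⟨c, hc, h⟩ := this
      rw [h, Nat.add_mul_div_left _ _ (by omega), Nat.div_eq_of_lt hr, Nat.add_mul_mod_self_left,
        Nat.mod_eq_of_lt hr]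
      omega
    have c1 := conv (i / (e + 1)) _ a hi ha
    have c2 := conv (j / (e + 1)) _ b hj hb
    rw [h] at c1
    rw [← h1, ← h2, ← c1.1, ← c1.2, c2.1, c2.2]
  refine ⟨fun j i => s (2 * ((e + 1) * (j / (e + 1))) + j % (e + 1) + i), ⟨fun j hj => ?_, ?_⟩, ?_⟩
  · refine hs.shift _ ?_
    have := bound j hj (e + 1) (by omega)
    omega
  · intro i hi j hj hij a c ha hc h
    exact hij (key i a j c ha hc (hs.inj _ (bound i hi a (by omega)) _ (bound j hj c (by omega)) h))
  · intro j hj i hi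
    exact ⟨_, bound j hj i hi, rfl⟩

section

variable {B : Board} {Q : Board → Prop}

theorem Force.mergeAll (hk : 3 ≤ k) {E : Set ℕ} {P : List (List ℕ)} (hP : Loose B E P) {C : ℕ}
    {p : ℕ → ℕ → ℕ} (hp : Supply k B C p) (hC : P.length ≤ C + 2)
    (hE : ∀ j < C, ∀ i < k - 1, p j i ∈ E)
    (hd : ∀ j < C, p j 0 ∉ P.flatten ∧ p j (k - 2) ∉ P.flatten) :
    Force k n (5 * C) B (fun B' => ∃ P', Loose B' E P' ∧ P'.length ≤ 2 ∧
      P.flatten.length ≤ P'.flatten.length ∧ ∀ x ∈ P'.flatten, x ∈ P.flatten ∨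
        ∃ j < C, ∃ i < k - 1, x = p j i) := by
  induction C generalizing B P with
  | zero => exact Force.done ⟨P, hP, hC, le_rfl, fun x hx => Or.inl hx⟩
  | succ C ih =>
    have hp' : Supply k B C p :=
      ⟨fun j hj => hp.pth j (by omega), fun i hi j hj => hp.ne i (by omega) j (by omega)⟩
    by_cases hlen : P.length ≤ C + 2
    · refine Force.mono (t := 5 * C) ?_ (by omega)
      refine (ih hP hp' hlen (fun j hj => hE j (by omega)) fun j hj => hd j (by omega)).imp ?_
      rintro B' - ⟨P', h1, h2, h3, h4⟩
      refine ⟨P', h1, h2, h3, fun x hx => (h4 x hx).imp id ?_⟩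
      rintro ⟨j, hj, h⟩
      exact ⟨j, by omega, h⟩
    · refine (Force.merge hk hP (by omega) (hp.pth C (by omega)) (hE C (by omega))
        (hd C (by omega)).1 (hd C (by omega)).2).bind' (t' := 5 * C) (by omega) ?_
      rintro B1 hB1 ⟨P₁, z, h1, h2, h3, h4⟩
      have hz : ∃ c, (c = 0 ∨ c = k - 2) ∧ z = p C c := by
        rcases h3 with rfl | rfl
        · exact ⟨0, Or.inl rfl, rfl⟩
        · exact ⟨k - 2, Or.inr rfl, rfl⟩
      obtain ⟨c, hc, rfl⟩ := hz
      refine (ih h1 (hp'.mono hB1) (by omega) (fun j hj => hE j (by omega)) fun j hj => ?_).imp ?_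
      · have := hd j (by omega)
        rw [h4.mem_iff, h4.mem_iff, List.mem_cons, List.mem_cons]
        exact ⟨fun h => h.elim (hp.ne j (by omega) C (by omega) (by omega) _ _ (Or.inl rfl) hc)
          this.1, fun h => h.elim (hp.ne j (by omega) C (by omega) (by omega) _ _ (Or.inr rfl) hc)
          this.2⟩
      · rintro B' - ⟨P', g1, g2, g3, g4⟩
        refine ⟨P', g1, g2, ?_, fun x hx => ?_⟩
        · have := h4.length_eq
          rw [List.length_cons] at this
          omega
        · rcases g4 x hx with h | ⟨j, hj, h⟩
          · rw [h4.mem_iff, List.mem_cons] at h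
            exact h.symm.imp id fun h => ⟨C, by omega, c, by omega, h⟩
          · exact Or.inr ⟨j, by omega, h⟩

theorem Loose.join' {E : Set ℕ} {P : List (List ℕ)} {l₁ l₂ : List ℕ} (h : Loose B E (l₁ :: l₂ :: P))
    {x y : ℕ} (hx : l₁.head? = some x) (hy : l₂.head? = some y) (hxy : Blu B x y) :
    Loose B E ((l₁.reverse ++ l₂) :: P) := by
  have h1 := h.ne l₁ (by simp)
  have h2 := h.ne l₂ (by simp)
  have hp : ((l₁.reverse ++ l₂) :: P).flatten.Perm (l₁ :: l₂ :: P).flatten := by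
    simp only [List.flatten_cons]
    rw [List.append_assoc]
    exact (List.reverse_perm _).append_right _
  refine ⟨hp.nodup_iff.2 h.nodup, ?_, ?_, ?_, ?_⟩
  · intro l hl
    rcases List.mem_cons.1 hl with rfl | hl
    · simp [h1]
    · exact h.ne l (by simp [hl])
  · intro l hl
    rcases List.mem_cons.1 hl with rfl | hl
    · have h1 := (h.bpath (l := l₁) (by simp)).reverse.chain
      have h2 := (h.bpath (l := l₂) (by simp)).chain
      rw [List.isChain_append]
      refine ⟨h1, h2, ?_⟩
      rw [List.getLast?_reverse, hx, hy]
      simpa using hxy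
    · exact h.chain l (by simp [hl])
  · intro l hl
    rcases List.mem_cons.1 hl with rfl | hl
    · intro w hw
      obtain ⟨a, ha⟩ := exists_last h1
      rw [List.head?_append, List.head?_reverse, ha] at hw
      exact h.last l₁ (by simp) w (by rw [ha]; simpa using hw)
    · exact h.head l (by simp [hl])
  · intro l hl
    rcases List.mem_cons.1 hl with rfl | hl
    · intro w hw
      refine h.last l₂ (by simp) w ?_
      rwa [List.getLast?_append_of_ne_nil _ h2] at hw
    · exact h.last l (by simp [hl])

theorem Loose.cons_vertex {E : Set ℕ} {P : List (List ℕ)} {l : List ℕ} (h : Loose B E (l :: P))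
    {x y : ℕ} (hy : l.head? = some y) (hxy : Blu B x y) (hx : x ∉ (l :: P).flatten) (hE : x ∉ E) :
    Loose B E ((x :: l) :: P) := by
  have h1 := h.ne l (by simp)
  refine ⟨?_, ?_, ?_, ?_, ?_⟩
  · rw [List.flatten_cons, List.cons_append, ← List.flatten_cons]
    exact List.nodup_cons.2 ⟨hx, h.nodup⟩
  · intro l hl
    rcases List.mem_cons.1 hl with rfl | hl
    · simp
    · exact h.ne l (by simp [hl])
  · intro l hl
    rcases List.mem_cons.1 hl with rfl | hl
    · rw [List.isChain_cons, hy]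
      exact ⟨by simpa using hxy, h.chain _ (by simp)⟩
    · exact h.chain l (by simp [hl])
  · intro l hl
    rcases List.mem_cons.1 hl with rfl | hl
    · simpa using hE
    · exact h.head l (by simp [hl])
  · intro l' hl
    rcases List.mem_cons.1 hl with rfl | hl
    · intro w hw
      obtain ⟨a, ha⟩ := exists_last h1
      rw [List.getLast?_cons, ha] at hw
      exact h.last l (by simp) w (by rw [ha]; simpa using hw)
    · exact h.last l' (by simp [hl])

theorem Loose.single {E : Set ℕ} {P : List (List ℕ)} (h : Loose B E P)
    {x : ℕ} (hx : x ∉ P.flatten) (hE : x ∉ E) :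
    Loose B E ([x] :: P) := by
  refine ⟨?_, ?_, ?_, ?_, ?_⟩
  · rw [List.flatten_cons]
    exact List.nodup_cons.2 ⟨hx, h.nodup⟩
  all_goals
    intro l hl
    rcases List.mem_cons.1 hl with rfl | hl
  · simp
  · exact h.ne l hl
  · simp
  · exact h.chain l hl
  · simpa using hE
  · exact h.head l hl
  · simpa using hE
  · exact h.last l hl

/-- The heads of the two paths are joined in red. -/
def HeadRed (B : Board) (l l' : List ℕ) : Prop := Red B (l.headD 0) (l'.headD 0)

theorem headD_of_head? {l : List ℕ} {x : ℕ} (h : l.head? = some x) : l.headD 0 = x := by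
  cases l <;> simp_all

/-- Builder inserts a blue path into a stack of blue paths. -/
theorem Force.absorb {E : Set ℕ} {c : ℕ} (S : List (List ℕ)) (cur : List ℕ)
    (hL : Loose B E (cur :: S)) (hS : S.IsChain (HeadRed B))
    (h : ∀ B', B ≤ B' → ∀ S', Loose B' E S' → S'.IsChain (HeadRed B') →
      S'.flatten.Perm (cur :: S).flatten → S'.length ≤ S.length + 1 →
      Force k n (c + S'.length) B' Q) : Force k n (c + S.length + 2) B Q := by
  induction S generalizing B cur with
  | nil => exact (h B le_rfl [cur] hL (by simp) (List.Perm.refl _) (by simp)).mono (by simp)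
  | cons l S ih =>
    obtain ⟨x, hx⟩ := exists_head (hL.ne cur (by simp))
    obtain ⟨y, hy⟩ := exists_head (hL.ne l (by simp))
    have hxy : x ≠ y := by
      have := hL.nodup
      rw [List.flatten_cons, List.flatten_cons, List.nodup_append] at this
      refine this.2.2 x (List.mem_of_mem_head? (by rw [hx]; rfl)) y ?_
      exact List.mem_append_left _ (List.mem_of_mem_head? (by rw [hy]; rfl))
    refine Force.test x y hxy (fun B' hB hr => ?_) fun B' hB hb => ?_
    · refine (h B' hB (cur :: l :: S) (hL.mono hB) ?_ (List.Perm.refl _) (by simp)).mono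
        (by simp; omega)
      refine List.isChain_cons_cons.2 ⟨?_, hS.imp fun _ _ h => Red.mono h hB⟩
      rw [HeadRed, headD_of_head? hx, headD_of_head? hy]
      exact hr
    · refine Force.mono (t := c + S.length + 2) ?_ (by simp only [List.length_cons]; omega)
      refine ih (cur.reverse ++ l) ((hL.mono hB).join' hx hy hb)
        (hS.tail.imp fun _ _ h => Red.mono h hB) fun B2 hB2 S' h1 h2 h3 h4 => ?_
      refine h B2 (hB.trans hB2) S' h1 h2 (h3.trans ?_) (by simp; omega)
      simp only [List.flatten_cons]
      rw [List.append_assoc]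
      exact (List.reverse_perm _).append_right _

theorem exists_fresh (A : List ℕ) : ∃ x, x ∉ A := by
  obtain ⟨x, hx⟩ := Infinite.exists_notMem_finset A.toFinset
  exact ⟨x, by simpa using hx⟩

/-- Builder puts `r` further vertices into a stack of at most `k - 1` blue paths. -/
theorem Force.stack (hk : 3 ≤ k) (A : List ℕ) (r : ℕ) (S : List (List ℕ))
    (hL : Loose B {x | x ∈ A} S) (hS : S.IsChain (HeadRed B)) (hA : ∀ x ∈ S.flatten, x ∉ A)
    (hlen : S.length ≤ k - 1) :
    Force k n (2 * r + S.length) B (fun B' => ∃ S', Loose B' {x | x ∈ A} S' ∧ S'.length ≤ k - 1 ∧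
      S'.flatten.length = S.flatten.length + r ∧ ∀ x ∈ S'.flatten, x ∉ A) := by
  induction r generalizing B S with
  | zero => exact Force.done ⟨S, hL, hlen, rfl, hA⟩
  | succ r ih =>
    obtain ⟨x, hx⟩ := exists_fresh (A ++ S.flatten)
    rw [List.mem_append, not_or] at hx
    obtain ⟨hxA, hxS⟩ := hx
    have step : ∀ B', B ≤ B' → ∀ S', Loose B' {x | x ∈ A} S' → S'.IsChain (HeadRed B') →
        S'.flatten.Perm (x :: S.flatten) → S'.length ≤ k - 1 →
        Force k n (2 * r + S'.length) B' (fun B' => ∃ S', Loose B' {x | x ∈ A} S' ∧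
          S'.length ≤ k - 1 ∧
          S'.flatten.length = S.flatten.length + (r + 1) ∧ ∀ x ∈ S'.flatten, x ∉ A) := by
      intro B' hB S' h1 h2 h3 h4
      refine (ih S' h1 h2 ?_ h4).imp ?_
      · intro y hy
        rcases List.mem_cons.1 (h3.mem_iff.1 hy) with rfl | hy
        · exact hxA
        · exact hA y hy
      · rintro B'' - ⟨S'', g1, g2, g3, g4⟩
        refine ⟨S'', g1, g2, ?_, g4⟩
        have := h3.length_eq
        rw [List.length_cons] at this
        omega
    match S with
    | [] =>
      exact (step B le_rfl [[x]] (hL.single hxS hxA) (by simp) (by simp) (by simp; omega)).mono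
        (by simp only [List.length_cons]; omega)
    | l :: S =>
      obtain ⟨y, hy⟩ := exists_head (hL.ne l (by simp))
      have hyl : y ∈ l := List.mem_of_mem_head? (by rw [hy]; rfl)
      have hxy : x ≠ y := by
        rintro rfl
        exact hxS (by simp [hyl])
      refine Force.mono (t := (2 * r + S.length + 2) + 1) ?_ (by simp; omega)
      refine Force.test x y hxy (fun B1 hB1 hr => ?_) fun B1 hB1 hb => ?_
      · by_cases hlt : S.length + 1 < k - 1
        · refine (step B1 hB1 ([x] :: l :: S) ((hL.mono hB1).single hxS hxA) ?_ (by simp)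
            (by simp; omega)).mono (by simp; omega)
          refine List.isChain_cons_cons.2 ⟨?_, hS.imp fun _ _ h => Red.mono h hB1⟩
          rw [HeadRed, headD_of_head? hy]
          exact hr
        · simp only [List.length_cons] at hlen
          have hl1 : S.length + 1 = k - 1 := by omega
          obtain ⟨S₀, z, rfl⟩ : ∃ S₀ z, S = S₀ ++ [z] :=
            ⟨S.dropLast, S.getLast (by rintro rfl; simp at hl1; omega),
              (List.dropLast_append_getLast _).symm⟩
          have hmem : ∀ m ∈ (l :: (S₀ ++ [z])), m.headD 0 ∈ m := by
            intro m hm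
            obtain ⟨w, hw⟩ := exists_head (hL.ne m hm)
            rw [headD_of_head? hw]
            exact List.mem_of_mem_head? (by rw [hw]; rfl)
          have hlenE : (l :: (S₀ ++ [z])).length = k - 1 := by rw [List.length_cons]; omega
          have hpth : IsPth (Red B1) (k - 1)
              (fun i => ((l :: (S₀ ++ [z])).getD i []).headD 0) := by
            constructor
            · intro i hi j hj hij
              rw [← hlenE] at hi hj
              rw [List.getD_eq_getElem _ _ hi, List.getD_eq_getElem _ _ hj] at hij
              by_contra hne
              have hpw := (List.nodup_flatten.1 hL.nodup).2
              have hd : ∀ a b (ha : a < (l :: (S₀ ++ [z])).length)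
                  (hb : b < (l :: (S₀ ++ [z])).length), a < b →
                  List.Disjoint (l :: (S₀ ++ [z]))[a] (l :: (S₀ ++ [z]))[b] :=
                fun a b ha hb hab => List.pairwise_iff_getElem.1 hpw a b ha hb hab
              have m1 := hmem _ (List.getElem_mem hi)
              have m2 := hmem _ (List.getElem_mem hj)
              rcases Nat.lt_or_gt_of_ne hne with h | h
              · exact hd i j hi hj h m1 (hij ▸ m2)
              · exact hd j i hj hi h m2 (hij ▸ m1)
            · intro i hi
              rw [← hlenE] at hi
              rw [List.getD_eq_getElem _ _ (by omega), List.getD_eq_getElem _ _ hi]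
              exact Red.mono (List.isChain_iff_getElem.1 hS i hi) hB1
          have hxp : ∀ j < k - 1, x ≠ ((l :: (S₀ ++ [z])).getD j []).headD 0 := by
            intro j hj h
            rw [← hlenE] at hj
            rw [List.getD_eq_getElem _ _ hj] at h
            refine hxS (List.mem_flatten.2 ⟨_, List.getElem_mem hj, ?_⟩)
            rw [h]
            exact hmem _ (List.getElem_mem hj)
          refine Force.farEnd hk hpth x hxp ?_ fun B2 hB2 hb => ?_
          · simp only [List.getD_cons_zero]
            rw [headD_of_head? hy]; exact hr
          have hlast : ((l :: (S₀ ++ [z])).getD (k - 2) []).headD 0 = z.headD 0 := by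
            have : k - 2 = S₀.length + 1 := by simp at hl1; omega
            rw [this]
            simp
          simp only [hlast] at hb
          obtain ⟨w, hw⟩ := exists_head (hL.ne z (by simp))
          rw [headD_of_head? hw] at hb
          have hB := hB1.trans hB2
          have hperm : (l :: (S₀ ++ [z])).Perm (z :: l :: S₀) := by
            rw [← List.cons_append]
            exact List.perm_append_singleton _ _
          refine (step B2 hB ((x :: z) :: l :: S₀) ?_ ?_ ?_ ?_).mono (by simp; omega)
          · refine ((hL.mono hB).perm hperm).cons_vertex hw hb.symm ?_ hxA
            rw [← hperm.flatten.mem_iff]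
            exact hxS
          · refine List.isChain_cons_cons.2 ⟨?_, ?_⟩
            · rw [HeadRed, headD_of_head? hy]
              exact hr.mono hB2
            · have : (l :: S₀).IsChain (HeadRed B) := by
                rw [← List.cons_append] at hS
                exact (List.isChain_append.1 hS).1
              exact this.imp fun _ _ h => Red.mono h hB
          · rw [List.flatten_cons, List.cons_append, ← List.flatten_cons]
            exact List.Perm.cons _ hperm.flatten.symm
          · simp at hl1 ⊢; omega
      · refine Force.absorb S (x :: l) ((hL.mono hB1).cons_vertex hy hb hxS hxA)
          (hS.tail.imp fun _ _ h => Red.mono h hB1) fun B2 hB2 S' h1 h2 h3 h4 => ?_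
        refine step B2 (hB1.trans hB2) S' h1 h2 h3 ?_
        simp only [List.length_cons] at hlen
        omega

end

section

variable {B : Board} {Q : Board → Prop} {h p : ℕ → ℕ}

/-- The upper bound for the number of rounds in `Force.closeList`. -/
def closeCost (k n : ℕ) : ℕ := Nat.log 2 n + 2 * k + 9

theorem block_verts {m o H : ℕ} (ho : o + m ≤ H) {x : ℕ} (hx : x ∈ verts m fun i => h (o + i)) :
    x ∈ verts H h := by
  obtain ⟨i, hi, rfl⟩ := hx
  exact mem_verts (by omega)

theorem block_disjoint {r : ℕ → ℕ → Prop} {H a m b m' : ℕ} (hh : IsPth r H h) (ha : a + m ≤ H)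
    (hb : b + m' ≤ H) (hab : a + m ≤ b ∨ b + m' ≤ a) {x : ℕ}
    (hx : x ∈ verts m fun i => h (a + i)) : x ∉ verts m' fun i => h (b + i) := by
  rintro ⟨j, hj, h'⟩
  obtain ⟨i, hi, rfl⟩ := hx
  have := hh.inj _ (by omega) _ (by omega) h'
  omega

theorem Force.closeLink (hk : 3 ≤ k) (hko : Odd k) (hn : 8 * k ≤ n) {l c : List ℕ} {V : Set ℕ}
    {a d : ℕ} (hl : BPath B l) (ha : l.head? = some a) (hd : l.getLast? = some d)
    (hc : Link B V d a c) (hV : ∀ x ∈ V, x ∉ l) (hlen : n ≤ l.length + 1)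
    (hp : IsPth (Red B) (k - 1) p) (hlW : ∀ x ∈ l, x ∉ verts (k - 1) p)
    (hVW : ∀ x ∈ V, x ∉ verts (k - 1) p) : Force k n (closeCost k n) B Q := by
  have hcc := hc.chain
  rw [List.cons_append, List.isChain_cons, List.isChain_append] at hcc
  obtain ⟨hc1, hc2, -, hc3⟩ := hcc
  obtain ⟨e, he⟩ := exists_last hc.ne
  have hne : l ≠ [] := by rintro rfl; simp at ha
  have hcl : 0 < c.length := List.length_pos_of_ne_nil hc.ne
  refine Force.closeCycle hk hko hn (l := l ++ c) (g := a) (q := e) ⟨?_, ?_⟩ ?_ ?_ ?_ ?_ hp ?_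
  · rw [List.nodup_append]
    refine ⟨hl.nodup, hc.nodup, ?_⟩
    rintro x hx y hy rfl
    exact hV x (hc.mem x hy) hx
  · rw [List.isChain_append]
    refine ⟨hl.chain, hc2, ?_⟩
    rw [hd]
    obtain ⟨c0, c', rfl⟩ := List.exists_cons_of_ne_nil hc.ne
    simpa using hc1
  · rw [List.length_append]; omega
  · rw [List.head?_append, ha]; rfl
  · rw [List.getLast?_append, he]; rfl
  · rw [he] at hc3; simpa using hc3
  · intro x hx
    rcases List.mem_append.1 hx with hx | hx
    · exact hlW x hx
    · exact hVW x (hc.mem x hx)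

theorem Force.closeTwo (hk : 3 ≤ k) (hko : Odd k) (hn : 8 * k ≤ n) {l₁ l₂ c₁ c₂ : List ℕ}
    {V₁ V₂ : Set ℕ} {a b c d : ℕ} (h₁ : BPath B l₁) (h₂ : BPath B l₂) (ha : l₁.head? = some a)
    (hb : l₁.getLast? = some b) (hc : l₂.head? = some c) (hd : l₂.getLast? = some d)
    (hc₁ : Link B V₁ b c c₁) (hc₂ : Link B V₂ d a c₂) (hdis : l₁.Disjoint l₂)
    (hV₁ : ∀ x ∈ V₁, x ∉ l₁ ∧ x ∉ l₂) (hV₂ : ∀ x ∈ V₂, x ∉ l₁ ∧ x ∉ l₂)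
    (hV : ∀ x ∈ V₁, x ∉ V₂) (hlen : n ≤ l₁.length + l₂.length + 2)
    (hp : IsPth (Red B) (k - 1) p) (hlW₁ : ∀ x ∈ l₁, x ∉ verts (k - 1) p)
    (hlW₂ : ∀ x ∈ l₂, x ∉ verts (k - 1) p) (hVW₁ : ∀ x ∈ V₁, x ∉ verts (k - 1) p)
    (hVW₂ : ∀ x ∈ V₂, x ∉ verts (k - 1) p) : Force k n (closeCost k n) B Q := by
  have hcl : 0 < c₁.length := List.length_pos_of_ne_nil hc₁.ne
  refine Force.closeLink hk hko hn (h₁.link h₂ hb hc hc₁ hdis hV₁) ?_ ?_ hc₂ ?_ ?_ hp ?_ hVW₂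
  · rw [List.head?_append, ha]; rfl
  · rw [List.getLast?_append, List.getLast?_append, hd]; rfl
  · intro x hx h'
    rcases List.mem_append.1 h' with h' | h'
    · exact (hV₂ x hx).1 h'
    rcases List.mem_append.1 h' with h' | h'
    · exact hV x (hc₁.mem x h') hx
    · exact (hV₂ x hx).2 h'
  · simp only [List.length_append]; omega
  · intro x hx
    rcases List.mem_append.1 hx with h' | h'
    · exact hlW₁ x h'
    rcases List.mem_append.1 h' with h' | h'
    · exact hVW₁ x (hc₁.mem x h')
    · exact hlW₂ x h'

/-- Builder closes a cycle through at most two blue paths, using two paths with red chords. -/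
theorem Force.closeAll (hk : 3 ≤ k) (hko : Odd k) (hn : 8 * k ≤ n)
    (hh : IsPth (Red B) (3 * k + 1) h) {E : Set ℕ} {P : List (List ℕ)} (hP : Loose B E P)
    (h2 : P.length ≤ 2) (hlen : n ≤ P.flatten.length + 1) {u₁ v₁ u₂ v₂ : ℕ} {K₁ K₂ : List ℕ}
    (hK₁ : KPath B u₁ v₁ K₁) (hK₂ : KPath B u₂ v₂ K₂) (hK : K₁.Disjoint K₂)
    (hP₁ : ∀ x ∈ P.flatten, x ∉ K₁) (hP₂ : ∀ x ∈ P.flatten, x ∉ K₂)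
    (hW : ∀ x ∈ P.flatten, x ∉ verts (k - 1) fun i => h (0 + i))
    (hD₁ : ∀ x ∈ P.flatten, x ∉ verts (k + 1) fun i => h (k - 1 + i))
    (hD₂ : ∀ x ∈ P.flatten, x ∉ verts (k + 1) fun i => h (2 * k + i))
    (hKd₁ : ∀ x ∈ K₁, x ∉ verts (3 * k + 1) h) (hKd₂ : ∀ x ∈ K₂, x ∉ verts (3 * k + 1) h) :
    Force k n (38 + closeCost k n) B Q := by
  have pW := hh.shift (m' := k - 1) 0 (by omega)
  have pD₁ := hh.shift (m' := k + 1) (k - 1) (by omega)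
  have pD₂ := hh.shift (m' := k + 1) (2 * k) (by omega)
  have W₁ : ∀ x ∈ (verts (k + 1) fun i => h (k - 1 + i)) ∪ {x | x ∈ K₁},
      x ∉ verts (k - 1) fun i => h (0 + i) := by
    rintro x (hx | hx)
    · exact block_disjoint hh (by omega) (by omega) (by omega) hx
    · exact fun h' => hKd₁ x hx (block_verts (by omega) h')
  have W₂ : ∀ x ∈ (verts (k + 1) fun i => h (2 * k + i)) ∪ {x | x ∈ K₂},
      x ∉ verts (k - 1) fun i => h (0 + i) := by
    rintro x (hx | hx)
    · exact block_disjoint hh (by omega) (by omega) (by omega) hx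
    · exact fun h' => hKd₂ x hx (block_verts (by omega) h')
  have V₁ : ∀ x ∈ (verts (k + 1) fun i => h (k - 1 + i)) ∪ {x | x ∈ K₁}, x ∉ P.flatten := by
    rintro x (hx | hx) h'
    · exact hD₁ x h' hx
    · exact hP₁ x h' hx
  have V₂ : ∀ x ∈ (verts (k + 1) fun i => h (2 * k + i)) ∪ {x | x ∈ K₂}, x ∉ P.flatten := by
    rintro x (hx | hx) h'
    · exact hD₂ x h' hx
    · exact hP₂ x h' hx
  have K₁D : ∀ x ∈ K₁, x ∉ verts (k + 1) fun i => h (k - 1 + i) :=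
    fun x hx h' => hKd₁ x hx (block_verts (by omega) h')
  have K₂D : ∀ x ∈ K₂, x ∉ verts (k + 1) fun i => h (2 * k + i) :=
    fun x hx h' => hKd₂ x hx (block_verts (by omega) h')
  match P with
  | [] =>
    rw [List.flatten_nil, List.length_nil] at hlen
    omega
  | [l] =>
    have hl : BPath B l := hP.bpath (by simp)
    obtain ⟨a, ha⟩ := exists_head (hP.ne l (by simp))
    obtain ⟨d, hd⟩ := exists_last (hP.ne l (by simp))
    have hal : a ∈ l := List.mem_of_mem_head? (by rw [ha]; rfl)
    have hdl : d ∈ l := List.mem_of_mem_getLast? (by rw [hd]; rfl)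
    simp only [List.flatten_cons, List.flatten_nil, List.append_nil] at *
    refine (Force.link hk hko pD₁ (hD₁ d hdl) (hD₁ a hal) hK₁ K₁D).bind'
      (t' := closeCost k n) (by omega) ?_
    rintro B' hB ⟨c, hc⟩
    exact Force.closeLink hk hko hn (hl.mono hB) ha hd hc V₁ hlen (pW.red_mono hB) hW W₁
  | [l₁, l₂] =>
    have hl₁ : BPath B l₁ := hP.bpath (by simp)
    have hl₂ : BPath B l₂ := hP.bpath (by simp)
    obtain ⟨a, ha⟩ := exists_head (hP.ne l₁ (by simp))
    obtain ⟨b, hb⟩ := exists_last (hP.ne l₁ (by simp))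
    obtain ⟨c, hc⟩ := exists_head (hP.ne l₂ (by simp))
    obtain ⟨d, hd⟩ := exists_last (hP.ne l₂ (by simp))
    have hdis : l₁.Disjoint l₂ := by
      have := hP.nodup
      simp only [List.flatten_cons, List.flatten_nil, List.append_nil] at this
      exact (List.nodup_append'.1 this).2.2
    have hal : a ∈ [l₁, l₂].flatten := by
      simp [show a ∈ l₁ from List.mem_of_mem_head? (by rw [ha]; rfl)]
    have hbl : b ∈ [l₁, l₂].flatten := by
      simp [show b ∈ l₁ from List.mem_of_mem_getLast? (by rw [hb]; rfl)]
    have hcl : c ∈ [l₁, l₂].flatten := by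
      simp [show c ∈ l₂ from List.mem_of_mem_head? (by rw [hc]; rfl)]
    have hdl : d ∈ [l₁, l₂].flatten := by
      simp [show d ∈ l₂ from List.mem_of_mem_getLast? (by rw [hd]; rfl)]
    have m₁ : ∀ x ∈ l₁, x ∈ [l₁, l₂].flatten := fun x hx => by simp [hx]
    have m₂ : ∀ x ∈ l₂, x ∈ [l₁, l₂].flatten := fun x hx => by simp [hx]
    refine (Force.link hk hko pD₁ (hD₁ b hbl) (hD₁ c hcl) hK₁ K₁D).bind'
      (t' := 19 + closeCost k n) (by omega) ?_
    rintro B₁ hB₁ ⟨c₁, hc₁⟩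
    refine (Force.link hk hko (pD₂.red_mono hB₁) (hD₂ d hdl) (hD₂ a hal) (hK₂.mono hB₁) K₂D).bind'
      (t' := closeCost k n) (by omega) ?_
    rintro B₂ hB₂ ⟨c₂, hc₂⟩
    have hB := hB₁.trans hB₂
    refine Force.closeTwo hk hko hn (hl₁.mono hB) (hl₂.mono hB) ha hb hc hd (hc₁.mono hB₂) hc₂ hdis
      (fun x hx => ⟨fun h' => V₁ x hx (m₁ x h'), fun h' => V₁ x hx (m₂ x h')⟩)
      (fun x hx => ⟨fun h' => V₂ x hx (m₁ x h'), fun h' => V₂ x hx (m₂ x h')⟩) ?_ ?_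
      (pW.red_mono hB) (fun x hx => hW x (m₁ x hx)) (fun x hx => hW x (m₂ x hx)) W₁ W₂
    · rintro x (hx | hx) (hx' | hx')
      · exact block_disjoint hh (by omega) (by omega) (by omega) hx hx'
      · exact hKd₂ x hx' (block_verts (by omega) hx)
      · exact hKd₁ x hx (block_verts (by omega) hx')
      · exact hK hx hx'
    · simp only [List.flatten_cons, List.flatten_nil, List.append_nil, List.length_append] at hlen
      omega
  | _ :: _ :: _ :: _ => simp at h2

theorem Loose.of_disjoint {E : Set ℕ} {P : List (List ℕ)} (hc : ∀ l ∈ P, l.IsChain (Blu B))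
    (hnd : P.flatten.Nodup) (hE : ∀ x ∈ P.flatten, x ∉ E) :
    ∃ P', Loose B E P' ∧ P'.length ≤ P.length ∧ P'.flatten = P.flatten := by
  have hf : (P.filter fun l => !l.isEmpty).flatten = P.flatten := List.flatten_filter_not_isEmpty
  refine ⟨P.filter fun l => !l.isEmpty, ⟨?_, ?_, ?_, ?_, ?_⟩, List.length_filter_le _ _, hf⟩
  · rwa [hf]
  · intro l hl
    simpa using (List.mem_filter.1 hl).2
  · intro l hl
    exact hc l (List.mem_filter.1 hl).1
  · intro l hl x hx
    exact hE x (List.mem_flatten.2 ⟨l, (List.mem_filter.1 hl).1, List.mem_of_mem_head? hx⟩)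
  · intro l hl x hx
    exact hE x (List.mem_flatten.2 ⟨l, (List.mem_filter.1 hl).1, List.mem_of_mem_getLast? hx⟩)

theorem Loose.append {E : Set ℕ} {P P' : List (List ℕ)} (hP : Loose B E P) (hP' : Loose B E P')
    (hd : ∀ x ∈ P'.flatten, x ∉ P.flatten) : Loose B E (P ++ P') := by
  refine ⟨?_, ?_, ?_, ?_, ?_⟩
  · rw [List.flatten_append]
    exact hP.nodup.append hP'.nodup fun x hx hx' => hd x hx' hx
  all_goals
    intro l hl
    rcases List.mem_append.1 hl with hl | hl
  exacts [hP.ne l hl, hP'.ne l hl, hP.chain l hl, hP'.chain l hl, hP.head l hl, hP'.head l hl,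
    hP.last l hl, hP'.last l hl]

theorem Loose.mono_set {E E' : Set ℕ} {P : List (List ℕ)} (hP : Loose B E P)
    (hE : ∀ x ∈ E', x ∈ E) : Loose B E' P :=
  ⟨hP.nodup, hP.ne, hP.chain, fun l hl x hx h' => hP.head l hl x hx (hE x h'),
    fun l hl x hx h' => hP.last l hl x hx (hE x h')⟩

/-- The number of hub vertices that the endgame uses, with `(k - 2) * b` red paths for merging. -/
def hubSize (k b : ℕ) : ℕ := 3 * k + 1 + 2 * ((k - 2) * b)

theorem Force.mergeHub (hk : 3 ≤ k) {b : ℕ} (hh : IsPth (Red B) (hubSize k b) h)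
    {P : List (List ℕ)} (hP : Loose B (verts (hubSize k b) h) P)
    (hPd : ∀ x ∈ P.flatten, x ∉ verts (hubSize k b) h) (hC : P.length ≤ (k - 2) * b + 2) :
    Force k n (5 * ((k - 2) * b)) B (fun B' => ∃ P', Loose B' (verts (hubSize k b) h) P' ∧
      P'.length ≤ 2 ∧ P.flatten.length ≤ P'.flatten.length ∧ ∀ x ∈ P'.flatten, x ∈ P.flatten ∨
        x ∈ verts (2 * ((k - 2) * b)) fun i => h (3 * k + 1 + i)) := by
  have hs := hh.shift (m' := 2 * ((k - 2) * b)) (3 * k + 1) le_rfl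
  obtain ⟨p, hp, hpm⟩ := exists_supply hk hs
  have hE : ∀ j < (k - 2) * b, ∀ i < k - 1, p j i ∈ verts (hubSize k b) h :=
    fun j hj i hi => block_verts le_rfl (hpm j hj i hi)
  refine (Force.mergeAll hk hP hp hC hE fun j hj => ⟨fun h' => hPd _ h' (hE j hj 0 (by omega)),
    fun h' => hPd _ h' (hE j hj (k - 2) (by omega))⟩).imp ?_
  rintro B' - ⟨P', h1, h2, h3, h4⟩
  refine ⟨P', h1, h2, h3, fun x hx => (h4 x hx).imp id ?_⟩
  rintro ⟨j, hj, i, hi, rfl⟩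
  exact hpm j hj i hi

/-- Builder wins from a hub and two paths with red chords. -/
theorem Force.rich (hk : 3 ≤ k) (hko : Odd k) (hn : 8 * k ≤ n) {b : ℕ}
    (hh : IsPth (Red B) (hubSize k b) h) {P : List (List ℕ)} {u₁ v₁ u₂ v₂ : ℕ} {K₁ K₂ : List ℕ}
    (hP : ∀ l ∈ P, l.IsChain (Blu B)) (hK₁ : KPath B u₁ v₁ K₁) (hK₂ : KPath B u₂ v₂ K₂)
    (hnd : (P.flatten ++ (K₁ ++ K₂)).Nodup)
    (hd : ∀ x ∈ P.flatten ++ (K₁ ++ K₂), x ∉ verts (hubSize k b) h)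
    (hC : P.length + (k - 1) ≤ (k - 2) * b + 2) (r : ℕ) (hr : n ≤ P.flatten.length + r + 1) :
    Force k n (2 * r + 5 * ((k - 2) * b) + (38 + closeCost k n)) B Q := by
  obtain ⟨nd1, nd2, nd3⟩ := List.nodup_append'.1 hnd
  obtain ⟨-, -, nd4⟩ := List.nodup_append'.1 nd2
  have hd1 : ∀ x ∈ P.flatten, x ∉ verts (hubSize k b) h :=
    fun x hx => hd x (List.mem_append_left _ hx)
  have hd2 : ∀ x ∈ K₁, x ∉ verts (hubSize k b) h :=
    fun x hx => hd x (List.mem_append_right _ (List.mem_append_left _ hx))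
  have hd3 : ∀ x ∈ K₂, x ∉ verts (hubSize k b) h :=
    fun x hx => hd x (List.mem_append_right _ (List.mem_append_right _ hx))
  obtain ⟨P₀, hP₀, hP₀l, hP₀f⟩ := Loose.of_disjoint hP nd1 hd1
  rw [← hP₀f] at hr hd1 nd3
  have hA : ∀ x ∈ verts (hubSize k b) h,
      x ∈ (List.range (hubSize k b)).map h ++ (P₀.flatten ++ (K₁ ++ K₂)) := by
    rintro x ⟨i, hi, rfl⟩
    exact List.mem_append_left _ (List.mem_map.2 ⟨i, List.mem_range.2 hi, rfl⟩)
  refine Force.mono (t := (2 * r + 0) + (5 * ((k - 2) * b) + (38 + closeCost k n))) ?_ (by omega)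
  refine (Force.stack hk ((List.range (hubSize k b)).map h ++ (P₀.flatten ++ (K₁ ++ K₂))) r []
    ⟨by simp, by simp, by simp, by simp, by simp⟩ (by simp) (by simp) (by simp)).bind ?_
  rintro B₁ hB₁ ⟨S, hS, hS1, hS2, hS3⟩
  have hSd : ∀ x ∈ S.flatten, x ∉ verts (hubSize k b) h ∧ x ∉ P₀.flatten ∧ x ∉ K₁ ∧ x ∉ K₂ := by
    intro x hx
    have := hS3 x hx
    refine ⟨fun h' => this (hA x h'), ?_⟩
    simp only [List.mem_append, not_or] at this
    exact this.2
  have hL : Loose B₁ (verts (hubSize k b) h) (P₀ ++ S) :=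
    (hP₀.mono hB₁).append (hS.mono_set hA) fun x hx => (hSd x hx).2.1
  refine (Force.mergeHub hk (hh.red_mono hB₁) hL ?_ ?_).bind ?_
  · intro x hx
    rw [List.flatten_append, List.mem_append] at hx
    exact hx.elim (hd1 x) fun hx => (hSd x hx).1
  · rw [List.length_append]; omega
  rintro B₂ hB₂ ⟨P', h1, h2, h3, h4⟩
  have hB := hB₁.trans hB₂
  have hR : 3 * k + 1 ≤ hubSize k b := by rw [hubSize]; omega
  have hmem : ∀ x ∈ P'.flatten, (x ∈ P₀.flatten ∨ x ∈ S.flatten) ∨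
      x ∈ verts (2 * ((k - 2) * b)) fun i => h (3 * k + 1 + i) := by
    intro x hx
    have := h4 x hx
    rwa [List.flatten_append, List.mem_append] at this
  have hblock : ∀ a m, a + m ≤ 3 * k + 1 → ∀ x ∈ P'.flatten, x ∉ verts m fun i => h (a + i) := by
    intro a m ham x hx h'
    rcases hmem x hx with (hx | hx) | hx
    · exact hd1 x hx (block_verts (by omega) h')
    · exact (hSd x hx).1 (block_verts (by omega) h')
    · exact block_disjoint hh (by omega) le_rfl (Or.inl ham) h' hx
  have hblock' : ∀ x ∈ verts (3 * k + 1) h, x ∈ verts (hubSize k b) h := by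
    rintro x ⟨i, hi, rfl⟩
    exact mem_verts (by omega)
  refine Force.closeAll hk hko hn ((hh.take hR).red_mono hB) h1 h2 ?_ (hK₁.mono hB) (hK₂.mono hB)
    nd4 ?_ ?_ (hblock 0 _ (by omega)) (hblock _ _ (by omega)) (hblock _ _ (by omega))
    (fun x hx h' => hd2 x hx (hblock' x h')) fun x hx h' => hd3 x hx (hblock' x h')
  · rw [List.flatten_append, List.length_append, hS2, List.flatten_nil, List.length_nil] at h3
    omega
  · intro x hx hx'
    rcases hmem x hx with (hx | hx) | hx
    · exact nd3 hx (List.mem_append_left _ hx')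
    · exact (hSd x hx).2.2.1 hx'
    · exact hd2 x hx' (block_verts le_rfl hx)
  · intro x hx hx'
    rcases hmem x hx with (hx | hx) | hx
    · exact nd3 hx (List.mem_append_right _ hx')
    · exact (hSd x hx).2.2.2 hx'
    · exact hd3 x hx' (block_verts le_rfl hx)

end

section

variable {B : Board} {Q : Board → Prop} {h p s : ℕ → ℕ}

theorem Force.cross (hk : 3 ≤ k) {t : ℕ} (hs : IsPth (Red B) (k + 1) s) {g q g' q' : ℕ}
    (hN : Alt k B s g q) (hgg : g ≠ g') (hqq : q ≠ q') (hg : Red B g g') (hq : Red B q q')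
    (hgs : g ∉ verts (k + 1) s) (hqs : q ∉ verts (k + 1) s) (hgs' : g' ∉ verts (k + 1) s)
    (hqs' : q' ∉ verts (k + 1) s)
    (h : ∀ B', B ≤ B' → Blu B' q (s 1) → Blu B' g' (s 1) → Blu B' q' (s 2) → Blu B' g (s 2) →
      Force k n t B' Q) : Force k n (t + 2) B Q := by
  have conv : ∀ {x}, x ∉ verts (k + 1) s → ∀ i < k + 1, x ≠ s i :=
    fun hx i hi h => hx ⟨i, hi, h⟩
  refine Force.hub_edge' hk hs g g' hgg (conv hgs) (conv hgs') hg 1 (0 + (k - 2)) (by omega)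
    (by omega) hN.h0.gr fun B₁ hB₁ hb₁ => ?_
  refine Force.hub_edge' hk (hs.red_mono hB₁) q q' hqq (conv hqs) (conv hqs') (hq.mono hB₁) 2
    (1 + (k - 2)) (by omega) (by omega) (hN.h1.gr.mono hB₁) fun B₂ hB₂ hb₂ => ?_
  have hB := hB₁.trans hB₂
  exact h B₂ hB (hN.h1.gb.mono hB) (hb₁.mono hB₂) hb₂ (hN.h2.gb.mono hB)

theorem singleton_disjoint {l : List ℕ} {V : Set ℕ} {x : ℕ} (hx : x ∈ V) (hd : ∀ y ∈ l, y ∉ V) :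
    ∀ y ∈ ({x} : Set ℕ), y ∉ l := by
  rintro y rfl hy
  exact hd y hy hx

/-- Builder closes a long blue path whose ends are joined in red to the ends of another one. -/
theorem Force.closeParallel (hk : 3 ≤ k) (hko : Odd k) (hn : 8 * k ≤ n)
    (hh : IsPth (Red B) (3 * k + 1) h) {S X : List ℕ} {g q g' q' : ℕ} (hS : BPath B S)
    (hX : BPath B X) (hSg : S.head? = some g) (hSq : S.getLast? = some q)
    (hXg : X.head? = some g') (hXq : X.getLast? = some q') (hd : S.Disjoint X)
    (hg : Red B g g') (hq : Red B q q') (hSh : ∀ x ∈ S, x ∉ verts (3 * k + 1) h)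
    (hXh : ∀ x ∈ X, x ∉ verts (3 * k + 1) h) (hlen : n ≤ S.length + 1) :
    Force k n (15 + closeCost k n) B Q := by
  have pW := hh.shift (m' := k - 1) 0 (by omega)
  have pD := hh.shift (m' := k + 1) (k - 1) (by omega)
  have bl : ∀ {l : List ℕ}, (∀ x ∈ l, x ∉ verts (3 * k + 1) h) → ∀ a m, a + m ≤ 3 * k + 1 →
      ∀ x ∈ l, x ∉ verts m fun i => h (a + i) :=
    fun hl a m ham x hx h' => hl x hx (block_verts ham h')
  have hDW : ∀ x ∈ verts (k + 1) fun i => h (k - 1 + i), x ∉ verts (k - 1) fun i => h (0 + i) :=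
    fun x hx => block_disjoint hh (by omega) (by omega) (by omega) hx
  have gS : g ∈ S := List.mem_of_mem_head? (by rw [hSg]; rfl)
  have qS : q ∈ S := List.mem_of_mem_getLast? (by rw [hSq]; rfl)
  have gX : g' ∈ X := List.mem_of_mem_head? (by rw [hXg]; rfl)
  have qX : q' ∈ X := List.mem_of_mem_getLast? (by rw [hXq]; rfl)
  have SD := bl hSh (k - 1) (k + 1) (by omega)
  have XD := bl hXh (k - 1) (k + 1) (by omega)
  have SW := bl hSh 0 (k - 1) (by omega)
  have XW := bl hXh 0 (k - 1) (by omega)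
  have alt : ∀ {S X : List ℕ} {g q g' q' : ℕ} {B₁ : Board}, B ≤ B₁ → BPath B S → BPath B X →
      S.head? = some g → S.getLast? = some q → X.head? = some g' → X.getLast? = some q' →
      S.Disjoint X → Red B g g' → Red B q q' → (∀ x ∈ S, x ∉ verts (3 * k + 1) h) →
      (∀ x ∈ X, x ∉ verts (3 * k + 1) h) → n ≤ S.length + 1 →
      Alt k B₁ (fun i => h (k - 1 + i)) g q → Force k n (2 + closeCost k n) B₁ Q := by
    intro S X g q g' q' B₁ hB₁ hS hX hSg hSq hXg hXq hd hg hq hSh hXh hlen hN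
    have gS : g ∈ S := List.mem_of_mem_head? (by rw [hSg]; rfl)
    have qS : q ∈ S := List.mem_of_mem_getLast? (by rw [hSq]; rfl)
    have gX : g' ∈ X := List.mem_of_mem_head? (by rw [hXg]; rfl)
    have qX : q' ∈ X := List.mem_of_mem_getLast? (by rw [hXq]; rfl)
    have SD := bl hSh (k - 1) (k + 1) (by omega)
    have XD := bl hXh (k - 1) (k + 1) (by omega)
    have ne : ∀ {x y}, x ∈ S → y ∈ X → x ≠ y := by
      rintro x y hx hy rfl
      exact hd hx hy
    refine Force.mono (t := closeCost k n + 2) ?_ (by omega)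
    refine Force.cross hk (pD.red_mono hB₁) hN (ne gS gX) (ne qS qX) (hg.mono hB₁) (hq.mono hB₁)
      (SD g gS) (SD q qS) (XD g' gX) (XD q' qX) fun B₂ hB₂ h1 h2 h3 h4 => ?_
    have hB := hB₁.trans hB₂
    have m1 : h (k - 1 + 1) ∈ verts (k + 1) fun i => h (k - 1 + i) := ⟨1, by omega, rfl⟩
    have m2 : h (k - 1 + 2) ∈ verts (k + 1) fun i => h (k - 1 + i) := ⟨2, by omega, rfl⟩
    refine Force.closeTwo hk hko hn (hS.mono hB) (hX.mono hB) hSg hSq hXg hXq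
      (Link.one (Set.mem_singleton _) h1 h2) (Link.one (Set.mem_singleton _) h3 h4) hd
      (fun x hx => ⟨singleton_disjoint m1 SD x hx, singleton_disjoint m1 XD x hx⟩)
      (fun x hx => ⟨singleton_disjoint m2 SD x hx, singleton_disjoint m2 XD x hx⟩)
      ?_ (by omega) (pW.red_mono hB) (bl hSh _ _ (by omega)) (bl hXh _ _ (by omega)) ?_ ?_
    · rintro x rfl h'
      exact pD.ne 1 2 (by omega) (by omega) (by omega) h'
    · rintro x rfl
      exact hDW _ m1
    · rintro x rfl
      exact hDW _ m2
  refine (Force.linkOrAlt hk pD q g (fun i hi h' => SD q qS ⟨i, hi, h'⟩)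
    fun i hi h' => SD g gS ⟨i, hi, h'⟩).bind' (t' := 2 + closeCost k n) (by omega) ?_
  rintro B₁ hB₁ (⟨c, hc⟩ | hN | hN)
  · refine Force.mono ?_ (show closeCost k n ≤ _ by omega)
    exact Force.closeLink hk hko hn (hS.mono hB₁) hSg hSq hc (fun x hx h' => SD x h' hx) hlen
      (pW.red_mono hB₁) SW hDW
  · exact alt hB₁ hS.reverse hX.reverse (by rw [List.head?_reverse, hSq])
      (by rw [List.getLast?_reverse, hSg]) (by rw [List.head?_reverse, hXq])
      (by rw [List.getLast?_reverse, hXg])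
      (fun x hx hx' => hd (List.mem_reverse.1 hx) (List.mem_reverse.1 hx')) hq hg
      (fun x hx => hSh x (List.mem_reverse.1 hx)) (fun x hx => hXh x (List.mem_reverse.1 hx))
      (by rwa [List.length_reverse]) hN
  · exact alt hB₁ hS hX hSg hSq hXg hXq hd hg hq hSh hXh hlen hN

/-- Builder closes a cycle through two blue paths with red chords. -/
theorem Force.closeChords (hk : 3 ≤ k) (hko : Odd k) (hn : 8 * k ≤ n)
    (hh : IsPth (Red B) (3 * k + 1) h) {u₁ v₁ u₂ v₂ : ℕ} {K₁ K₂ : List ℕ}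
    (hK₁ : KPath B u₁ v₁ K₁) (hK₂ : KPath B u₂ v₂ K₂) (hd : K₁.Disjoint K₂)
    (hh₁ : ∀ x ∈ K₁, x ∉ verts (3 * k + 1) h) (hh₂ : ∀ x ∈ K₂, x ∉ verts (3 * k + 1) h)
    (hlen : n ≤ K₁.length + K₂.length + 2) : Force k n (28 + closeCost k n) B Q := by
  have pW := hh.shift (m' := k - 1) 0 (by omega)
  have bl : ∀ {l : List ℕ}, (∀ x ∈ l, x ∉ verts (3 * k + 1) h) → ∀ a m, a + m ≤ 3 * k + 1 →
      ∀ x ∈ l, x ∉ verts m fun i => h (a + i) :=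
    fun hl a m ham x hx h' => hl x hx (block_verts ham h')
  have alt : ∀ {K₁ K₂ : List ℕ} {u₁ v₁ u₂ v₂ a : ℕ} {B₁ : Board}, B ≤ B₁ → KPath B u₁ v₁ K₁ →
      KPath B u₂ v₂ K₂ → K₁.Disjoint K₂ → (∀ x ∈ K₁, x ∉ verts (3 * k + 1) h) →
      (∀ x ∈ K₂, x ∉ verts (3 * k + 1) h) → n ≤ K₁.length + K₂.length + 2 →
      k - 1 ≤ a → a + (k + 1) ≤ 3 * k + 1 →
      Alt k B₁ (fun i => h (a + i)) u₁ u₂ → Force k n (2 + closeCost k n) B₁ Q := by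
    intro K₁ K₂ u₁ v₁ u₂ v₂ a B₁ hB₁ hK₁ hK₂ hd hh₁ hh₂ hlen ha ha' hN
    have pD := hh.shift (m' := k + 1) a (by omega)
    have D₁ := bl hh₁ a (k + 1) ha'
    have D₂ := bl hh₂ a (k + 1) ha'
    have hDW : ∀ x ∈ verts (k + 1) fun i => h (a + i), x ∉ verts (k - 1) fun i => h (0 + i) :=
      fun x hx => block_disjoint hh (by omega) (by omega) (by omega) hx
    refine Force.mono (t := closeCost k n + 2) ?_ (by omega)
    refine Force.cross hk (pD.red_mono hB₁) hN hK₁.ne hK₂.ne (hK₁.red.mono hB₁)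
      (hK₂.red.mono hB₁) (D₁ _ hK₁.mem_head) (D₂ _ hK₂.mem_head) (D₁ _ hK₁.mem_last)
      (D₂ _ hK₂.mem_last) fun B₂ hB₂ h1 h2 h3 h4 => ?_
    have hB := hB₁.trans hB₂
    have m1 : h (a + 1) ∈ verts (k + 1) fun i => h (a + i) := ⟨1, by omega, rfl⟩
    have m2 : h (a + 2) ∈ verts (k + 1) fun i => h (a + i) := ⟨2, by omega, rfl⟩
    refine Force.closeTwo hk hko hn (hK₁.mono hB).toBPath (hK₂.mono hB).toBPath hK₁.head hK₁.last
      hK₂.head hK₂.last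
      (Link.one (Set.mem_singleton _) h2 h1) (Link.one (Set.mem_singleton _) h3 h4) hd
      (fun x hx => ⟨singleton_disjoint m1 D₁ x hx, singleton_disjoint m1 D₂ x hx⟩)
      (fun x hx => ⟨singleton_disjoint m2 D₁ x hx, singleton_disjoint m2 D₂ x hx⟩)
      ?_ hlen (pW.red_mono hB) (bl hh₁ _ _ (by omega)) (bl hh₂ _ _ (by omega)) ?_ ?_
    · rintro x rfl h'
      exact pD.ne 1 2 (by omega) (by omega) (by omega) h'
    · rintro x rfl
      exact hDW _ m1
    · rintro x rfl
      exact hDW _ m2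
  have pD₁ := hh.shift (m' := k + 1) (k - 1) (by omega)
  have pD₂ := hh.shift (m' := k + 1) (2 * k) (by omega)
  have ndL : ∀ {K : List ℕ} {a : ℕ}, (∀ x ∈ K, x ∉ verts (3 * k + 1) h) →
      a + (k + 1) ≤ 3 * k + 1 → ∀ x ∈ K, ∀ i < k + 1, x ≠ h (a + i) :=
    fun hK ha x hx i hi h' => hK x hx ⟨_, by omega, h'⟩
  refine (Force.linkOrAlt hk pD₁ u₁ u₂ (ndL hh₁ (by omega) _ hK₁.mem_head)
    (ndL hh₂ (by omega) _ hK₂.mem_head)).bind' (t' := 15 + closeCost k n) (by omega) ?_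
  rintro B₁ hB₁ (⟨c₁, hc₁⟩ | hN | hN)
  · refine (Force.linkOrAlt hk (pD₂.red_mono hB₁) v₂ v₁ (ndL hh₂ (by omega) _ hK₂.mem_last)
      (ndL hh₁ (by omega) _ hK₁.mem_last)).bind' (t' := 2 + closeCost k n) (by omega) ?_
    rintro B₂ hB₂ (⟨c₂, hc₂⟩ | hN | hN)
    · have hB := hB₁.trans hB₂
      refine Force.mono (t := closeCost k n) ?_ (by omega)
      have mr : ∀ {x}, x ∈ K₁.reverse → x ∈ K₁ := fun hx => List.mem_reverse.1 hx
      refine Force.closeTwo hk hko hn (hK₁.mono hB).reverse.toBPath (hK₂.mono hB).toBPath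
        hK₁.reverse.head hK₁.reverse.last hK₂.head hK₂.last (hc₁.mono hB₂) hc₂
        (fun x hx hx' => hd (mr hx) hx')
        (fun x hx => ⟨fun h' => bl hh₁ _ _ (by omega) x (mr h') hx,
          fun h' => bl hh₂ _ _ (by omega) x h' hx⟩)
        (fun x hx => ⟨fun h' => bl hh₁ _ _ (by omega) x (mr h') hx,
          fun h' => bl hh₂ _ _ (by omega) x h' hx⟩)
        (fun x hx => block_disjoint hh (by omega) (by omega) (by omega) hx)
        (by rw [List.length_reverse]; omega) (pW.red_mono hB)
        (fun x hx => bl hh₁ _ _ (by omega) x (mr hx))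
        (bl hh₂ _ _ (by omega))
        (fun x hx => block_disjoint hh (by omega) (by omega) (by omega) hx)
        (fun x hx => block_disjoint hh (by omega) (by omega) (by omega) hx)
    · exact alt (hB₁.trans hB₂) hK₂.reverse hK₁.reverse
        (fun x hx hx' => hd (List.mem_reverse.1 hx') (List.mem_reverse.1 hx))
        (fun x hx => hh₂ x (List.mem_reverse.1 hx)) (fun x hx => hh₁ x (List.mem_reverse.1 hx))
        (by simp only [List.length_reverse]; omega) (by omega) (by omega) hN
    · exact alt (hB₁.trans hB₂) hK₁.reverse hK₂.reverse
        (fun x hx hx' => hd (List.mem_reverse.1 hx) (List.mem_reverse.1 hx'))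
        (fun x hx => hh₁ x (List.mem_reverse.1 hx)) (fun x hx => hh₂ x (List.mem_reverse.1 hx))
        (by simp only [List.length_reverse]; omega) (by omega) (by omega) hN
  · exact (alt hB₁ hK₁ hK₂ hd hh₁ hh₂ hlen (by omega) (by omega) hN).mono (by omega)
  · exact (alt hB₁ hK₂ hK₁ hd.symm hh₂ hh₁ (by omega) (by omega) (by omega) hN).mono (by omega)

theorem Force.joinAlt (hk : 3 ≤ k) (hko : Odd k) (hn : 8 * k ≤ n) (hs : IsPth (Red B) (k + 1) s)
    (hp : IsPth (Red B) (k - 1) p) {l₁ l₂ : List ℕ} {q g t : ℕ} (h₁ : BPath B l₁)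
    (h₂ : BPath B l₂) (hq : l₁.head? = some q) (hg : l₁.getLast? = some g) (ht : l₂.head? = some t)
    (hd : l₁.Disjoint l₂) (hlen : 2 * n - 3 ≤ l₁.length + l₂.length)
    (hs₁ : ∀ x ∈ l₁, x ∉ verts (k + 1) s) (hs₂ : ∀ x ∈ l₂, x ∉ verts (k + 1) s)
    (hp₁ : ∀ x ∈ l₁, x ∉ verts (k - 1) p) (hp₂ : ∀ x ∈ l₂, x ∉ verts (k - 1) p)
    (hsp : ∀ x ∈ verts (k + 1) s, x ∉ verts (k - 1) p) (hN : Alt k B s g q) :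
    Force k n (2 + closeCost k n) B Q := by
  have tl : t ∈ l₂ := List.mem_of_mem_head? (by rw [ht]; rfl)
  have hts : ∀ i < k + 1, t ≠ s i := fun i hi h' => hs₂ t tl ⟨i, hi, h'⟩
  have fin : ∀ {l : List ℕ} {e j : ℕ} {B' : Board}, B ≤ B' → BPath B' l → l.getLast? = some e →
      l.Perm l₁ → j < k + 1 → Blu B' e (s j) → Blu B' t (s j) →
      Force k n (closeCost k n) B' Q := by
    intro l e j B' hB hl he hperm hj he1 he2
    have mj := mem_verts (s := s) hj
    have hlk := hl.link (h₂.mono hB) he ht (Link.one (Set.mem_singleton _) he1 he2)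
      (fun x hx hx' => hd (hperm.mem_iff.1 hx) hx') ?_
    · refine Force.closeList hk hko hn hlk ?_ (hp.red_mono hB) ?_
      · have := hperm.length_eq
        simp only [List.length_append]
        omega
      · intro x hx
        rcases List.mem_append.1 hx with hx | hx
        · exact hp₁ x (hperm.mem_iff.1 hx)
        rcases List.mem_append.1 hx with hx | hx
        · rw [List.mem_singleton.1 hx]
          exact hsp _ mj
        · exact hp₂ x hx
    · rintro x rfl
      exact ⟨fun h' => hs₁ _ (hperm.mem_iff.1 h') mj, fun h' => hs₂ _ h' mj⟩
  refine Force.mono (t := (closeCost k n + 1) + 1) ?_ (by omega)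
  refine Force.test t (s 2) (hts 2 (by omega)) (fun B₁ hB₁ hr => ?_) fun B₁ hB₁ hb => ?_
  · refine Force.hub_far hk (hs.red_mono hB₁) t hts 2 (2 + (k - 2)) rfl (by omega) hr
      fun B₂ hB₂ hb => ?_
    have hB := hB₁.trans hB₂
    exact fin hB (h₁.mono hB).reverse (by rw [List.getLast?_reverse, hq]) (List.reverse_perm _)
      (by omega) (hN.h2.qb.mono hB) hb
  · exact (fin hB₁ (h₁.mono hB₁) hg (List.Perm.refl _) (by omega) (hN.h2.gb.mono hB₁) hb).succ

/-- Builder wins from a hub and blue paths on about `2 * n` vertices. -/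
theorem Force.closeLong (hk : 3 ≤ k) (hko : Odd k) (hn : 8 * k ≤ n) {b : ℕ}
    (hh : IsPth (Red B) (hubSize k b) h) {P : List (List ℕ)} (hP : ∀ l ∈ P, l.IsChain (Blu B))
    (hnd : P.flatten.Nodup) (hd : ∀ x ∈ P.flatten, x ∉ verts (hubSize k b) h)
    (hC : P.length ≤ (k - 2) * b + 2) (hlen : 2 * n - 1 ≤ P.flatten.length) :
    Force k n (5 * ((k - 2) * b) + (15 + closeCost k n)) B Q := by
  have hR : 3 * k + 1 ≤ hubSize k b := by rw [hubSize]; omega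
  obtain ⟨P₀, hP₀, hP₀l, hP₀f⟩ := Loose.of_disjoint hP hnd hd
  rw [← hP₀f] at hd hlen
  refine (Force.mergeHub hk hh hP₀ hd (by omega)).bind ?_
  rintro B₁ hB₁ ⟨P', h1, h2, h3, h4⟩
  have hblock : ∀ a m, a + m ≤ 3 * k + 1 → ∀ x ∈ P'.flatten, x ∉ verts m fun i => h (a + i) := by
    intro a m ham x hx h'
    rcases h4 x hx with hx | hx
    · exact hd x hx (block_verts (by omega) h')
    · exact block_disjoint hh (by omega) le_rfl (Or.inl ham) h' hx
  have pW := (hh.red_mono hB₁).shift (m' := k - 1) 0 (by omega)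
  have pD := (hh.red_mono hB₁).shift (m' := k + 1) (k - 1) (by omega)
  have hW := hblock 0 (k - 1) (by omega)
  have hD := hblock (k - 1) (k + 1) (by omega)
  have hDW : ∀ x ∈ verts (k + 1) fun i => h (k - 1 + i), x ∉ verts (k - 1) fun i => h (0 + i) :=
    fun x hx => block_disjoint hh (by omega) (by omega) (by omega) hx
  have two : ∀ l₁ l₂, BPath B₁ l₁ → BPath B₁ l₂ → l₁.Disjoint l₂ → l₁ ≠ [] → l₂ ≠ [] →
      n ≤ l₁.length → 2 * n - 1 ≤ l₁.length + l₂.length → (∀ x ∈ l₁, x ∈ P'.flatten) →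
      (∀ x ∈ l₂, x ∈ P'.flatten) → Force k n (15 + closeCost k n) B₁ Q := by
    intro l₁ l₂ b₁ b₂ hdis ne₁ ne₂ hl₁ hl m₁ m₂
    obtain ⟨q, hq⟩ := exists_head ne₁
    obtain ⟨g, hg⟩ := exists_last ne₁
    obtain ⟨t, ht⟩ := exists_head ne₂
    have ql : q ∈ l₁ := List.mem_of_mem_head? (by rw [hq]; rfl)
    have gl : g ∈ l₁ := List.mem_of_mem_getLast? (by rw [hg]; rfl)
    refine (Force.linkOrAlt hk pD g q (fun i hi h' => hD g (m₁ _ gl) ⟨i, hi, h'⟩)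
      fun i hi h' => hD q (m₁ _ ql) ⟨i, hi, h'⟩).bind' (t' := 2 + closeCost k n) (by omega) ?_
    rintro B₂ hB₂ (⟨c, hc⟩ | hN | hN)
    · refine Force.mono ?_ (show closeCost k n ≤ _ by omega)
      exact Force.closeLink hk hko hn (b₁.mono hB₂) hq hg hc (fun x hx h' => hD x (m₁ x h') hx)
        (by omega) (pW.red_mono hB₂) (fun x hx => hW x (m₁ x hx)) hDW
    · exact Force.joinAlt hk hko hn (pD.red_mono hB₂) (pW.red_mono hB₂) (b₁.mono hB₂) (b₂.mono hB₂)
        hq hg ht hdis (by omega) (fun x hx => hD x (m₁ x hx)) (fun x hx => hD x (m₂ x hx))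
        (fun x hx => hW x (m₁ x hx)) (fun x hx => hW x (m₂ x hx)) hDW hN
    · exact Force.joinAlt hk hko hn (pD.red_mono hB₂) (pW.red_mono hB₂) (b₁.mono hB₂).reverse
        (b₂.mono hB₂) (by rw [List.head?_reverse, hg]) (by rw [List.getLast?_reverse, hq]) ht
        (fun x hx hx' => hdis (List.mem_reverse.1 hx) hx') (by rw [List.length_reverse]; omega)
        (fun x hx => hD x (m₁ x (List.mem_reverse.1 hx))) (fun x hx => hD x (m₂ x hx))
        (fun x hx => hW x (m₁ x (List.mem_reverse.1 hx))) (fun x hx => hW x (m₂ x hx)) hDW hN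
  match P' with
  | [] =>
    rw [List.flatten_nil, List.length_nil] at h3
    omega
  | [l] =>
    simp only [List.flatten_cons, List.flatten_nil, List.append_nil] at h3 hW
    refine Force.mono (t := closeCost k n) ?_ (by omega)
    exact Force.closeList hk hko hn (h1.bpath (by simp)) (by omega) pW hW
  | [l₁, l₂] =>
    have hdis : l₁.Disjoint l₂ := by
      have := h1.nodup
      simp only [List.flatten_cons, List.flatten_nil, List.append_nil] at this
      exact (List.nodup_append'.1 this).2.2
    have m₁ : ∀ x ∈ l₁, x ∈ [l₁, l₂].flatten := fun x hx => by simp [hx]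
    have m₂ : ∀ x ∈ l₂, x ∈ [l₁, l₂].flatten := fun x hx => by simp [hx]
    have h3' : P₀.flatten.length ≤ l₁.length + l₂.length := by
      simpa only [List.flatten_cons, List.flatten_nil, List.append_nil, List.length_append] using h3
    rcases Nat.lt_or_ge l₁.length n with hlt | hge
    · exact two l₂ l₁ (h1.bpath (by simp)) (h1.bpath (by simp)) hdis.symm (h1.ne _ (by simp))
        (h1.ne _ (by simp)) (by omega) (by omega) m₂ m₁
    · exact two l₁ l₂ (h1.bpath (by simp)) (h1.bpath (by simp)) hdis (h1.ne _ (by simp))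
        (h1.ne _ (by simp)) hge (by omega) m₁ m₂
  | _ :: _ :: _ :: _ => simp at h2

end

/-- The vertices of the list are distinct and avoid a given set. -/
def Clean (V : Set ℕ) (l : List ℕ) : Prop := l.Nodup ∧ ∀ x ∈ l, x ∉ V

theorem Clean.of_count {V : Set ℕ} {l l' : List ℕ} (h : Clean V l)
    (hl : ∀ a, l'.count a ≤ l.count a) : Clean V l' :=
  ⟨List.nodup_iff_count_le_one.2 fun a => (hl a).trans (List.nodup_iff_count_le_one.1 h.1 a),
    fun _ hx => h.2 _ ((List.subperm_iff_count.2 hl).subset hx)⟩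

theorem Clean.mono {V V' : Set ℕ} {l : List ℕ} (h : Clean V l) (hV : V' ⊆ V) : Clean V' l :=
  ⟨h.1, fun x hx h' => h.2 x hx (hV h')⟩

theorem Clean.ne {V : Set ℕ} {l : List ℕ} (h : Clean V l) {m : ℕ} {s : ℕ → ℕ}
    (hs : verts m s ⊆ V) {x : ℕ} (hx : x ∈ l) : ∀ i < m, x ≠ s i :=
  fun i hi h' => h.2 x hx (hs ⟨i, hi, h'⟩)

theorem Clean.cons_fresh {m : ℕ} {h : ℕ → ℕ} {l : List ℕ} (hl : Clean (verts m h) l) :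
    ∃ x, Clean (verts m h) (x :: l) := by
  obtain ⟨x, hx⟩ := exists_fresh (l ++ (List.range m).map h)
  rw [List.mem_append, not_or] at hx
  refine ⟨x, List.nodup_cons.2 ⟨hx.1, hl.1⟩, ?_⟩
  intro y hy
  rcases List.mem_cons.1 hy with rfl | hy
  · rintro ⟨i, hi, h'⟩
    exact hx.2 (List.mem_map.2 ⟨i, List.mem_range.2 hi, h'.symm⟩)
  · exact hl.2 y hy

theorem verts_mono {m m' : ℕ} {h : ℕ → ℕ} (hm : m ≤ m') : verts m h ⊆ verts m' h := by
  rintro x ⟨i, hi, rfl⟩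
  exact mem_verts (by omega)

theorem verts_shift {m o H : ℕ} {h : ℕ → ℕ} (ho : o + m ≤ H) :
    verts m (fun i => h (o + i)) ⊆ verts H h := fun _ hx => block_verts ho hx

theorem Clean.cons_block {r : ℕ → ℕ → Prop} {R m y : ℕ} {h : ℕ → ℕ} {l : List ℕ}
    (hh : IsPth r (R + m) h) (hl : Clean (verts (R + m) h) l)
    (hy : y ∈ verts m fun i => h (R + i)) : Clean (verts R h) (y :: l) := by
  refine ⟨List.nodup_cons.2 ⟨fun h' => hl.2 y h' (verts_shift le_rfl hy), hl.1⟩, ?_⟩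
  intro x hx
  rcases List.mem_cons.1 hx with rfl | hx
  · rintro ⟨j, hj, h'⟩
    obtain ⟨i, hi, h''⟩ := hy
    exact hh.ne (R + i) j (by omega) (by omega) (by omega) (h''.symm.trans h')
  · exact fun h' => hl.2 x hx (verts_mono (by omega) h')

section

variable {B : Board} {Q : Board → Prop} {h s : ℕ → ℕ}

/-- A red path on three vertices and a red path on `k - 1` vertices give Builder a common
blue neighbour. -/
theorem Force.fold (hk : 3 ≤ k) {t : ℕ} (hs : IsPth (Red B) (k - 1) s) {x p q : ℕ} (hxp : x ≠ p)
    (hxq : x ≠ q) (hx : ∀ i < k - 1, x ≠ s i) (hp : ∀ i < k - 1, p ≠ s i)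
    (hq : ∀ i < k - 1, q ≠ s i) (hrp : Red B x p) (hrq : Red B x q)
    (h1 : ∀ B', B ≤ B' → ∀ y ∈ verts (k - 1) s, Blu B' x y → Blu B' q y → Force k n t B' Q)
    (h2 : ∀ B', B ≤ B' → ∀ y ∈ verts (k - 1) s, Blu B' p y → Blu B' q y → Force k n t B' Q) :
    Force k n (t + 5) B Q := by
  refine Force.test x (s 0) (hx 0 (by omega)) (fun B₁ hB₁ hr => ?_) fun B₁ hB₁ hb => ?_
  · refine Force.mono (t := (t + 1) + 1) ?_ (by omega)
    refine Force.hub_edge hk (hs.red_mono hB₁) x p hxp hx hp (hrp.mono hB₁) 0 (k - 3) (by omega)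
      (by omega) hr fun B₂ hB₂ hb₂ => ?_
    have hB := hB₁.trans hB₂
    refine Force.hub_edge hk (hs.red_mono hB) x q hxq hx hq (hrq.mono hB) 0 (k - 3) (by omega)
      (by omega) (hr.mono hB₂) fun B₃ hB₃ hb₃ => ?_
    exact h2 B₃ (hB.trans hB₃) _ (mem_verts (by omega)) (hb₂.mono hB₃) hb₃
  refine Force.test q (s 0) (hq 0 (by omega)) (fun B₂ hB₂ hr₂ => ?_) fun B₂ hB₂ hb₂ => ?_
  · have hB := hB₁.trans hB₂
    refine Force.test x (s (k - 2)) (hx _ (by omega)) (fun B₃ hB₃ hr₃ => ?_) fun B₃ hB₃ hb₃ => ?_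
    · have hB' := hB.trans hB₃
      refine Force.hub_edge' hk (hs.red_mono hB') x p hxp hx hp (hrp.mono hB') 1 (k - 2)
        (by omega) (by omega) hr₃ fun B₄ hB₄ hb₄ => ?_
      have hB'' := hB'.trans hB₄
      refine Force.hub_edge' hk (hs.red_mono hB'') x q hxq hx hq (hrq.mono hB'') 1 (k - 2)
        (by omega) (by omega) (hr₃.mono hB₄) fun B₅ hB₅ hb₅ => ?_
      exact h2 B₅ (hB''.trans hB₅) _ (mem_verts (by omega)) (hb₄.mono hB₅) hb₅
    · refine Force.succ (Force.hub_far hk (hs.red_mono (hB.trans hB₃)) q hq 0 (k - 2) (by omega)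
        (by omega) (hr₂.mono hB₃) fun B₄ hB₄ hb₄ => ?_)
      exact h1 B₄ ((hB.trans hB₃).trans hB₄) _ (mem_verts (by omega)) (hb₃.mono hB₄) hb₄
  · exact Force.mono (h1 B₂ (hB₁.trans hB₂) _ (mem_verts (by omega)) (hb.mono hB₂) hb₂) (by omega)

/-- Builder finishes with two blue paths with red chords and three further blue paths. -/
theorem Force.richFinish (hk : 3 ≤ k) (hko : Odd k) (hn : 8 * k ≤ n) {b T : ℕ}
    (hb : k ≤ (k - 2) * b)
    (hh : IsPth (Red B) (hubSize k b) h) {P₁ P₂ P₃ K₁ K₂ : List ℕ} {u₁ v₁ u₂ v₂ : ℕ}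
    (hP₁ : P₁.IsChain (Blu B)) (hP₂ : P₂.IsChain (Blu B)) (hP₃ : P₃.IsChain (Blu B))
    (hK₁ : KPath B u₁ v₁ K₁) (hK₂ : KPath B u₂ v₂ K₂)
    (hc : Clean (verts (hubSize k b) h) (P₁ ++ (P₂ ++ (P₃ ++ (K₁ ++ K₂)))))
    (hT₀ : 28 + closeCost k n ≤ T)
    (hT : K₁.length + K₂.length + 3 ≤ n →
      2 * (n - 1 - (P₁.length + P₂.length + P₃.length)) + 5 * ((k - 2) * b) +
        (38 + closeCost k n) ≤ T) :
    Force k n T B Q := by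
  rcases Nat.lt_or_ge n (K₁.length + K₂.length + 3) with hlt | hge
  · refine Force.mono ?_ hT₀
    have hR : 3 * k + 1 ≤ hubSize k b := by rw [hubSize]; omega
    have hcK := (hc.mono (verts_mono hR)).of_count (l' := K₁ ++ K₂)
      fun a => by simp only [List.count_append]; omega
    exact Force.closeChords hk hko hn (hh.take hR) hK₁ hK₂ (List.nodup_append'.1 hcK.1).2.2
      (fun x hx => hcK.2 x (List.mem_append_left _ hx))
      (fun x hx => hcK.2 x (List.mem_append_right _ hx)) (by omega)
  · refine Force.mono (Force.rich hk hko hn hh (P := [P₁, P₂, P₃]) ?_ hK₁ hK₂ ?_ ?_ ?_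
      (n - 1 - (P₁.length + P₂.length + P₃.length)) ?_) (hT hge)
    · simp [hP₁, hP₂, hP₃]
    · simpa using hc.1
    · simpa using hc.2
    · simp only [List.length_cons, List.length_nil]; omega
    · simp only [List.flatten_cons, List.flatten_nil, List.append_nil, List.length_append]
      omega

end

/-- The blue path `S` is joined in red at both ends to a subpath `X` of the blue path `F`. -/
structure Ends (B : Board) (F S A X C : List ℕ) (g' q' g q : ℕ) : Prop where
  eq : F = A ++ (X ++ C)
  xhead : X.head? = some g'
  xlast : X.getLast? = some q'
  shead : S.head? = some g
  slast : S.getLast? = some q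
  rg : Red B g g'
  rq : Red B q q'
  single : S = [q] → X = [q']

theorem Ends.mono {B B' : Board} {F S A X C : List ℕ} {g' q' g q : ℕ}
    (h : Ends B F S A X C g' q' g q) (hB : B ≤ B') : Ends B' F S A X C g' q' g q :=
  { h with rg := h.rg.mono hB, rq := h.rq.mono hB }

theorem Ends.consF {B : Board} {F S A X C : List ℕ} {g' q' g q : ℕ}
    (h : Ends B F S A X C g' q' g q) (x : ℕ) : Ends B (x :: F) S (x :: A) X C g' q' g q :=
  { h with eq := by rw [h.eq, List.cons_append] }

theorem Ends.consS {B : Board} {F S A X C : List ℕ} {g' q' g q x p : ℕ}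
    (h : Ends B F S A X C g' q' g q) (hp : F.head? = some p) (hx : Red B x p) :
    Ends B F (x :: S) [] (A ++ X) C p q' x q where
  eq := by rw [h.eq, List.nil_append, List.append_assoc]
  xhead := by
    have h1 := h.xhead
    have h2 := h.eq
    cases X with
    | nil => simp at h1
    | cons a X => cases A <;> simp_all
  xlast := by rw [List.getLast?_append, h.xlast]; rfl
  shead := rfl
  slast := by rw [List.getLast?_cons, h.slast]; rfl
  rg := hx
  rq := h.rq
  single hs := by
    have := h.shead
    simp [(List.cons.inj hs).2] at this

theorem Ends.exists_head {B : Board} {F S A X C : List ℕ} {g' q' g q : ℕ}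
    (h : Ends B F S A X C g' q' g q) : ∃ p, F.head? = some p := by
  have h1 := h.xhead
  refine _root_.exists_head fun h' => ?_
  rw [h.eq] at h'
  simp at h'
  simp [h'] at h1

/-- The properties of a ladder needed to let it grow. -/
structure LadderInv (I : Board → List ℕ → List ℕ → Prop) : Prop where
  mono {B B' F S} : I B F S → B ≤ B' → I B' F S
  consF {B F S} (x : ℕ) : I B F S → I B (x :: F) S
  consS {B F S x p} : I B F S → F.head? = some p → Red B x p → I B F (x :: S)
  ends {B F S} : I B F S → ∃ A X C g' q' g q, Ends B F S A X C g' q' g q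

/-- The number of rounds needed to finish once the ladder is long. -/
def runCost (k n b : ℕ) : ℕ := 5 * ((k - 2) * b) + (15 + closeCost k n)

theorem chain_cons {B : Board} {l : List ℕ} {x p : ℕ} (hl : l.IsChain (Blu B))
    (hp : l.head? = some p) (hx : Blu B x p) : (x :: l).IsChain (Blu B) := by
  rw [List.isChain_cons]
  exact ⟨fun y hy => by rw [hp] at hy; cases hy; exact hx, hl⟩

theorem chain_mono {B B' : Board} {l : List ℕ} (hl : l.IsChain (Blu B)) (hB : B ≤ B') :
    l.IsChain (Blu B') := hl.imp fun _ _ h => Blu.mono h hB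

section

variable {Q : Board → Prop} {h : ℕ → ℕ} {m b : ℕ}

/-- Builder extends a ladder by fresh vertices until it is long enough to win, or until a fresh
vertex is red to both tips. -/
theorem Force.run (hk : 3 ≤ k) (hko : Odd k) (hn : 8 * k ≤ n) (hb : k ≤ (k - 2) * b)
    (hR : hubSize k b ≤ m) {I : Board → List ℕ → List ℕ → Prop} (hI : LadderInv I) {Y : List ℕ}
    {N : ℕ} {B : Board} {F S : List ℕ} {ρ : ℕ} (hh : IsPth (Red B) m h) (hIB : I B F S)
    (hF : F.IsChain (Blu B)) (hS : S.IsChain (Blu B)) (hY : Y.IsChain (Blu B))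
    (hc : Clean (verts m h) (F ++ (S ++ Y)))
    (hρ : runCost k n b ≤ ρ) (hN : ρ + F.length + 2 * S.length = N)
    (hN' : 3 * n + runCost k n b ≤ N + Y.length)
    (hE : ∀ B' F' S' x p g ρ', B ≤ B' → I B' F' S' → F'.IsChain (Blu B') → S'.IsChain (Blu B') →
      Clean (verts m h) (x :: (F' ++ (S' ++ Y))) → F'.head? = some p → S'.head? = some g →
      Red B' x p → Red B' x g → F'.length + S'.length + Y.length + 2 ≤ 2 * n →
      S'.length + 2 ≤ n → ρ' + 2 + F'.length + 2 * S'.length = N → Force k n ρ' B' Q) :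
    Force k n ρ B Q := by
  obtain ⟨d, hd⟩ : ∃ d, 2 * n ≤ d + F.length + S.length := ⟨2 * n, by omega⟩
  induction d generalizing B F S ρ with
  | zero =>
    refine Force.mono (Force.closeLong hk hko hn (hh.take hR) (P := [F, S, Y]) ?_ ?_ ?_ ?_ ?_) hρ
    · simp [hF, hS, hY]
    · simpa using hc.1
    · simpa using (hc.mono (verts_mono hR)).2
    · simp only [List.length_cons, List.length_nil]; omega
    · simp only [List.flatten_cons, List.length_append]; omega
  | succ d ih =>
    rcases Nat.lt_or_ge (F.length + S.length + Y.length + 1) (2 * n) with hlt | hge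
    swap
    · refine Force.mono (Force.closeLong hk hko hn (hh.take hR) (P := [F, S, Y]) ?_ ?_ ?_ ?_ ?_) hρ
      · simp [hF, hS, hY]
      · simpa using hc.1
      · simpa using (hc.mono (verts_mono hR)).2
      · simp only [List.length_cons, List.length_nil]; omega
      · simp only [List.flatten_cons, List.flatten_nil, List.length_append, List.append_nil]; omega
    obtain ⟨A, X, C, g', q', g, q, he⟩ := hI.ends hIB
    rcases Nat.lt_or_ge (S.length + 1) n with hlt' | hge
    swap
    · have h3 : 3 * k + 1 ≤ m := le_trans (by rw [hubSize]; omega) hR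
      have hcS := (hc.mono (verts_mono h3)).of_count (l' := S ++ X)
        fun a => by simp only [he.eq, List.count_append]; omega
      have hcd := List.nodup_append'.1 hcS.1
      have hX : X.IsChain (Blu B) := by
        have := hF
        rw [he.eq, List.isChain_append, List.isChain_append] at this
        exact this.2.1.1
      refine Force.mono (Force.closeParallel hk hko hn (hh.take h3) ⟨hcd.1, hS⟩ ⟨hcd.2.1, hX⟩
        he.shead he.slast he.xhead he.xlast hcd.2.2 he.rg he.rq
        (fun x hx => hcS.2 x (List.mem_append_left _ hx))
        (fun x hx => hcS.2 x (List.mem_append_right _ hx)) hge) (le_trans ?_ hρ)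
      rw [runCost]; omega
    obtain ⟨p, hp⟩ := he.exists_head
    obtain ⟨x, hx⟩ := hc.cons_fresh
    have hpF : p ∈ F := List.mem_of_mem_head? (by rw [hp]; rfl)
    have hgS : g ∈ S := List.mem_of_mem_head? (by rw [he.shead]; rfl)
    have hx' := (List.nodup_cons.1 hx.1).1
    have hxp : x ≠ p := by rintro rfl; exact hx' (by simp [hpF])
    have hxg : x ≠ g := by rintro rfl; exact hx' (by simp [hgS])
    obtain ⟨ρ₀, rfl⟩ : ∃ ρ₀, ρ = ρ₀ + 2 := ⟨ρ - 2, by omega⟩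
    refine Force.test (t := ρ₀ + 1) x p hxp (fun B₁ hB₁ hr => ?_) fun B₁ hB₁ hbl => ?_
    · refine Force.test x g hxg (fun B₂ hB₂ hr₂ => ?_) fun B₂ hB₂ hb₂ => ?_
      · have hB := hB₁.trans hB₂
        exact hE B₂ F S x p g ρ₀ hB (hI.mono hIB hB) (chain_mono hF hB) (chain_mono hS hB) hx hp
          he.shead (hr.mono hB₂) hr₂ (by omega) (by omega) (by omega)
      · have hB := hB₁.trans hB₂
        refine ih (hh.red_mono hB) (hI.consS (hI.mono hIB hB) hp (hr.mono hB₂)) (chain_mono hF hB)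
          (chain_cons (chain_mono hS hB) he.shead hb₂) (chain_mono hY hB) (hx.of_count fun a => ?_)
          (by omega) (by rw [List.length_cons]; omega)
          (fun B' F' S' x p g ρ' hB' => hE B' F' S' x p g ρ' (hB.trans hB'))
          (by rw [List.length_cons]; omega)
        simp only [List.count_append, List.count_cons]; omega
    · refine ih (hh.red_mono hB₁) (hI.consF x (hI.mono hIB hB₁))
        (chain_cons (chain_mono hF hB₁) hp hbl) (chain_mono hS hB₁) (chain_mono hY hB₁)
        (hx.of_count fun a => ?_)
        (by omega) (by rw [List.length_cons]; omega)
        (fun B' F' S' x p g ρ' hB' => hE B' F' S' x p g ρ' (hB₁.trans hB'))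
        (by rw [List.length_cons]; omega)
      simp only [List.count_append, List.count_cons]; omega

/-- Builder starts a ladder on a blue path. -/
theorem Force.startRun (hk : 3 ≤ k) (hko : Odd k) (hn : 8 * k ≤ n)
    (hR : hubSize k b ≤ m) {Y : List ℕ}
    {N : ℕ} {B : Board} {F : List ℕ} {ρ : ℕ} (hh : IsPth (Red B) m h)
    (hF : F.IsChain (Blu B)) (hY : Y.IsChain (Blu B))
    (hc : Clean (verts m h) (F ++ Y))
    (hρ : runCost k n b ≤ ρ) (hN : ρ + F.length = N)
    (hN' : 3 * n + runCost k n b ≤ N + Y.length)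
    (hE : ∀ B' p F' x ρ', B ≤ B' → (p :: F').IsChain (Blu B') → Red B' x p →
      Clean (verts m h) ((p :: F') ++ ([x] ++ Y)) → runCost k n b ≤ ρ' →
      ρ' + (p :: F').length + 2 = N → Force k n ρ' B' Q) :
    Force k n ρ B Q := by
  obtain ⟨d, hd⟩ : ∃ d, 2 * n ≤ d + F.length := ⟨2 * n, by omega⟩
  induction d generalizing B F ρ with
  | zero =>
    refine Force.mono (Force.closeLong hk hko hn (hh.take hR) (P := [F, Y]) ?_ ?_ ?_ ?_ ?_) hρ
    · simp [hF, hY]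
    · simpa using hc.1
    · simpa using (hc.mono (verts_mono hR)).2
    · simp only [List.length_cons, List.length_nil]; omega
    · simp only [List.flatten_cons, List.length_append]; omega
  | succ d ih =>
    rcases Nat.lt_or_ge (F.length + Y.length + 1) (2 * n) with hlt | hge
    swap
    · refine Force.mono (Force.closeLong hk hko hn (hh.take hR) (P := [F, Y]) ?_ ?_ ?_ ?_ ?_) hρ
      · simp [hF, hY]
      · simpa using hc.1
      · simpa using (hc.mono (verts_mono hR)).2
      · simp only [List.length_cons, List.length_nil]; omega
      · simp only [List.flatten_cons, List.flatten_nil, List.length_append, List.append_nil]; omega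
    obtain ⟨x, hx⟩ := hc.cons_fresh
    obtain ⟨ρ₀, rfl⟩ : ∃ ρ₀, ρ = ρ₀ + 2 := ⟨ρ - 2, by omega⟩
    cases F with
    | nil =>
      rw [List.length_nil] at hN hlt hd
      exact (ih (ρ := ρ₀ + 1) (F := [x]) hh (by simp) hY hx (by omega)
        (by simp only [List.length_cons, List.length_nil]; omega) hE
        (by simp only [List.length_cons, List.length_nil]; omega)).succ
    | cons p F =>
      have hxp : x ≠ p := by
        have := (List.nodup_cons.1 hx.1).1
        rintro rfl
        simp at this
      rw [List.length_cons] at hN hlt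
      refine Force.test (t := ρ₀ + 1) x p hxp (fun B₁ hB₁ hr => ?_) fun B₁ hB₁ hbl => ?_
      · refine (hE B₁ p F x ρ₀ hB₁ (chain_mono hF hB₁) hr (hx.of_count fun a => ?_) (by omega)
          (by simp only [List.length_cons]; omega)).mono (by omega)
        simp only [List.count_append, List.count_cons, List.count_nil]; omega
      · refine ih (hh.red_mono hB₁)
          (chain_cons (chain_mono hF hB₁) rfl hbl) (chain_mono hY hB₁)
          (hx.of_count fun a => ?_)
          (by omega) (by simp only [List.length_cons]; omega)
          (fun B' p F' x ρ' hB' => hE B' p F' x ρ' (hB₁.trans hB'))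
          (by simp only [List.length_cons] at hd ⊢; omega)
        simp only [List.count_append, List.count_cons]; omega

end

theorem nodup_of_count {l l' : List ℕ} (h : l.Nodup) (hl : ∀ a, l'.count a ≤ l.count a) :
    l'.Nodup :=
  List.nodup_iff_count_le_one.2 fun a => (hl a).trans (List.nodup_iff_count_le_one.1 h a)

theorem KPath.three {B : Board} {x y g : ℕ} (hnd : [x, y, g].Nodup) (hx : Blu B x y)
    (hg : Blu B g y) (hr : Red B x g) : KPath B x g [x, y, g] where
  nodup := hnd
  chain := by simp [hx, hg.symm]
  head := rfl
  last := rfl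
  red := hr
  ne := by rintro rfl; simp at hnd

theorem KPath.turn {B : Board} {F A D : List ℕ} {p y g g' : ℕ} (hF : F.IsChain (Blu B))
    (hFA : F = A ++ g' :: D) (hp : F.head? = some p) (hpy : Blu B p y) (hgy : Blu B g y)
    (hr : Red B g g') (hnd : (y :: g :: F).Nodup) :
    KPath B g' g (g' :: (A.reverse ++ [y, g])) := by
  have h1 : (A ++ [g']).IsChain (Blu B) := by
    rw [hFA, ← List.singleton_append, ← List.append_assoc, List.isChain_append] at hF
    exact hF.1
  have hn' : (g' :: (A.reverse ++ [y, g])).Nodup := nodup_of_count hnd fun a => by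
    simp only [hFA, List.count_append, List.count_cons, List.count_reverse, List.count_nil]
    omega
  refine ⟨⟨hn', ?_⟩, rfl, ?_, hr.symm, ?_⟩
  · have h2 := (BPath.reverse ⟨nodup_of_count hnd fun a => ?_, h1⟩).chain
    · rw [List.reverse_append, List.reverse_singleton, List.singleton_append] at h2
      rw [← List.cons_append, List.isChain_append]
      refine ⟨h2, by simp [hgy.symm], ?_⟩
      intro a ha c hc
      simp only [List.head?_cons, Option.mem_def, Option.some.injEq] at hc
      subst hc
      have : (g' :: A.reverse).getLast? = some p := by
        rw [← List.singleton_append, ← List.reverse_singleton, ← List.reverse_append,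
          List.getLast?_reverse, ← hp, hFA]
        cases A <;> rfl
      rw [this] at ha
      cases ha
      exact hpy
    · simp only [hFA, List.count_append, List.count_cons, List.count_nil]
      omega
  · rw [← List.cons_append, List.getLast?_append]
    rfl
  · rintro rfl
    simp at hn'

/-- The number of rounds needed to finish from two blue paths with red chords. -/
def richCost (k n b : ℕ) : ℕ := 5 * ((k - 2) * b) + (38 + closeCost k n)

theorem isChain_append_left {B : Board} {l l' : List ℕ} (h : (l ++ l').IsChain (Blu B)) :
    l.IsChain (Blu B) := (List.isChain_append.1 h).1

theorem isChain_append_right {B : Board} {l l' : List ℕ} (h : (l ++ l').IsChain (Blu B)) :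
    l'.IsChain (Blu B) := (List.isChain_append.1 h).2.1

section

variable {B : Board} {Q : Board → Prop} {h : ℕ → ℕ} {b T : ℕ}

theorem Force.richTip (hk : 3 ≤ k) (hko : Odd k) (hn : 8 * k ≤ n) (hb : k ≤ (k - 2) * b)
    (hh : IsPth (Red B) (hubSize k b) h) {F E K G : List ℕ} {x y g u v : ℕ}
    (hF : F.IsChain (Blu B)) (hE : (g :: E).IsChain (Blu B)) (hK : KPath B u v K)
    (hG : G.IsChain (Blu B))
    (hc : Clean (verts (hubSize k b) h) (y :: x :: (F ++ (g :: E ++ (K ++ G)))))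
    (hxy : Blu B x y) (hgy : Blu B g y) (hr : Red B x g) (hT₀ : richCost k n b ≤ T)
    (hT : 3 * n + richCost k n b ≤
      T + 5 + F.length + 2 * (g :: E).length + K.length + 2 * G.length) :
    Force k n T B Q := by
  rw [richCost] at hT₀ hT
  rw [List.length_cons] at hT
  refine Force.richFinish hk hko hn hb hh hF hE.tail hG hK (KPath.three ?_ hxy hgy hr)
    (hc.of_count fun a => ?_) (by omega) fun hw => ?_
  · refine nodup_of_count hc.1 fun a => ?_
    simp only [List.count_append, List.count_cons, List.count_nil]; omega
  · simp only [List.tail_cons, List.count_append, List.count_cons, List.count_nil]; omega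
  · simp only [List.tail_cons, List.length_cons, List.length_nil] at hw ⊢
    omega

theorem Force.richTurn (hk : 3 ≤ k) (hko : Odd k) (hn : 8 * k ≤ n) (hb : k ≤ (k - 2) * b)
    (hh : IsPth (Red B) (hubSize k b) h) {F A D E K G : List ℕ} {p y g g' u v : ℕ}
    (hF : F.IsChain (Blu B)) (hFA : F = A ++ g' :: D) (hp : F.head? = some p)
    (hE : (g :: E).IsChain (Blu B)) (hK : KPath B u v K) (hG : G.IsChain (Blu B))
    (hc : Clean (verts (hubSize k b) h) (y :: (F ++ (g :: E ++ (K ++ G)))))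
    (hpy : Blu B p y) (hgy : Blu B g y) (hr : Red B g g') (hT₀ : richCost k n b ≤ T)
    (hT : 3 * n + richCost k n b ≤
      T + 5 + F.length + 2 * (g :: E).length + K.length + 2 * G.length) :
    Force k n T B Q := by
  rw [richCost] at hT₀ hT
  rw [List.length_cons] at hT
  have hK₂ := KPath.turn hF hFA hp hpy hgy hr (nodup_of_count hc.1 fun a => by
    simp only [List.count_append, List.count_cons]; omega)
  subst hFA
  refine Force.richFinish hk hko hn hb hh (isChain_append_right hF).tail hE.tail hG hK hK₂
    (hc.of_count fun a => ?_) (by omega) fun hw => ?_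
  · simp only [List.tail_cons, List.count_append, List.count_cons, List.count_nil,
      List.count_reverse]; omega
  · simp only [List.tail_cons, List.length_cons, List.length_nil, List.length_append,
      List.length_reverse] at hw hT ⊢
    omega

/-- Builder wins once a vertex is red to both tips and a blue path with a red chord is stored. -/
theorem Force.richEvent (hk : 3 ≤ k) (hko : Odd k) (hn : 8 * k ≤ n) (hb : k ≤ (k - 2) * b)
    (hh : IsPth (Red B) (hubSize k b + (k - 1)) h) {F A D E K G : List ℕ} {x p g g' u v : ℕ}
    (hF : F.IsChain (Blu B)) (hFA : F = A ++ g' :: D) (hp : F.head? = some p)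
    (hE : (g :: E).IsChain (Blu B)) (hK : KPath B u v K) (hG : G.IsChain (Blu B))
    (hc : Clean (verts (hubSize k b + (k - 1)) h) (x :: (F ++ (g :: E ++ (K ++ G)))))
    (hxp : Red B x p) (hxg : Red B x g) (hr : Red B g g') (hT₀ : richCost k n b + 5 ≤ T)
    (hT : 3 * n + richCost k n b ≤
      T + F.length + 2 * (g :: E).length + K.length + 2 * G.length) :
    Force k n T B Q := by
  obtain ⟨T, rfl⟩ : ∃ T', T = T' + 5 := ⟨T - 5, by omega⟩
  have hpF : p ∈ F := List.mem_of_mem_head? (by rw [hp]; rfl)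
  have hx := (List.nodup_cons.1 hc.1).1
  have hv := verts_shift (h := h) (m := k - 1) (o := hubSize k b) le_rfl
  refine Force.fold hk (hh.shift (m' := k - 1) (hubSize k b) le_rfl) (x := x) (p := p) (q := g)
    ?_ ?_ (hc.ne hv (by simp)) (hc.ne hv (by simp [hpF])) (hc.ne hv (by simp)) hxp hxg
    (fun B₁ hB₁ y hy hb₁ hb₂ => ?_) (fun B₁ hB₁ y hy hb₁ hb₂ => ?_)
  · rintro rfl; simp [hpF] at hx
  · rintro rfl; simp at hx
  · exact Force.richTip hk hko hn hb ((hh.take (by omega)).red_mono hB₁) (chain_mono hF hB₁)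
      (chain_mono hE hB₁) (hK.mono hB₁) (chain_mono hG hB₁) (hc.cons_block hh hy) hb₁ hb₂
      (hxg.mono hB₁) (by omega) (by omega)
  · exact Force.richTurn hk hko hn hb ((hh.take (by omega)).red_mono hB₁) (chain_mono hF hB₁) hFA hp
      (chain_mono hE hB₁) (hK.mono hB₁) (chain_mono hG hB₁) ((hc.cons_block hh hy).of_count
      fun a => by simp only [List.count_append, List.count_cons]; omega) hb₁ hb₂
      (hr.mono hB₁) (by omega) (by omega)

end

theorem ladderInv_ends (C : List ℕ) (q' q : ℕ) :
    LadderInv fun B F S => ∃ A X g' g, Ends B F S A X C g' q' g q where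
  mono := by rintro B B' F S ⟨A, X, g', g, h⟩ hB; exact ⟨A, X, g', g, h.mono hB⟩
  consF := by rintro B F S x ⟨A, X, g', g, h⟩; exact ⟨_, _, _, _, h.consF x⟩
  consS := by rintro B F S x p ⟨A, X, g', g, h⟩ hp hx; exact ⟨_, _, _, _, h.consS hp hx⟩
  ends := by rintro B F S ⟨A, X, g', g, h⟩; exact ⟨_, _, _, _, _, _, _, h⟩

theorem LadderInv.suffix {I : Board → List ℕ → List ℕ → Prop} (hI : LadderInv I) (Z : List ℕ) :
    LadderInv fun B F S => I B F S ∧ ∃ E, E ≠ [] ∧ S = E ++ Z where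
  mono h hB := ⟨hI.mono h.1 hB, h.2⟩
  consF x h := ⟨hI.consF x h.1, h.2⟩
  consS := by
    rintro B F S x p ⟨h, E, -, rfl⟩ hp hx
    exact ⟨hI.consS h hp hx, x :: E, by simp, rfl⟩
  ends h := hI.ends h.1

theorem LadderInv.tail {I : Board → List ℕ → List ℕ → Prop} (hI : LadderInv I) :
    LadderInv fun B F S => I B F S ∧ (S.tail = [] ∨ I B F S.tail) where
  mono h hB := ⟨hI.mono h.1 hB, h.2.imp_right fun h' => hI.mono h' hB⟩
  consF x h := ⟨hI.consF x h.1, h.2.imp_right fun h' => hI.consF x h'⟩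
  consS h hp hx := ⟨hI.consS h.1 hp hx, Or.inr h.1⟩
  ends h := hI.ends h.1

theorem Ends.single' {B : Board} {F : List ℕ} {x p : ℕ} (h : Red B x p) :
    Ends B (p :: F) [x] [] [p] F p p x x :=
  ⟨rfl, rfl, rfl, rfl, rfl, h, h, fun _ => rfl⟩

theorem runCost_le_richCost (k n b : ℕ) : runCost k n b ≤ richCost k n b := by
  rw [runCost, richCost]; omega

theorem exists_cons_of_head? {l : List ℕ} {a : ℕ} (h : l.head? = some a) : ∃ l', l = a :: l' := by
  cases l with
  | nil => simp at h
  | cons c l => exact ⟨l, by simpa using h⟩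

theorem exists_concat_of_getLast? {l : List ℕ} {a : ℕ} (h : l.getLast? = some a) :
    ∃ l', l = l' ++ [a] := by
  rw [List.getLast?_eq_some_iff] at h
  exact h

section

variable {B : Board} {Q : Board → Prop} {h : ℕ → ℕ} {b N ρ : ℕ}

/-- Builder extends a ladder while a blue path with a red chord is stored. -/
theorem Force.runStored (hk : 3 ≤ k) (hko : Odd k) (hn : 8 * k ≤ n) (hb : k ≤ (k - 2) * b)
    (hh : IsPth (Red B) (hubSize k b + (k - 1)) h) {F E Z Y K G A X C : List ℕ}
    {u v g' q' g q : ℕ} (he : Ends B F (E ++ Z) A X C g' q' g q) (hE : E ≠ [])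
    (hF : F.IsChain (Blu B)) (hS : (E ++ Z).IsChain (Blu B)) (hY : Y.IsChain (Blu B))
    (hK : KPath B u v K) (hG : G.IsChain (Blu B))
    (hc : Clean (verts (hubSize k b + (k - 1)) h) (F ++ (E ++ Z ++ Y)))
    (hZ : ∀ a, K.count a + G.count a ≤ Z.count a + Y.count a) (hρ : runCost k n b ≤ ρ)
    (hN : ρ + F.length + 2 * (E.length + Z.length) = N)
    (hN₁ : 3 * n + richCost k n b + 3 ≤ N + Y.length)
    (hN₂ : 3 * n + richCost k n b + 2 + 2 * Z.length ≤ N + K.length + 2 * G.length) :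
    Force k n ρ B Q := by
  have hrc := runCost_le_richCost k n b
  have hI := (ladderInv_ends C q' q).suffix Z
  refine Force.run hk hko hn hb (by omega) hI hh ⟨⟨A, X, g', g, he⟩, E, hE, rfl⟩ hF hS hY hc hρ
    (N := N) (by rw [List.length_append]; exact hN) (by omega) ?_
  rintro B' F' S' x p g₁ ρ' hB ⟨⟨A', X', g₁', g₂, he'⟩, E', hE', rfl⟩ hF' hS' hc' hp hg hxp hxg
    h1 h2 h3
  obtain ⟨X', rfl⟩ := exists_cons_of_head? he'.xhead
  obtain ⟨e, E', rfl⟩ := List.exists_cons_of_ne_nil hE'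
  have hge := he'.shead
  rw [hge] at hg
  cases hg
  simp only [List.cons_append, List.head?_cons, Option.some.injEq] at hge
  subst hge
  have hEc := isChain_append_left hS'
  rw [List.length_append] at h1 h2 h3
  refine Force.richEvent hk hko hn hb (hh.red_mono hB) hF' he'.eq hp hEc (hK.mono hB)
    (chain_mono hG hB) (hc'.of_count fun a => ?_) hxp hxg he'.rg (by omega) (by omega)
  have := hZ a
  simp only [List.count_append, List.count_cons]
  omega

/-- Builder wins from a blue path and a stored blue path with a red chord. -/
theorem Force.poorStored (hk : 3 ≤ k) (hko : Odd k) (hn : 8 * k ≤ n) (hb : k ≤ (k - 2) * b)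
    (hh : IsPth (Red B) (hubSize k b + (k - 1)) h) {F K : List ℕ} {u v : ℕ}
    (hF : F.IsChain (Blu B)) (hK : KPath B u v K)
    (hc : Clean (verts (hubSize k b + (k - 1)) h) (F ++ K)) (hρ : runCost k n b ≤ ρ)
    (hN : 3 * n + richCost k n b + 3 ≤ ρ + F.length + K.length) :
    Force k n ρ B Q := by
  have hrc := runCost_le_richCost k n b
  refine Force.startRun hk hko hn (by omega) hh hF hK.chain hc hρ rfl (by omega) ?_
  intro B' p F' x ρ' hB hF' hx hc' hρ' hN'
  exact Force.runStored hk hko hn hb (hh.red_mono hB) (E := [x]) (Z := []) (Y := K) (K := K)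
    (G := []) (Ends.single' hx) (by simp) hF' (by simp) (chain_mono hK.chain hB) (hK.mono hB)
    (by simp) hc' (by simp) hρ' hN' (by omega)
    (by simp only [List.length_nil] at *; omega)

/-- Builder extends a ladder whose sides are linked in blue at the base. -/
theorem Force.runLinked (hk : 3 ≤ k) (hko : Odd k) (hn : 8 * k ≤ n) (hb : k ≤ (k - 2) * b)
    (hh : IsPth (Red B) (hubSize k b + (k - 1) + (k - 1)) h) {F S A X C : List ℕ}
    {g' q' g q y : ℕ} (he : Ends B F S A X C g' q' g q)
    (hF : F.IsChain (Blu B)) (hS : S.IsChain (Blu B))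
    (hK : KPath B q' q (q' :: (C ++ [y, q])))
    (hc : Clean (verts (hubSize k b + (k - 1) + (k - 1)) h) (F ++ (S ++ [y])))
    (hρ : runCost k n b ≤ ρ)
    (hN : 3 * n + richCost k n b + 10 ≤ ρ + F.length + 2 * S.length) :
    Force k n ρ B Q := by
  have hrc := runCost_le_richCost k n b
  have hI := ladderInv_ends C q' q
  refine Force.run hk hko hn hb (by omega) hI hh ⟨A, X, g', g, he⟩ hF hS (by simp) hc hρ rfl
    (by omega) ?_
  clear he
  rintro B' F S x p g₁ ρ' hB ⟨A, X, g', g, he⟩ hF' hS' hc' hp hg hxp hxg h1 h2 h3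
  have hge := he.shead
  rw [hge] at hg
  cases hg
  have hh' := hh.red_mono hB
  have hsh : verts (hubSize k b + (k - 1)) h ⊆ verts (hubSize k b + (k - 1) + (k - 1)) h :=
    verts_mono (by omega)
  obtain ⟨S, rfl⟩ := exists_concat_of_getLast? he.slast
  obtain ⟨X, rfl⟩ := exists_concat_of_getLast? he.xlast
  have hFe : F = A ++ X ++ q' :: C := by rw [he.eq]; simp
  cases S with
  | nil =>
    have hX : X = [] := by simpa using he.single rfl
    subst hX
    simp only [List.nil_append, List.head?_cons, Option.some.injEq] at hge
    subst hge
    simp only [List.append_nil] at hFe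
    simp only [List.nil_append, List.length_cons, List.length_nil] at h1 h2 h3
    obtain ⟨ρ', rfl⟩ : ∃ ρ'', ρ' = ρ'' + 5 := ⟨ρ' - 5, by omega⟩
    have hpF : p ∈ F := List.mem_of_mem_head? (by rw [hp]; rfl)
    have hx := (List.nodup_cons.1 hc'.1).1
    have hv := verts_shift (h := h) (m := k - 1) (o := hubSize k b + (k - 1)) le_rfl
    refine Force.fold hk (hh'.shift (m' := k - 1) (hubSize k b + (k - 1)) le_rfl) (x := x) (p := p)
      (q := q) ?_ ?_ (hc'.ne hv (by simp)) (hc'.ne hv (by simp [hpF])) (hc'.ne hv (by simp)) hxp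
      hxg (fun B₁ hB₁ z hz hb₁ hb₂ => ?_) (fun B₁ hB₁ z hz hb₁ hb₂ => ?_)
    · rintro rfl; simp [hpF] at hx
    · rintro rfl; simp at hx
    · have hcz := hc'.cons_block hh hz
      refine Force.poorStored hk hko hn hb ((hh'.take (by omega)).red_mono hB₁)
        (chain_mono hF' hB₁) (KPath.three ?_ hb₁ hb₂ (hxg.mono hB₁)) (hcz.of_count fun a => ?_)
        (by omega) (by simp only [List.length_cons, List.length_nil]; omega)
      · refine nodup_of_count hcz.1 fun a => ?_
        simp only [List.count_append, List.count_cons, List.count_nil]; omega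
      · simp only [List.count_append, List.count_cons, List.count_nil]; omega
    · have hl := congrArg List.length hFe
      simp only [List.length_append, List.length_cons] at hl
      refine Force.poorStored hk hko hn hb ((hh'.take (by omega)).red_mono hB₁)
        (F := A) (isChain_append_left (hFe ▸ chain_mono hF' hB₁)) (hK.mono (hB.trans hB₁))
        ((hc'.mono hsh).of_count fun a => ?_) (by omega)
        (by simp only [List.length_cons, List.length_append, List.length_nil]; omega)
      simp only [hFe, List.count_append, List.count_cons, List.count_nil]; omega
  | cons e E =>
    simp only [List.cons_append, List.head?_cons, Option.some.injEq] at hge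
    subst hge
    have hl := congrArg List.length hFe
    simp only [List.length_append, List.length_cons] at hl
    simp only [List.length_append, List.length_cons, List.length_nil] at h1 h2 h3
    cases X with
    | nil =>
      simp only [List.append_nil, List.length_nil] at hFe hl
      have hchain : (A ++ q' :: C ++ [y] ++ [q] ++ (E.reverse ++ [e])).IsChain (Blu B') := by
        have a1 : (A ++ q' :: C ++ [y, q]).IsChain (Blu B') :=
          List.IsChain.append_overlap (hFe ▸ hF') (hK.mono hB).chain (by simp)
        have a2 : ([q] ++ (E.reverse ++ [e])).IsChain (Blu B') := by
          have := (BPath.reverse (l := e :: E ++ [q]) ⟨nodup_of_count hc'.1 fun a => by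
            simp only [List.count_append, List.count_cons]; omega, hS'⟩).chain
          simpa using this
        have := List.IsChain.append_overlap (l₁ := A ++ q' :: C ++ [y]) (by simpa using a1) a2
          (by simp)
        simpa using this
      have hcount : ∀ a, (A ++ q' :: C ++ [y] ++ [q] ++ (E.reverse ++ [e])).count a ≤
          (x :: (F ++ (e :: E ++ [q] ++ [y]))).count a := fun a => by
        simp only [hFe, List.count_append, List.count_cons, List.count_nil, List.count_reverse]
        omega
      have hS'' : (e :: E ++ ((q' :: (C ++ [y, q])).reverse ++ A.reverse)).IsChain (Blu B') := by
        have := (BPath.reverse ⟨nodup_of_count hc'.1 hcount, hchain⟩).chain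
        simpa using this
      have hA : A.reverse.IsChain (Blu B') := isChain_append_right (isChain_append_right hS'')
      have hlast : (e :: E ++ ((q' :: (C ++ [y, q])).reverse ++ A.reverse)).getLast? = some p := by
        rw [hFe] at hp
        cases A with
        | nil =>
          rw [List.reverse_nil, List.append_nil, List.getLast?_append, List.getLast?_reverse]
          simpa using hp
        | cons a A => rw [List.getLast?_append, List.getLast?_append]; simpa using hp
      refine Force.runStored hk hko hn hb (hh'.take (by omega)) (F := [x]) (A := []) (X := [x])
        (C := []) (g' := x) (q' := x) (g := e) (q := p) (Y := [])
        (K := q' :: (C ++ [y, q])) (G := A.reverse)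
        ⟨rfl, rfl, rfl, rfl, hlast, hxg.symm, hxp.symm, fun _ => rfl⟩
        (by simp) (by simp) hS'' (by simp) (hK.mono hB) hA ((hc'.mono hsh).of_count fun a => ?_)
        (fun a => ?_) (by omega) rfl ?_ ?_
      · simp only [hFe, List.count_append, List.count_cons, List.count_nil, List.count_reverse]
        omega
      · simp only [List.count_append, List.count_cons, List.count_nil, List.count_reverse]
        omega
      · simp only [List.length_append, List.length_cons, List.length_nil, List.length_reverse]
        omega
      · simp only [List.length_append, List.length_cons, List.length_nil, List.length_reverse]
        omega
    | cons a X =>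
      have hga : a = g' := by simpa using he.xhead
      subst hga
      simp only [List.length_cons] at hl
      refine Force.richEvent hk hko hn hb (hh'.take (by omega)) (F := A ++ a :: X) (A := A) (D := X)
        (E := E) (G := []) (isChain_append_left (hFe ▸ hF')) rfl (p := p) ?_
        (isChain_append_left hS') (hK.mono hB) (by simp)
        ((hc'.mono hsh).of_count fun a => ?_) hxp hxg he.rg (by omega) ?_
      · rw [← hp, hFe]
        cases A <;> simp
      · simp only [hFe, List.count_append, List.count_cons, List.count_nil]
        omega
      · simp only [List.length_append, List.length_cons, List.length_nil]
        omega

/-- Builder wins from a hub and a blue path. -/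
theorem Force.poor (hk : 3 ≤ k) (hko : Odd k) (hn : 8 * k ≤ n) (hb : k ≤ (k - 2) * b)
    (hh : IsPth (Red B) (hubSize k b + (k - 1) + (k - 1) + (k - 1)) h) {F : List ℕ}
    (hF : F.IsChain (Blu B))
    (hc : Clean (verts (hubSize k b + (k - 1) + (k - 1) + (k - 1)) h) F) (hρ : runCost k n b ≤ ρ)
    (hN : 3 * n + richCost k n b + 17 ≤ ρ + F.length) :
    Force k n ρ B Q := by
  have hrc := runCost_le_richCost k n b
  refine Force.startRun hk hko hn (by omega) hh hF (Y := []) (by simp) (by simpa using hc) hρ rfl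
    (by omega) ?_
  intro B₀ p₀ F₀ x₀ ρ₀ hB₀ hF₀ hx₀ hc₀ hρ₀ hN₀
  have hI := (ladderInv_ends F₀ p₀ x₀).tail
  refine Force.run hk hko hn hb (by omega) hI (hh.red_mono hB₀) (Y := []) (S := [x₀]) (F := p₀ :: F₀)
    ⟨⟨_, _, _, _, Ends.single' hx₀⟩, Or.inl rfl⟩ hF₀ (by simp) (by simp) hc₀ hρ₀
    (by simpa using hN₀) (by omega) ?_
  rintro B' F' S x p g ρ' hB ⟨⟨A, X, g', g₁, he⟩, ht⟩ hF' hS' hc' hp hg hxp hxg h1 h2 h3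
  have hge := he.shead
  rw [hge] at hg
  cases hg
  have hh' := hh.red_mono (hB₀.trans hB)
  have hpF : p ∈ F' := List.mem_of_mem_head? (by rw [hp]; rfl)
  have hgS : g ∈ S := List.mem_of_mem_head? (by rw [hge]; rfl)
  have hx := (List.nodup_cons.1 hc'.1).1
  have hv := verts_shift (h := h) (m := k - 1) (o := hubSize k b + (k - 1) + (k - 1)) le_rfl
  obtain ⟨ρ', rfl⟩ : ∃ ρ'', ρ' = ρ'' + 5 := ⟨ρ' - 5, by omega⟩
  refine Force.fold hk (hh'.shift (m' := k - 1) (hubSize k b + (k - 1) + (k - 1)) le_rfl) (x := x)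
    (p := p) (q := g) ?_ ?_ (hc'.ne hv (by simp)) (hc'.ne hv (by simp [hpF]))
    (hc'.ne hv (by simp [hgS])) hxp
    hxg (fun B₁ hB₁ z hz hb₁ hb₂ => ?_) (fun B₁ hB₁ z hz hb₁ hb₂ => ?_)
  · rintro rfl; simp [hpF] at hx
  · rintro rfl; simp [hgS] at hx
  · have hcz := (hc'.cons_block hh hz).mono
      (verts_mono (h := h) (show hubSize k b + (k - 1) ≤ _ by omega))
    obtain ⟨S, rfl⟩ := exists_cons_of_head? hge
    have hK := KPath.three (nodup_of_count hcz.1 fun a => by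
      simp only [List.count_append, List.count_cons, List.count_nil]; omega) hb₁ hb₂
      (hxg.mono hB₁)
    simp only [List.length_cons, List.length_nil, List.tail_cons] at h1 h2 h3 ht
    rcases ht with rfl | ⟨A₁, X₁, g₁', g₁, he₁⟩
    · simp only [List.length_nil] at h1 h2 h3
      refine Force.poorStored hk hko hn hb ((hh'.take (by omega)).red_mono hB₁)
        (chain_mono hF' hB₁) hK (hcz.of_count fun a => ?_)
        (by omega) (by simp only [List.length_cons, List.length_nil]; omega)
      simp only [List.count_append, List.count_cons, List.count_nil]; omega
    · refine Force.runStored hk hko hn hb ((hh'.take (by omega)).red_mono hB₁) (E := S) (Z := [])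
        (Y := [x, z, g]) (G := []) (by simpa using he₁.mono hB₁) ?_ (chain_mono hF' hB₁)
        (by simpa using chain_mono hS'.tail hB₁) hK.chain hK (by simp) (hcz.of_count fun a => ?_)
        (by simp) (by omega) rfl (by simp only [List.length_cons, List.length_nil]; omega)
        (by simp only [List.length_cons, List.length_nil]; omega)
      · rintro rfl
        simpa using he₁.shead
      · simp only [List.count_append, List.count_cons, List.count_nil]; omega
  · have hcz := hc'.cons_block hh hz
    obtain ⟨X', rfl⟩ := exists_cons_of_head? he.xhead
    have hl := congrArg List.length he.eq
    have hK := KPath.turn (chain_mono hF' hB₁) he.eq hp hb₁ hb₂ (he.rg.mono hB₁)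
      (nodup_of_count hcz.1 fun a => by
        have : [g].count a ≤ S.count a := by
          obtain ⟨S, rfl⟩ := exists_cons_of_head? hge
          simp only [List.count_cons, List.count_nil]; omega
        simp only [List.count_append, List.count_cons, List.count_nil] at this ⊢; omega)
    refine Force.runLinked hk hko hn hb ((hh'.take (by omega)).red_mono hB₁) (F := F'.reverse)
      (S := S.reverse) (A := F₀.reverse) (X := (g' :: X').reverse) (C := A.reverse) (g' := p₀)
      (q' := g') (g := x₀) (q := g) (y := z) ⟨?_, ?_, ?_, ?_, ?_, (he.rq.mono hB₁), he.rg.mono hB₁,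
      ?_⟩ ?_ ?_ hK (hcz.of_count fun a => ?_) (by omega)
      (by simp only [List.length_reverse]; simp only [List.length_nil, List.length_cons] at *; omega)
    · rw [he.eq]; simp
    · rw [List.head?_reverse]; exact he.xlast
    · simp
    · rw [List.head?_reverse]; exact he.slast
    · rw [List.getLast?_reverse]; exact hge
    · intro hs
      have hS : S = [g] := by simpa using congrArg List.reverse hs
      subst hS
      have hq : g = x₀ := by simpa using he.slast
      have := he.single (by rw [hq])
      simp only [List.cons.injEq] at this
      simp [this.2]
    · exact (BPath.reverse ⟨nodup_of_count hc'.1 fun a => by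
        simp only [List.count_append, List.count_cons]; omega, chain_mono hF' hB₁⟩).chain
    · exact (BPath.reverse ⟨nodup_of_count hc'.1 fun a => by
        simp only [List.count_append, List.count_cons]; omega, chain_mono hS' hB₁⟩).chain
    · simp only [List.count_append, List.count_cons, List.count_nil, List.count_reverse]; omega

end

theorem redChain_mono {B B' : Board} {l : List ℕ} (hl : l.IsChain (Red B)) (hB : B ≤ B') :
    l.IsChain (Red B') := hl.imp fun _ _ h => Red.mono h hB

theorem isPth_of_isChain_red {B : Board} {l : List ℕ} (hl : l.IsChain (Red B)) (hnd : l.Nodup) :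
    IsPth (Red B) l.length fun i => l.getD i 0 where
  inj i hi j hj hij := by
    rw [List.getD_eq_getElem _ _ hi, List.getD_eq_getElem _ _ hj] at hij
    exact (hnd.getElem_inj_iff).1 hij
  adj i hi := by
    rw [List.getD_eq_getElem _ _ hi, List.getD_eq_getElem _ _ (by omega)]
    exact List.isChain_iff_getElem.1 hl i hi

theorem clean_getD {l l' : List ℕ} {m : ℕ} (hnd : (l ++ l').Nodup) (hm : m ≤ l.length) :
    Clean (verts m fun i => l.getD i 0) l' := by
  obtain ⟨-, h2, h3⟩ := List.nodup_append'.1 hnd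
  refine ⟨h2, ?_⟩
  rintro x hx ⟨i, hi, rfl⟩
  exact h3 (getD_mem (by omega)) hx

section

variable {B : Board} {Q : Board → Prop}

/-- Builder lengthens a blue path, lengthens a red path at the expense of the blue path, or
gets a blue path on three vertices with a red chord. -/
theorem Force.grow {Z M L : List ℕ} {ρ : ℕ} (hZ : Z.IsChain (Red B)) (hM : M.IsChain (Blu B))
    (hnd : (Z ++ (M ++ L)).Nodup)
    (hblu : ∀ B' M', B ≤ B' → M'.IsChain (Blu B') → (Z ++ (M' ++ L)).Nodup →
      M'.length = M.length + 1 → Force k n (ρ + 2) B' Q)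
    (hred : ∀ B' Z' M', B ≤ B' → Z'.IsChain (Red B') → M'.IsChain (Blu B') →
      (Z' ++ (M' ++ L)).Nodup → Z'.length = Z.length + 2 → M'.length + 1 = M.length →
      Force k n ρ B' Q)
    (hthree : ∀ B' z m x Z' M', B ≤ B' → Z = z :: Z' → M = m :: M' →
      (x :: (Z ++ (M ++ L))).Nodup → Blu B' m z → Blu B' x z → Red B' m x → Force k n ρ B' Q) :
    Force k n (ρ + 3) B Q := by
  obtain ⟨x, hx⟩ := exists_fresh (Z ++ (M ++ L))
  have hndx : (x :: (Z ++ (M ++ L))).Nodup := List.nodup_cons.2 ⟨hx, hnd⟩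
  cases M with
  | nil =>
    refine Force.mono (hblu B [x] le_rfl (by simp) (nodup_of_count hndx fun a => ?_) rfl)
      (by omega)
    simp only [List.count_append, List.count_cons, List.count_nil]; omega
  | cons m M =>
    have hmx : x ≠ m := by rintro rfl; simp at hx
    refine Force.test x m hmx (fun B₁ hB₁ hr => ?_) fun B₁ hB₁ hb =>
      hblu B₁ (x :: m :: M) hB₁ (chain_cons (chain_mono hM hB₁) rfl hb)
        (nodup_of_count hndx fun a => ?_) rfl
    swap
    · simp only [List.count_append, List.count_cons]; omega
    cases Z with
    | nil =>
      refine Force.mono (hred B₁ [x, m] M hB₁ (by simpa using hr) (chain_mono hM hB₁).tail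
        (nodup_of_count hndx fun a => ?_) rfl rfl) (by omega)
      simp only [List.count_append, List.count_cons, List.count_nil]; omega
    | cons z Z =>
      have hzx : z ≠ x := by rintro rfl; simp at hx
      have hzm : z ≠ m := by rintro rfl; simp at hnd
      refine Force.test z x hzx (fun B₂ hB₂ hr₂ => ?_) fun B₂ hB₂ hb₂ =>
        Force.test z m hzm (fun B₃ hB₃ hr₃ => ?_) fun B₃ hB₃ hb₃ =>
          hthree B₃ z m x Z M (hB₁.trans (hB₂.trans hB₃)) rfl rfl hndx hb₃.symm
            (hb₂.mono hB₃).symm (hr.mono (hB₂.trans hB₃)).symm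
      · refine Force.mono (hred B₂ (m :: x :: z :: Z) M (hB₁.trans hB₂) ?_
          (chain_mono hM (hB₁.trans hB₂)).tail (nodup_of_count hndx fun a => ?_) rfl rfl)
          (by omega)
        · have := redChain_mono hZ (hB₁.trans hB₂)
          simp only [List.isChain_cons_cons]
          exact ⟨(hr.mono hB₂).symm, hr₂.symm, this⟩
        · simp only [List.count_append, List.count_cons]; omega
      · have hB := hB₁.trans (hB₂.trans hB₃)
        refine hred B₃ (x :: m :: z :: Z) M hB ?_ (chain_mono hM hB).tail
          (nodup_of_count hndx fun a => ?_) rfl rfl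
        · have := redChain_mono hZ hB
          simp only [List.isChain_cons_cons]
          exact ⟨hr.mono (hB₂.trans hB₃), hr₃.symm, this⟩
        · simp only [List.count_append, List.count_cons]; omega

/-- Builder turns part of a long blue path into a red path. -/
theorem Force.zigzagList (hk : 3 ≤ k) (hko : Odd k) (hn : 8 * k ≤ n) {M : List ℕ}
    (hM : BPath B M) (hl : n + (3 * k + 1) ≤ M.length) :
    Force k n (5 * k + 4) B fun B' => ∃ h P₁ P₂, IsPth (Red B') (3 * k + 1) h ∧
      P₁.IsChain (Blu B') ∧ P₂.IsChain (Blu B') ∧ Clean (verts (3 * k + 1) h) (P₁ ++ P₂) ∧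
      (∀ x ∈ P₁ ++ P₂, x ∈ M) ∧ (∀ x ∈ verts (3 * k + 1) h, x ∈ M) ∧
      P₁.length + P₂.length + (3 * k + 2) = M.length := by
  obtain ⟨j, hj⟩ : ∃ j, 2 * j = 3 * k + 1 := by
    obtain ⟨i, rfl⟩ := hko
    exact ⟨3 * i + 2, by ring⟩
  have hget : ∀ i i', i < M.length → i' < M.length → M.getD i 0 = M.getD i' 0 → i = i' :=
    fun i i' hi hi' => hM.isPth.inj i hi i' hi'
  refine (Force.zigzag hk hko hn (j := j) (by omega)
    ((hM.isPth).take (m' := n + j) (by omega))).bind' (t' := 0) (by omega) ?_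
  intro B' hB hh
  have hsub₁ : ∀ x ∈ (M.drop j).take (n - 1 - j), ∃ i, j ≤ i ∧ i < n - 1 ∧ x = M.getD i 0 := by
    intro x hx
    obtain ⟨i, hi, rfl⟩ := List.mem_take_iff_getElem.1 hx
    rw [List.length_drop] at hi
    exact ⟨j + i, by omega, by omega, by
      rw [List.getElem_drop, List.getD_eq_getElem _ _ (by omega)]⟩
  have hsub₂ : ∀ x ∈ M.drop (n + j), ∃ i, n + j ≤ i ∧ i < M.length ∧ x = M.getD i 0 := by
    intro x hx
    obtain ⟨i, hi, rfl⟩ := List.mem_drop_iff_getElem.1 hx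
    exact ⟨n + j + i, by omega, by omega, by
      rw [List.getD_eq_getElem _ _ (by omega)]⟩
  have hnd : ((M.drop j).take (n - 1 - j) ++ M.drop (n + j)).Nodup := by
    refine List.nodup_append'.2 ⟨(hM.nodup.sublist (List.drop_sublist _ _)).sublist
      (List.take_sublist _ _), hM.nodup.sublist (List.drop_sublist _ _), fun x h1 h2 => ?_⟩
    obtain ⟨i, hi, hi', rfl⟩ := hsub₁ x h1
    obtain ⟨i₂, hi₂, hi₂', h⟩ := hsub₂ _ h2
    have := hget _ _ (by omega) hi₂' h
    omega
  refine Force.done ⟨_, (M.drop j).take (n - 1 - j), M.drop (n + j), hh.take (by omega),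
    chain_mono ((hM.chain.drop _).take _) hB, chain_mono (hM.chain.drop _) hB, ⟨hnd, ?_⟩, ?_, ?_,
    ?_⟩
  · rintro x hx ⟨a, ha, hxa⟩
    have hx' : ∃ i, j ≤ i ∧ i < M.length ∧ (i < n - 1 ∨ n + j ≤ i) ∧ x = M.getD i 0 := by
      rcases List.mem_append.1 hx with hx | hx
      · obtain ⟨i, hi, hi', rfl⟩ := hsub₁ x hx
        exact ⟨i, hi, by omega, Or.inl hi', rfl⟩
      · obtain ⟨i, hi, hi', rfl⟩ := hsub₂ x hx
        exact ⟨i, by omega, hi', Or.inr hi, rfl⟩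
    obtain ⟨i, hi, hi', hi'', rfl⟩ := hx'
    dsimp only at hxa
    split_ifs at hxa with h2
    · have := hget _ _ hi' (by omega) hxa
      omega
    · have := hget _ _ hi' (by omega) hxa
      omega
  · intro x hx
    rcases List.mem_append.1 hx with hx | hx
    · exact List.mem_of_mem_drop (List.mem_of_mem_take hx)
    · exact List.mem_of_mem_drop hx
  · rintro x ⟨a, ha, rfl⟩
    dsimp only
    split_ifs with h2
    · exact getD_mem (by omega)
    · exact getD_mem (by omega)
  · rw [List.length_take, List.length_drop, List.length_drop]
    omega

/-- Builder wins from a very long blue path. -/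
theorem Force.longPath (hk : 3 ≤ k) (hko : Odd k) (hn : 8 * k ≤ n) {M : List ℕ}
    (hM : BPath B M) (hl : 2 * n + (3 * k + 1) ≤ M.length) :
    Force k n (5 * k + 19 + closeCost k n) B Q := by
  refine (Force.zigzagList hk hko hn hM (by omega)).bind' (t' := 15 + closeCost k n) (by omega) ?_
  rintro B' - ⟨h, P₁, P₂, hh, h1, h2, hc, -, -, hl'⟩
  have := Force.closeLong (Q := Q) hk hko hn (b := 0) (h := h) (P := [P₁, P₂]) hh (by simp [h1, h2])
    (by simpa using hc.1) (by simpa [hubSize] using hc.2) (by simp)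
    (by simp only [List.flatten_cons, List.flatten_nil, List.append_nil, List.length_append]; omega)
  simpa using this

/-- Builder wins from two blue paths with red chords and either a long red path or a long blue
path. -/
theorem Force.bankEnd (hk : 3 ≤ k) (hko : Odd k) (hn : 8 * k ≤ n) {Z M K₁ K₂ : List ℕ}
    {u₁ v₁ u₂ v₂ ρ : ℕ} (hK₁ : KPath B u₁ v₁ K₁) (hK₂ : KPath B u₂ v₂ K₂)
    (hZ : Z.IsChain (Red B)) (hM : M.IsChain (Blu B)) (hnd : (Z ++ (M ++ (K₁ ++ K₂))).Nodup)
    (h : 5 * k - 3 ≤ Z.length ∨ n + (3 * k + 1) ≤ M.length)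
    (hρ : 2 * (n - 1 - M.length) + (5 * k + 42 + closeCost k n) ≤ ρ) : Force k n ρ B Q := by
  have hMK : (M ++ (K₁ ++ K₂)).Nodup := (List.nodup_append'.1 hnd).2.1
  rcases h with h | h
  · have hs : hubSize k 1 ≤ Z.length := by rw [hubSize]; omega
    have hc := clean_getD hnd hs
    refine Force.mono (Force.rich hk hko hn (b := 1) (P := [M])
      ((isPth_of_isChain_red hZ (List.nodup_append'.1 hnd).1).take hs) (by simpa using hM) hK₁ hK₂
      (by simpa using hc.1) (by simpa using hc.2) ?_ (n - 1 - M.length) ?_) (by omega)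
    · simp only [List.length_cons, List.length_nil]; omega
    · simp only [List.flatten_cons, List.flatten_nil, List.append_nil]; omega
  · obtain ⟨m1, m2, m3⟩ := List.nodup_append'.1 hMK
    refine (Force.zigzagList hk hko hn ⟨m1, hM⟩ h).bind' (t' := 38 + closeCost k n) (by omega) ?_
    rintro B' hB ⟨h, P₁, P₂, hh, h1, h2, hc, hs₁, hs₂, hl⟩
    obtain ⟨P, hP, hPl, hPf⟩ := Loose.of_disjoint (B := B') (E := verts (3 * k + 1) h) (P := [P₁, P₂])
      (by simp [h1, h2]) (by simpa using hc.1) (by simpa using hc.2)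
    have hPf' : P.flatten = P₁ ++ P₂ := by simpa using hPf
    rw [← hPf'] at hc hs₁
    have hoff : ∀ x ∈ K₁ ++ K₂, x ∉ M := fun x hx hx' => m3 hx' hx
    have hlen : P.flatten.length = P₁.length + P₂.length := by rw [hPf', List.length_append]
    refine Force.closeAll hk hko hn hh hP (by simpa using hPl) (by omega)
      (hK₁.mono hB) (hK₂.mono hB) (List.nodup_append'.1 m2).2.2
      (fun x hx hx' => hoff x (List.mem_append_left _ hx') (hs₁ x hx))
      (fun x hx hx' => hoff x (List.mem_append_right _ hx') (hs₁ x hx))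
      (fun x hx hx' => hc.2 x hx (block_verts (by omega) hx'))
      (fun x hx hx' => hc.2 x hx (block_verts (by omega) hx'))
      (fun x hx hx' => hc.2 x hx (block_verts (by omega) hx'))
      (fun x hx hx' => hoff x (List.mem_append_left _ hx) (hs₂ x hx'))
      (fun x hx hx' => hoff x (List.mem_append_right _ hx) (hs₂ x hx'))

/-- Builder grows a red path and a blue path, absorbing blue paths with red chords, once two of
the latter are stored. -/
theorem Force.bankRun (hk : 3 ≤ k) (hko : Odd k) (hn : 8 * k ≤ n) {Z M K₁ K₂ : List ℕ}
    {u₁ v₁ u₂ v₂ ρ : ℕ} (hK₁ : KPath B u₁ v₁ K₁) (hK₂ : KPath B u₂ v₂ K₂)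
    (hZ : Z.IsChain (Red B)) (hM : M.IsChain (Blu B)) (hnd : (Z ++ (M ++ (K₁ ++ K₂))).Nodup)
    (hl : M.length + Z.length + 3 ≤ n + 8 * k) (hlZ : Z.length + 2 ≤ 5 * k)
    (hρ : 3 * n + 48 * k + closeCost k n ≤ ρ + 3 * (M.length + Z.length) + 21) :
    Force k n ρ B Q := by
  obtain ⟨d, hd⟩ : ∃ d, n + 8 * k ≤ d + (M.length + Z.length) := ⟨n + 8 * k, by omega⟩
  induction d generalizing B Z M ρ with
  | zero => omega
  | succ d ih =>
    by_cases h : 5 * k - 3 ≤ Z.length ∨ n + (3 * k + 1) ≤ M.length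
    · exact Force.bankEnd hk hko hn hK₁ hK₂ hZ hM hnd h (by omega)
    rw [not_or, not_le, not_le] at h
    obtain ⟨ρ, rfl⟩ : ∃ ρ', ρ = ρ' + 3 := ⟨ρ - 3, by omega⟩
    refine Force.grow hZ hM hnd (fun B' M' hB hM' hnd' hl' => ?_)
      (fun B' Z' M' hB hZ' hM' hnd' hl₁ hl₂ => ?_)
      fun B' z m x Z' M' hB hZ' hM' hnd' hb₁ hb₂ hr => ?_
    · exact ih (hK₁.mono hB) (hK₂.mono hB) (redChain_mono hZ hB) hM' hnd' (by omega) hlZ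
        (by omega) (by omega)
    · exact ih (hK₁.mono hB) (hK₂.mono hB) hZ' hM' hnd' (by omega) (by omega) (by omega)
        (by omega)
    · subst hZ' hM'
      simp only [List.length_cons] at *
      refine ih (Z := Z') (M := x :: z :: m :: M') (hK₁.mono hB) (hK₂.mono hB) (redChain_mono hZ hB).tail
        (chain_cons (chain_cons (chain_mono hM hB) rfl hb₁.symm) rfl hb₂)
        (nodup_of_count hnd' fun a => ?_) ?_ ?_ ?_ ?_
      · simp only [List.count_append, List.count_cons]; omega
      all_goals first | omega | (simp only [List.length_cons]; omega)

/-- Builder grows a red path and a blue path until the red path is long or a blue path with a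
red chord appears. -/
theorem Force.growTo (hk : 3 ≤ k) (hko : Odd k) (hn : 8 * k ≤ n) {H N : ℕ} {Z M L : List ℕ}
    {ρ : ℕ} (hZ : Z.IsChain (Red B)) (hM : M.IsChain (Blu B)) (hnd : (Z ++ (M ++ L)).Nodup)
    (hlM : M.length ≤ 2 * n + (3 * k + 1)) (hlZ : Z.length ≤ H + 1)
    (hρ : N ≤ ρ + M.length + 2 * Z.length)
    (hN : 2 * n + 8 * k + 2 * H + 25 + closeCost k n ≤ N)
    (hfar : ∀ B' Z' M' ρ', B ≤ B' → Z'.IsChain (Red B') → M'.IsChain (Blu B') →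
      (Z' ++ (M' ++ L)).Nodup → M'.length ≤ 2 * n + (3 * k + 1) → H ≤ Z'.length →
      Z'.length ≤ H + 1 → N ≤ ρ' + M'.length + 2 * Z'.length → Force k n ρ' B' Q)
    (hthree : ∀ B' Z' M' K u v ρ', B ≤ B' → Z'.IsChain (Red B') → M'.IsChain (Blu B') →
      KPath B' u v K → K.length = 3 → (Z' ++ (M' ++ (K ++ L))).Nodup →
      M'.length ≤ 2 * n + (3 * k + 1) → Z'.length ≤ H + 1 →
      N ≤ ρ' + M'.length + 2 * Z'.length + 6 → Force k n ρ' B' Q) :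
    Force k n ρ B Q := by
  obtain ⟨d, hd⟩ : ∃ d, 2 * n + (3 * k + 1) + 2 * H ≤ d + (M.length + 2 * Z.length) :=
    ⟨2 * n + (3 * k + 1) + 2 * H, by omega⟩
  induction d generalizing B Z M ρ with
  | zero =>
    rcases Nat.lt_or_ge Z.length H with hH | hH
    · omega
    · exact hfar B Z M ρ le_rfl hZ hM hnd hlM hH hlZ hρ
  | succ d ih =>
    rcases Nat.lt_or_ge Z.length H with hH | hH
    swap
    · exact hfar B Z M ρ le_rfl hZ hM hnd hlM hH hlZ hρ
    rcases Nat.lt_or_ge M.length (2 * n + (3 * k + 1)) with hlt | hge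
    swap
    · exact Force.mono (Force.longPath hk hko hn
        ⟨(List.nodup_append'.1 (List.nodup_append'.1 hnd).2.1).1, hM⟩ hge) (by omega)
    obtain ⟨ρ, rfl⟩ : ∃ ρ', ρ = ρ' + 3 := ⟨ρ - 3, by omega⟩
    refine Force.grow hZ hM hnd (fun B' M' hB hM' hnd' hl' => ?_)
      (fun B' Z' M' hB hZ' hM' hnd' hl₁ hl₂ => ?_)
      fun B' z m x Z' M' hB hZ' hM' hnd' hb₁ hb₂ hr => ?_
    · exact ih (redChain_mono hZ hB) hM' hnd' (by omega) (by omega) (by omega)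
        (fun B₁ Z₁ M₁ ρ₁ hB₁ => hfar B₁ Z₁ M₁ ρ₁ (hB.trans hB₁))
        (fun B₁ Z₁ M₁ K u v ρ₁ hB₁ => hthree B₁ Z₁ M₁ K u v ρ₁ (hB.trans hB₁)) (by omega)
    · exact ih hZ' hM' hnd' (by omega) (by omega) (by omega)
        (fun B₁ Z₁ M₁ ρ₁ hB₁ => hfar B₁ Z₁ M₁ ρ₁ (hB.trans hB₁))
        (fun B₁ Z₁ M₁ K u v ρ₁ hB₁ => hthree B₁ Z₁ M₁ K u v ρ₁ (hB.trans hB₁)) (by omega)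
    · subst hZ' hM'
      simp only [List.length_cons] at hlt hH hρ
      refine hthree B' Z' M' [m, z, x] m x ρ hB (redChain_mono hZ hB).tail (chain_mono hM hB).tail
        (KPath.three (nodup_of_count hnd' fun a => ?_) hb₁ hb₂ hr) rfl
        (nodup_of_count hnd' fun a => ?_) (by omega) (by omega) (by omega)
      all_goals
        simp only [List.count_append, List.count_cons, List.count_nil]; omega

/-- Builder wins from the empty board. -/
theorem Force.start (hk : 3 ≤ k) (hko : Odd k) (hn : 8 * k ≤ n) {b : ℕ} (hb : k ≤ (k - 2) * b)
    (hB : 5 * ((k - 2) * b) + 2 * (hubSize k b + (k - 1) + (k - 1) + (k - 1)) + 66 ≤ 48 * k) :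
    Force k n (3 * n + 48 * k + closeCost k n - 9) B Q := by
  obtain ⟨H, hH⟩ : ∃ H, H = hubSize k b + (k - 1) + (k - 1) + (k - 1) := ⟨_, rfl⟩
  rw [← hH] at hB
  have hr : richCost k n b = 5 * ((k - 2) * b) + (38 + closeCost k n) := rfl
  have hr' := runCost_le_richCost k n b
  refine Force.growTo hk hko hn (H := H)
    (N := 3 * n + 48 * k + closeCost k n - 9) (Z := []) (M := []) (L := []) (by simp) (by simp)
    (by simp) (by simp) (by simp) le_rfl (by omega) ?_ ?_
  · rintro B₁ Z M ρ - hZ hM hnd hlM hH₁ hH₂ hρ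
    have hc := clean_getD hnd (hH ▸ hH₁)
    exact Force.poor hk hko hn hb
      ((isPth_of_isChain_red hZ (List.nodup_append'.1 hnd).1).take (hH ▸ hH₁)) hM
      (by simpa using hc) (by omega) (by omega)
  · rintro B₁ Z M K u v ρ - hZ hM hK hK₃ hnd hlM hlZ hρ
    refine Force.growTo hk hko hn (H := H) (N := 3 * n + 48 * k + closeCost k n - 15) hZ hM
      (L := K) (by simpa using hnd) hlM hlZ (by omega) (by omega) ?_ ?_
    · intro B₂ Z M ρ hB₂ hZ hM hnd hlM hH₁ hH₂ hρ
      have hs : hubSize k b + (k - 1) ≤ Z.length := by omega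
      exact Force.poorStored hk hko hn hb
        ((isPth_of_isChain_red hZ (List.nodup_append'.1 hnd).1).take hs) hM (hK.mono hB₂)
        (clean_getD hnd hs) (by omega) (by omega)
    · rintro B₂ Z M K₂ u₂ v₂ ρ hB₂ hZ hM hK₂ - hnd hlM hlZ hρ
      by_cases h : 5 * k - 3 ≤ Z.length ∨ n + (3 * k + 1) ≤ M.length
      · exact Force.bankEnd hk hko hn hK₂ (hK.mono hB₂) hZ hM hnd h (by omega)
      rw [not_or, not_le, not_le] at h
      exact Force.bankRun hk hko hn hK₂ (hK.mono hB₂) hZ hM hnd (by omega) (by omega)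
        (by omega)

end

end

/-- For every odd `k ≥ 3` and `n ≥ 8k`, `r̃(C_k, C_n) ≤ 3n + log₂ n + 50k`. -/
theorem online_ramsey_odd_cycle (k n : ℕ) (hk : 3 ≤ k) (hko : Odd k)
    (hn : 8 * k ≤ n) :
    ∃ t : ℕ, (t : ℝ) ≤ 3 * n + Real.logb 2 n + 50 * k ∧
      BuilderWinsIn emptyBoard (WinCC k n) t := by
  refine ⟨3 * n + Nat.log 2 n + 50 * k, ?_, builderWinsIn_of_force ?_⟩
  · have := Real.natLog_le_logb n 2
    push_cast at this ⊢
    linarith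
  · obtain ⟨b, hb, hB⟩ : ∃ b, k ≤ (k - 2) * b ∧
        5 * ((k - 2) * b) + 2 * (hubSize k b + (k - 1) + (k - 1) + (k - 1)) + 66 ≤ 48 * k := by
      rcases Nat.lt_or_ge k 4 with h | h
      · obtain rfl : k = 3 := by omega
        exact ⟨3, by decide, by decide⟩
      · exact ⟨2, by omega, by rw [hubSize]; omega⟩
    refine Force.mono (Force.start hk hko hn hb hB) ?_
    rw [closeCost]
    omega
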